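/- Under the assumptions of the main theorem (𝒜, ℬ as in the context with Λ_𝒜 spanning, Ω bounded open with 𝓛ⁿ(∂Ω) = 0, ν a Young measure on Ω with λ(∂Ω) = 0 whose barycentre v satisfies 𝒜v = 0 distributionally and which satisfies the a.e. Jensen-type inequalities for 𝒜-quasiconvex integrands of linear growth), the following holds: given ε > 0 there exist t_ε > 0 and, for each t ∈ (0,t_ε], a map ψ = ψ^{(t)} ∈ C_c^∞(Ω,𝕌) with ‖ψ‖_{W^{l−1,1}(Ω,𝕌)} < ε such that | ∫_Ω η(x) ( ⟨Φ, ν_x⟩ + λ^a(x) ⟨Φ^∞, ν_x^∞⟩ ) dx − ∫_Ω η(x) Φ( (φ_t * (ν̄_· + λ^a ν̄_·^∞))(x) + ℬψ(x) ) dx | < ε holds for all t ∈ (0,t_ε], uniformly over all η : Ω̄ → ℝ and Φ ∈ ℍ with ‖η‖_LIP ≤ 1 and ‖TΦ‖_LIP ≤ 1. Here φ_t * (ν̄_· + λ^a ν̄_·^∞) denotes the mollification at scale t of the absolutely continuous part of the barycentre of ν (extended by zero outside Ω). -/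

import Mathlib

open MeasureTheory Filter Topology

noncomputable section

/-! ## Basic PDE setup -/

abbrev Dom (n : ℕ) := Fin n → ℝ

def unitCube (n : ℕ) : Set (Dom n) := Set.univ.pi fun _ => Set.Ioo (-(1/2) : ℝ) (1/2)

def closedUnitCube (n : ℕ) : Set (Dom n) := Set.univ.pi fun _ => Set.Icc (-(1/2) : ℝ) (1/2)

/-- The finite set of multi-indices of degree `k`. -/
def degSet (n k : ℕ) : Finset (Fin n → ℕ) :=
  (Fintype.piFinset fun _ : Fin n => Finset.range (k+1)).filter fun α => (∑ i, α i) = k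

/-- Partial derivative in the `j`-th coordinate direction. -/
def pderivDir {n : ℕ} {V : Type*} [NormedAddCommGroup V] [NormedSpace ℝ V]
    (j : Fin n) (u : Dom n → V) : Dom n → V :=
  fun x => fderiv ℝ u x (Pi.single j 1)

/-- The multi-index partial derivative `∂^α`. -/
def mderiv {n : ℕ} {V : Type*} [NormedAddCommGroup V] [NormedSpace ℝ V]
    (α : Fin n → ℕ) (u : Dom n → V) : Dom n → V :=
  (List.finRange n).foldr (fun j f => (pderivDir j)^[α j] f) u

/-- The action of a homogeneous `k`-th order constant-coefficient operator with
coefficients `A α` on a function. -/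
def opApply {n : ℕ} {V W : Type*} [NormedAddCommGroup V] [NormedSpace ℝ V]
    [NormedAddCommGroup W] [NormedSpace ℝ W]
    (A : (Fin n → ℕ) → (V →L[ℝ] W)) (k : ℕ) (u : Dom n → V) (x : Dom n) : W :=
  ∑ α ∈ degSet n k, A α (mderiv α u x)

/-- The symbol `𝒜(ξ) = Σ_{|α|=k} ξ^α A_α`. -/
def opSymbol {n : ℕ} {V W : Type*} [NormedAddCommGroup V] [NormedSpace ℝ V]
    [NormedAddCommGroup W] [NormedSpace ℝ W]
    (A : (Fin n → ℕ) → (V →L[ℝ] W)) (k : ℕ) (ξ : Dom n) : V →L[ℝ] W :=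
  ∑ α ∈ degSet n k, (∏ i, ξ i ^ α i) • A α

/-- The wave cone `Λ_𝒜 = ⋃_{ξ ≠ 0} ker 𝒜(ξ)`. -/
def waveCone {n : ℕ} {V W : Type*} [NormedAddCommGroup V] [NormedSpace ℝ V]
    [NormedAddCommGroup W] [NormedSpace ℝ W]
    (A : (Fin n → ℕ) → (V →L[ℝ] W)) (k : ℕ) : Set V :=
  {v | ∃ ξ : Dom n, ξ ≠ 0 ∧ opSymbol A k ξ v = 0}

/-- The wave cone is spanning. -/
def SpanningCone {n : ℕ} {V W : Type*} [NormedAddCommGroup V] [NormedSpace ℝ V]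
    [NormedAddCommGroup W] [NormedSpace ℝ W]
    (A : (Fin n → ℕ) → (V →L[ℝ] W)) (k : ℕ) : Prop :=
  Submodule.span ℝ (waveCone A k) = ⊤

/-- `ℬ` is an exact potential of `𝒜`:  `ker 𝒜(ξ) = im ℬ(ξ)` for all `ξ ≠ 0`. -/
def ExactPotential {n : ℕ} {U V W : Type*} [NormedAddCommGroup V] [NormedSpace ℝ V]
    [NormedAddCommGroup W] [NormedSpace ℝ W] [NormedAddCommGroup U] [NormedSpace ℝ U]
    (A : (Fin n → ℕ) → (V →L[ℝ] W)) (k : ℕ)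
    (B : (Fin n → ℕ) → (U →L[ℝ] V)) (l : ℕ) : Prop :=
  ∀ ξ : Dom n, ξ ≠ 0 → LinearMap.ker (opSymbol A k ξ : V →ₗ[ℝ] W) = LinearMap.range (opSymbol B l ξ : U →ₗ[ℝ] V)

/-- `ℤⁿ`-periodicity. -/
def ZPeriodic {n : ℕ} {V : Type*} (v : Dom n → V) : Prop :=
  ∀ (x : Dom n) (m : Fin n → ℤ), v (x + fun i => (m i : ℝ)) = v x

/-- `𝒜`-quasiconvexity of a continuous integrand. -/
def AQuasiconvex {n : ℕ} {V W : Type*} [NormedAddCommGroup V] [NormedSpace ℝ V]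
    [NormedAddCommGroup W] [NormedSpace ℝ W]
    (A : (Fin n → ℕ) → (V →L[ℝ] W)) (k : ℕ) (f : V → ℝ) : Prop :=
  Continuous f ∧ ∀ (z : V) (v : Dom n → V), ContDiff ℝ (⊤ : ℕ∞) v → ZPeriodic v →
    (∫ x in unitCube n, v x) = 0 → (∀ x, opApply A k v x = 0) →
    f z ≤ ∫ x in unitCube n, f (z + v x)

def LinearGrowth {V : Type*} [NormedAddCommGroup V] (f : V → ℝ) : Prop :=
  ∃ c : ℝ, ∀ z, |f z| ≤ c * (1 + ‖z‖)

/-- Upper recession function `f^∞(z) = limsup_{t→∞, z'→z} f(tz')/t`. -/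
def urec {V : Type*} [NormedAddCommGroup V] [NormedSpace ℝ V] (f : V → ℝ) (z : V) : ℝ :=
  limsup (fun p : ℝ × V => f (p.1 • p.2) / p.1) (atTop ×ˢ 𝓝 z)

/-- The radial recession function `z ↦ limsup_{t→∞} f(tz)/t`. -/
def rrec {V : Type*} [NormedAddCommGroup V] [NormedSpace ℝ V] (f : V → ℝ) (z : V) : ℝ :=
  limsup (fun t : ℝ => f (t • z) / t) atTop

/-- `g` is the recession function of `Φ`, the limit being locally uniform. -/
def HasRec {V : Type*} [NormedAddCommGroup V] [NormedSpace ℝ V] (Φ g : V → ℝ) : Prop :=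
  TendstoLocallyUniformly (fun (t : ℝ) (z : V) => Φ (t • z) / t) g atTop

/-- Membership in the class `ℍ`. -/
def MemH {V : Type*} [NormedAddCommGroup V] [NormedSpace ℝ V] (Φ : V → ℝ) : Prop :=
  Continuous Φ ∧ LinearGrowth Φ ∧ ∃ g : V → ℝ, HasRec Φ g

/-- `C_c^∞` functions with support in `Ω`. -/
def CcSmooth {n : ℕ} {U : Type*} [NormedAddCommGroup U] [NormedSpace ℝ U]
    (Ω : Set (Dom n)) (u : Dom n → U) : Prop :=
  ContDiff ℝ (⊤ : ℕ∞) u ∧ HasCompactSupport u ∧ tsupport u ⊆ Ω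

/-- The `W^{l-1,1}` norm : sum of the `L¹` norms of derivatives of order `< l`. -/
def sobNorm {n : ℕ} {U : Type*} [NormedAddCommGroup U] [NormedSpace ℝ U]
    (l : ℕ) (u : Dom n → U) : ℝ :=
  ∑ j ∈ Finset.range l, ∫ x : Dom n, ‖iteratedFDeriv ℝ j u x‖

/-- Membership of a pair `(ν⁰, ν^∞)` in the set `Y(z)` of Young measures generated by
sequences `z + ℬ u_j` with `u_j ∈ C_c^∞(𝕏, 𝕌)` and `‖u_j‖_{W^{l-1,1}} → 0`. -/
def memY {n : ℕ} {U V : Type*} [NormedAddCommGroup V] [InnerProductSpace ℝ V]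
    [FiniteDimensional ℝ V] [MeasurableSpace V] [BorelSpace V]
    [NormedAddCommGroup U] [NormedSpace ℝ U]
    (B : (Fin n → ℕ) → (U →L[ℝ] V)) (l : ℕ) (z : V)
    (nu0 : Measure V) (nuInf : Measure (Metric.sphere (0:V) 1)) : Prop :=
  ∃ u : ℕ → Dom n → U,
    (∀ j, CcSmooth (unitCube n) (u j)) ∧
    Tendsto (fun j => sobNorm l (u j)) atTop (𝓝 0) ∧
    ∀ Φ : V → ℝ, MemH Φ →
      Tendsto (fun j => ∫ x in unitCube n, Φ (z + opApply B l (u j) x)) atTop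
        (𝓝 ((∫ v, Φ v ∂nu0) + ∫ w, rrec Φ (w : V) ∂nuInf))

/-! ## The transform T, Lipschitz test classes, derivative sets, envelopes -/

/-- The transformed integrand on the open unit ball. -/
def transf {V : Type*} [NormedAddCommGroup V] [NormedSpace ℝ V] (Φ : V → ℝ) (zh : V) : ℝ :=
  (1 - ‖zh‖) * Φ ((1 - ‖zh‖)⁻¹ • zh)

/-- The function `TΦ` on the closed unit ball (as a function on `V`). -/
def Tfun {V : Type*} [NormedAddCommGroup V] [NormedSpace ℝ V] (Φ : V → ℝ) (zh : V) : ℝ :=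
  if ‖zh‖ < 1 then transf Φ zh else rrec Φ zh

/-- `‖TΦ‖_LIP ≤ 1` on the closed unit ball. -/
def TLipUnit {V : Type*} [NormedAddCommGroup V] [NormedSpace ℝ V] (Φ : V → ℝ) : Prop :=
  ∃ K : NNReal, LipschitzOnWith K (Tfun Φ) (Metric.closedBall (0:V) 1) ∧
    (⨆ zh ∈ Metric.closedBall (0:V) 1, |Tfun Φ zh|) + (K : ℝ) ≤ 1

/-- `‖η‖_LIP ≤ 1` on `Ω̄` (with the `ℓ^∞` metric on `ℝⁿ`). -/
def etaLipUnit {n : ℕ} (Ω : Set (Dom n)) (η : Dom n → ℝ) : Prop :=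
  ∃ K : NNReal, LipschitzOnWith K η (closure Ω) ∧
    (⨆ x ∈ closure Ω, |η x|) + (K : ℝ) ≤ 1

/-- The set of derivatives `F'(z₀)` of `F` (realized as vectors via the inner product). -/
def derivSet {V : Type*} [NormedAddCommGroup V] [InnerProductSpace ℝ V]
    [FiniteDimensional ℝ V] (F : V → ℝ) : Set V :=
  {ζ : V | ∃ z₀ : V, HasFDerivAt F (InnerProductSpace.toDual ℝ V ζ : V →L[ℝ] ℝ) z₀}

/-- The support function of a set `D ⊂ 𝕍`. -/
def suppFn {V : Type*} [NormedAddCommGroup V] [InnerProductSpace ℝ V]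
    (D : Set V) (w : V) : ℝ :=
  sSup ((fun ζ => (inner ℝ ζ w : ℝ)) '' D)

/-- The `𝒜`-quasiconvex envelope, with values in `[-∞, ∞)` (realized in `EReal`). -/
def qcEnv {n : ℕ} {V W : Type*} [NormedAddCommGroup V] [InnerProductSpace ℝ V]
    [FiniteDimensional ℝ V] [NormedAddCommGroup W] [NormedSpace ℝ W]
    (A : (Fin n → ℕ) → (V →L[ℝ] W)) (k : ℕ) (Φ : V → ℝ) (ξ : V) : EReal :=
  sInf {r : EReal | ∃ v : Dom n → V, ContDiff ℝ (⊤ : ℕ∞) v ∧ ZPeriodic v ∧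
    (∫ x in unitCube n, v x) = 0 ∧ (∀ x, opApply A k v x = 0) ∧
    r = ((∫ x in unitCube n, Φ (ξ + v x) : ℝ) : EReal)}

/-- A standard mollifier: smooth, nonnegative, supported in the closed unit cube,
positive on the open unit cube, with integral one. -/
def IsStdMollifier (n : ℕ) (ρ : Dom n → ℝ) : Prop :=
  ContDiff ℝ (⊤ : ℕ∞) ρ ∧ (∀ x, 0 ≤ ρ x) ∧ tsupport ρ ⊆ closedUnitCube n ∧
    (∀ x ∈ unitCube n, 0 < ρ x) ∧ (∫ x : Dom n, ρ x) = 1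

/-- A mollifier (no interior positivity required). -/
def IsMollifier (n : ℕ) (ρ : Dom n → ℝ) : Prop :=
  ContDiff ℝ (⊤ : ℕ∞) ρ ∧ (∀ x, 0 ≤ ρ x) ∧ tsupport ρ ⊆ closedUnitCube n ∧
    (∫ x : Dom n, ρ x) = 1

/-- The rescaled mollifier kernel `φ_t(x) = t^{-n} φ(x/t)`. -/
def mollK {n : ℕ} (ρ : Dom n → ℝ) (t : ℝ) (x : Dom n) : ℝ := ((t : ℝ) ^ n)⁻¹ * ρ (t⁻¹ • x)

/-! ## Young measures -/

/-- A (generalized) Young measure `ν = ((ν_x), λ, (ν_x^∞))` on `Ω`. -/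
structure YoungMeasure (n : ℕ) (V : Type*) [NormedAddCommGroup V] [InnerProductSpace ℝ V]
    [FiniteDimensional ℝ V] [MeasurableSpace V] [BorelSpace V] (Ω : Set (Dom n)) where
  /-- the oscillation measures `(ν_x)` -/
  osc : Dom n → Measure V
  /-- the concentration measure `λ` -/
  conc : Measure (Dom n)
  /-- the concentration-angle measures `(ν_x^∞)` -/
  ang : Dom n → Measure (Metric.sphere (0:V) 1)
  osc_meas : Measurable osc
  osc_prob : ∀ᵐ x ∂(volume.restrict Ω), IsProbabilityMeasure (osc x)
  moment : (∫⁻ x in Ω, ∫⁻ z, ‖z‖₊ ∂(osc x)) < ⊤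
  conc_finite : IsFiniteMeasure conc
  conc_carrier : conc (closure Ω)ᶜ = 0
  ang_meas : Measurable ang
  ang_prob : ∀ᵐ x ∂conc, IsProbabilityMeasure (ang x)

namespace YoungMeasure

variable {n : ℕ} {V : Type*} [NormedAddCommGroup V] [InnerProductSpace ℝ V]
  [FiniteDimensional ℝ V] [MeasurableSpace V] [BorelSpace V] {Ω : Set (Dom n)}

/-- The barycentre `ν̄_x` of the oscillation measure. -/
def barOsc (Y : YoungMeasure n V Ω) (x : Dom n) : V := ∫ z, z ∂(Y.osc x)

/-- The barycentre `ν̄_x^∞` of the concentration-angle measure. -/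
def barAng (Y : YoungMeasure n V Ω) (x : Dom n) : V := ∫ w, (w : V) ∂(Y.ang x)

/-- The density `λ^a` of the absolutely continuous part of `λ`. -/
def lamA (Y : YoungMeasure n V Ω) (x : Dom n) : ℝ := (Y.conc.rnDeriv volume x).toReal

/-- The singular part `λ^s` of `λ`. -/
def lamS (Y : YoungMeasure n V Ω) : Measure (Dom n) := Y.conc.singularPart volume

/-- The density `ν̄_x + λ^a(x) ν̄_x^∞` of the absolutely continuous part of the barycentre. -/
def baryAC (Y : YoungMeasure n V Ω) (x : Dom n) : V := Y.barOsc x + Y.lamA x • Y.barAng x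

/-- The mollification at scale `t` of the absolutely continuous part of the barycentre
(extended by zero outside `Ω`). -/
def mollACpart (Y : YoungMeasure n V Ω) (ρ : Dom n → ℝ) (t : ℝ) (x : Dom n) : V :=
  ∫ y in Ω, mollK ρ t (x - y) • Y.baryAC y

/-- The mollification at scale `t` of the singular part `ν̄^∞ λ^s` of the barycentre. -/
def mollSingPart (Y : YoungMeasure n V Ω) (ρ : Dom n → ℝ) (t : ℝ) (x : Dom n) : V :=
  ∫ y, mollK ρ t (x - y) • Y.barAng y ∂Y.lamS

/-- The mollification at scale `t` of the barycentre `v` of `Y`. -/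
def mollBary (Y : YoungMeasure n V Ω) (ρ : Dom n → ℝ) (t : ℝ) (x : Dom n) : V :=
  Y.mollACpart ρ t x + Y.mollSingPart ρ t x

/-- The formal adjoint `𝒜^*` applied to a test function. -/
def adjOp {W : Type*} [NormedAddCommGroup W] [InnerProductSpace ℝ W] [FiniteDimensional ℝ W]
    (A : (Fin n → ℕ) → (V →L[ℝ] W)) (k : ℕ) (φ : Dom n → W) (x : Dom n) : V :=
  ∑ α ∈ degSet n k, (ContinuousLinearMap.adjoint (A α)) (mderiv α φ x)

/-- `𝒜 v = 0` in the sense of distributions on `Ω`, where `v` is the barycentre of `Y`. -/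
def AFree {W : Type*} [NormedAddCommGroup W] [InnerProductSpace ℝ W] [FiniteDimensional ℝ W]
    (A : (Fin n → ℕ) → (V →L[ℝ] W)) (k : ℕ) (Y : YoungMeasure n V Ω) : Prop :=
  ∀ φ : Dom n → W, ContDiff ℝ (⊤ : ℕ∞) φ → HasCompactSupport φ → tsupport φ ⊆ Ω →
    (∫ x in Ω, (inner ℝ (adjOp A k φ x) (Y.baryAC x) : ℝ)) +
      (∫ x, (inner ℝ (adjOp A k φ x) (Y.barAng x) : ℝ) ∂Y.lamS) = 0

/-- The a.e. Jensen-type inequalities for `𝒜`-quasiconvex integrands of linear growth. -/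
def JensenAE {W : Type*} [NormedAddCommGroup W] [NormedSpace ℝ W]
    (A : (Fin n → ℕ) → (V →L[ℝ] W)) (k : ℕ) (Y : YoungMeasure n V Ω) : Prop :=
  ∀ f : V → ℝ, AQuasiconvex A k f → LinearGrowth f →
    ∀ᵐ x ∂(volume.restrict Ω),
      f (Y.baryAC x) ≤ (∫ z, f z ∂(Y.osc x)) + Y.lamA x * ∫ w, urec f (w : V) ∂(Y.ang x)

end YoungMeasure

/-- The recession function in the second variable of a non-autonomous integrand. -/
def urecx {n : ℕ} {V : Type*} [NormedAddCommGroup V] [NormedSpace ℝ V]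
    (Φ : Dom n → V → ℝ) (x : Dom n) (z : V) : ℝ :=
  limsup (fun t : ℝ => Φ x (t • z) / t) atTop

/-- Membership in the class `𝔼(Ω, 𝕍)` of non-autonomous integrands. -/
def MemE {n : ℕ} {V : Type*} [NormedAddCommGroup V] [NormedSpace ℝ V]
    (Ω : Set (Dom n)) (Φ : Dom n → V → ℝ) : Prop :=
  Continuous (fun p : Dom n × V => Φ p.1 p.2) ∧
  (∃ c, ∀ x ∈ closure Ω, ∀ z, |Φ x z| ≤ c * (1 + ‖z‖)) ∧
  ∃ g : Dom n → V → ℝ,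
    TendstoUniformlyOn (fun (t : ℝ) (p : Dom n × V) => Φ p.1 (t • p.2) / t)
      (fun p => g p.1 p.2) atTop ((closure Ω) ×ˢ {z : V | ‖z‖ = 1})

/-- A sequence `(w_j 𝓛ⁿ⌞Ω)` of absolutely continuous measures generates the Young measure `Y`. -/
def GeneratesYM {n : ℕ} {V : Type*} [NormedAddCommGroup V] [InnerProductSpace ℝ V]
    [FiniteDimensional ℝ V] [MeasurableSpace V] [BorelSpace V] {Ω : Set (Dom n)}
    (w : ℕ → Dom n → V) (Y : YoungMeasure n V Ω) : Prop :=
  ∀ Φ : Dom n → V → ℝ, MemE Ω Φ →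
    Tendsto (fun j => ∫ x in Ω, Φ x (w j x)) atTop
      (𝓝 ((∫ x in Ω, ∫ z, Φ x z ∂(Y.osc x)) +
        ∫ x, (∫ ζ, urecx Φ x (ζ : V) ∂(Y.ang x)) ∂Y.conc))

open scoped ContDiff

/-!
Let `potEnv` be the infimum of the energies `∫ Φ(z + ℬu)` over test maps `u` supported in the unit
cube. If finite, it is Lipschitz and `𝒜`-quasiconvex: by Fourier series and the exactness of the
symbols, a periodic mean-free `𝒜`-free field is an `L¹`-limit of fields `ℬw` with `w` a periodic
trigonometric polynomial, and `w` can be rescaled and cut off. Thus the Jensen inequalities apply to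
the envelopes of all linear combinations of finitely many integrands `Φ_i`. The vectors
`(∫ Φ_i(a + ℬu))_i` form a set with convex closure, since different `u` can be used on different
tiles of the cube. By the Hahn–Banach theorem the averages of the Young measure over a small cell, on which the
barycentre is close to a constant `a`, therefore lie close to this set: a single `u` nearly
reproduces them all.

The unit ball `‖TΦ‖_LIP ≤ 1` is totally bounded, so a finite net of integrands suffices; the
integrand `1 + |z|`, added to the net, controls the error made in passing to the net. Filling `Ω`
with small cells and pasting rescaled copies of the maps `u` gives `ψ`. Finally the `Φ` are
`3`-Lipschitz, so the barycentre may be replaced by its mollification, which is close in `L¹`.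
-/

/-! ### Calculus of constant-coefficient operators -/

section Calculus

variable {n : ℕ} {U V W : Type*} [NormedAddCommGroup U] [NormedSpace ℝ U]
  [NormedAddCommGroup V] [NormedSpace ℝ V] [NormedAddCommGroup W] [NormedSpace ℝ W]

lemma contDiff_pderivDir (j : Fin n) {u : Dom n → V} (hu : ContDiff ℝ ∞ u) :
    ContDiff ℝ ∞ (pderivDir j u) :=
  (hu.fderiv_right (m := ∞) (by simp)).clm_apply contDiff_const

lemma mderiv_induction₂ (P : (Fin n → ℕ) → (Dom n → V) → (Dom n → W) → Prop)
    (step : ∀ β f g j, P β f g → P (β + Pi.single j 1) (pderivDir j f) (pderivDir j g))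
    (α : Fin n → ℕ) {u : Dom n → V} {w : Dom n → W} (zero : P 0 u w) :
    P α (mderiv α u) (mderiv α w) := by
  have iterate : ∀ (j : Fin n) (r : ℕ) β f g, P β f g →
      P (β + Pi.single j r) ((pderivDir j)^[r] f) ((pderivDir j)^[r] g) := by
    intro j r β f g h
    induction r with
    | zero => simpa using h
    | succ r ih =>
      simpa only [Function.iterate_succ_apply', add_assoc, ← Pi.single_add] using step _ _ _ j ih
  have fold : ∀ L : List (Fin n), P (L.map fun j => Pi.single j (α j)).sum
      (L.foldr (fun j f => (pderivDir j)^[α j] f) u)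
      (L.foldr (fun j f => (pderivDir j)^[α j] f) w) := by
    intro L
    induction L with
    | nil => exact zero
    | cons j L ih =>
      rw [List.map_cons, List.sum_cons, add_comm]
      exact iterate j (α j) _ _ _ ih
  simpa [mderiv, ← Fin.sum_univ_def, Finset.univ_sum_single] using fold (List.finRange n)

lemma mderiv_induction (P : (Fin n → ℕ) → (Dom n → V) → Prop)
    (step : ∀ β f j, P β f → P (β + Pi.single j 1) (pderivDir j f))
    (α : Fin n → ℕ) {u : Dom n → V} (zero : P 0 u) : P α (mderiv α u) :=
  mderiv_induction₂ (fun β f (_ : Dom n → V) => P β f) (fun β f _ j h => step β f j h) α (w := u)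
    zero

lemma sum_add_single_one (β : Fin n → ℕ) (j : Fin n) :
    ∑ i, (β + Pi.single j 1 : Fin n → ℕ) i = ∑ i, β i + 1 := by
  simp [Finset.sum_add_distrib]

lemma prod_pow_add_single_one (ξ : Dom n) (β : Fin n → ℕ) (j : Fin n) :
    ∏ i, ξ i ^ (β + Pi.single j 1 : Fin n → ℕ) i = ξ j * ∏ i, ξ i ^ β i := by
  simp only [Pi.add_apply, pow_add, Finset.prod_mul_distrib]
  rw [mul_comm, Finset.prod_eq_single j (by simp +contextual) (by simp)]
  simp

lemma contDiff_mderiv (α : Fin n → ℕ) {u : Dom n → V} (hu : ContDiff ℝ ∞ u) :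
    ContDiff ℝ ∞ (mderiv α u) :=
  mderiv_induction (fun _ f => ContDiff ℝ ∞ f) (fun _ _ j h => contDiff_pderivDir j h) α hu

lemma contDiff_opApply (A : (Fin n → ℕ) → V →L[ℝ] W) (k : ℕ) {u : Dom n → V}
    (hu : ContDiff ℝ ∞ u) : ContDiff ℝ ∞ (opApply A k u) :=
  ContDiff.sum fun α _ => (A α).contDiff.comp (contDiff_mderiv α hu)

lemma mderiv_congr (α : Fin n → ℕ) {u w : Dom n → V} {x : Dom n} (h : u =ᶠ[𝓝 x] w) :
    mderiv α u =ᶠ[𝓝 x] mderiv α w := by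
  refine mderiv_induction₂ (fun _ f g => f =ᶠ[𝓝 x] g) (fun _ f g j hfg => ?_) α h
  filter_upwards [hfg.fderiv (𝕜 := ℝ)] with y hy
  simp [pderivDir, hy]

lemma opApply_congr (A : (Fin n → ℕ) → V →L[ℝ] W) (k : ℕ) {u w : Dom n → V} {x : Dom n}
    (h : u =ᶠ[𝓝 x] w) : opApply A k u x = opApply A k w x :=
  Finset.sum_congr rfl fun α _ => by rw [(mderiv_congr α h).eq_of_nhds]

lemma mderiv_zero (α : Fin n → ℕ) : mderiv α (fun _ : Dom n => (0 : V)) = fun _ => 0 := by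
  refine mderiv_induction (fun _ f => f = fun _ => 0) (fun _ f j h => ?_) α rfl
  subst h
  ext x
  simp [pderivDir]

lemma opApply_zero (A : (Fin n → ℕ) → V →L[ℝ] W) (k : ℕ) (x : Dom n) :
    opApply A k (fun _ : Dom n => (0 : V)) x = 0 := by
  simp [opApply, mderiv_zero]

lemma opApply_eq_zero_of_notMem_tsupport (A : (Fin n → ℕ) → V →L[ℝ] W) (k : ℕ)
    {u : Dom n → V} {x : Dom n} (hx : x ∉ tsupport u) : opApply A k u x = 0 :=
  (opApply_congr A k (notMem_tsupport_iff_eventuallyEq.1 hx)).trans (opApply_zero A k x)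

lemma mderiv_clm_comp (α : Fin n → ℕ) (L : V →L[ℝ] W) {u : Dom n → V} (hu : ContDiff ℝ ∞ u) :
    mderiv α (fun x => L (u x)) = fun x => L (mderiv α u x) := by
  refine (mderiv_induction₂ (fun _ f g => ContDiff ℝ ∞ f ∧ g = fun x => L (f x))
    (fun _ f g j h => ⟨contDiff_pderivDir j h.1, ?_⟩) α ⟨hu, rfl⟩).2
  obtain ⟨hf, rfl⟩ := h
  ext x
  have hfx : HasFDerivAt f (fderiv ℝ f x) x := (hf.differentiable (by simp) x).hasFDerivAt
  change fderiv ℝ (L ∘ f) x (Pi.single j 1) = _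
  rw [(L.hasFDerivAt.comp x hfx).fderiv]
  rfl

lemma mderiv_add (α : Fin n → ℕ) {u w : Dom n → V} (hu : ContDiff ℝ ∞ u)
    (hw : ContDiff ℝ ∞ w) :
    mderiv α (fun x => u x + w x) = fun x => mderiv α u x + mderiv α w x := by
  let fst := ContinuousLinearMap.fst ℝ V V
  let snd := ContinuousLinearMap.snd ℝ V V
  have huw : ContDiff ℝ ∞ fun x => (u x, w x) := hu.prodMk hw
  have hsum := mderiv_clm_comp α (fst + snd) huw
  have hfst := mderiv_clm_comp α fst huw
  have hsnd := mderiv_clm_comp α snd huw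
  simp only [fst, snd, _root_.add_apply, ContinuousLinearMap.coe_fst',
    ContinuousLinearMap.coe_snd'] at hsum hfst hsnd
  rw [hsum, hfst, hsnd]

lemma opApply_add (A : (Fin n → ℕ) → V →L[ℝ] W) (k : ℕ) {u w : Dom n → V}
    (hu : ContDiff ℝ ∞ u) (hw : ContDiff ℝ ∞ w) (x : Dom n) :
    opApply A k (fun x => u x + w x) x = opApply A k u x + opApply A k w x := by
  simp only [opApply, mderiv_add _ hu hw, map_add, Finset.sum_add_distrib]

lemma opApply_sum (A : (Fin n → ℕ) → V →L[ℝ] W) (k : ℕ) {ι : Type*} (F : Finset ι)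
    {u : ι → Dom n → V} (hu : ∀ i ∈ F, ContDiff ℝ ∞ (u i)) (x : Dom n) :
    opApply A k (fun x => ∑ i ∈ F, u i x) x = ∑ i ∈ F, opApply A k (u i) x := by
  classical
  induction F using Finset.induction_on with
  | empty => simp [opApply_zero]
  | insert a F ha ih =>
    rw [Finset.forall_mem_insert] at hu
    simp only [Finset.sum_insert ha]
    rw [opApply_add A k hu.1 (ContDiff.sum hu.2), ih hu.2]

lemma mderiv_comp_affine (α : Fin n → ℕ) (M c : ℝ) (b : Dom n) (u : Dom n → V) :
    mderiv α (fun x => c • u (M • x - b)) =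
      fun x => (c * M ^ (∑ i, α i)) • mderiv α u (M • x - b) := by
  refine mderiv_induction₂ (fun β f g => f = fun x => (c * M ^ (∑ i, β i)) • g (M • x - b))
    (fun β f g j h => ?_) α (by simp)
  subst h
  ext x
  set r := c * M ^ (∑ i, β i) with hr
  have hfderiv : fderiv ℝ (fun x => r • g (M • x - b)) x = r • M • fderiv ℝ g (M • x - b) := by
    rw [show (fun x => r • g (M • x - b)) = r • fun x => g (M • x - b) from rfl,
      fderiv_const_smul_field, Pi.smul_apply, fderiv_comp_smul (f := fun y => g (y - b)),
      fderiv_comp_sub]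
  rw [pderivDir, hfderiv, sum_add_single_one, pow_succ, ← mul_assoc, ← hr, mul_smul r M]
  rfl

lemma sum_eq_of_mem_degSet {k : ℕ} {α : Fin n → ℕ} (h : α ∈ degSet n k) : ∑ i, α i = k :=
  (Finset.mem_filter.1 h).2

lemma opApply_comp_affine (A : (Fin n → ℕ) → V →L[ℝ] W) (k : ℕ) (M c : ℝ) (b : Dom n)
    (u : Dom n → V) (x : Dom n) :
    opApply A k (fun x => c • u (M • x - b)) x = (c * M ^ k) • opApply A k u (M • x - b) := by
  simp only [opApply, mderiv_comp_affine, Finset.smul_sum]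
  exact Finset.sum_congr rfl fun α hα => by rw [sum_eq_of_mem_degSet hα, map_smul]

lemma norm_iteratedFDeriv_pderivDir_le (j : Fin n) {f : Dom n → V} (hf : ContDiff ℝ ∞ f)
    (r : ℕ) (x : Dom n) :
    ‖iteratedFDeriv ℝ r (pderivDir j f) x‖ ≤ ‖iteratedFDeriv ℝ (r + 1) f x‖ := by
  let evalAt := ContinuousLinearMap.apply ℝ V (Pi.single j (1 : ℝ) : Dom n)
  have hnorm : ‖evalAt‖ ≤ 1 :=
    ContinuousLinearMap.opNorm_le_bound _ zero_le_one fun g => by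
      simpa [evalAt, Pi.norm_single, mul_comm] using g.le_opNorm (Pi.single j (1 : ℝ) : Dom n)
  have hfderiv : ContDiff ℝ ∞ (fderiv ℝ f) := hf.fderiv_right (by simp)
  rw [show pderivDir j f = evalAt ∘ fderiv ℝ f from rfl, ← norm_iteratedFDeriv_fderiv,
    ContinuousLinearMap.iteratedFDeriv_comp_left _ hfderiv.contDiffAt (by exact_mod_cast le_top)]
  exact (ContinuousLinearMap.norm_compContinuousMultilinearMap_le _ _).trans
    (mul_le_of_le_one_left (norm_nonneg _) hnorm)

lemma norm_mderiv_le (α : Fin n → ℕ) {u : Dom n → V} (hu : ContDiff ℝ ∞ u) (x : Dom n) :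
    ‖mderiv α u x‖ ≤ ‖iteratedFDeriv ℝ (∑ i, α i) u x‖ := by
  have key := mderiv_induction (fun β f => ContDiff ℝ ∞ f ∧ ∀ r : ℕ,
    ‖iteratedFDeriv ℝ r f x‖ ≤ ‖iteratedFDeriv ℝ (r + ∑ i, β i) u x‖)
    (fun β f j h => ⟨contDiff_pderivDir j h.1, fun r => ?_⟩) α
    ⟨hu, fun r => le_of_eq (by rw [show ∑ i : Fin n, (0 : Fin n → ℕ) i = 0 by simp, add_zero])⟩
  · have h0 := key.2 0
    rwa [zero_add, norm_iteratedFDeriv_zero] at h0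
  · rw [sum_add_single_one, add_comm _ 1, ← add_assoc]
    exact (norm_iteratedFDeriv_pderivDir_le j h.1 r x).trans (h.2 (r + 1))

lemma norm_opApply_le (A : (Fin n → ℕ) → V →L[ℝ] W) (k : ℕ) {u : Dom n → V}
    (hu : ContDiff ℝ ∞ u) (x : Dom n) :
    ‖opApply A k u x‖ ≤ (∑ α ∈ degSet n k, ‖A α‖) * ‖iteratedFDeriv ℝ k u x‖ := by
  rw [opApply, Finset.sum_mul]
  refine norm_sum_le_of_le _ fun α hα => ((A α).le_opNorm _).trans ?_
  gcongr
  exact (norm_mderiv_le α hu x).trans_eq (by rw [sum_eq_of_mem_degSet hα])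

lemma pderivDir_planeWave {f f' : ℝ → ℝ} (hf : ∀ s, HasDerivAt f (f' s) s) (ξ : Dom n)
    (j : Fin n) (c : ℝ) (a : V) :
    pderivDir j (fun x : Dom n => (c * f (ξ ⬝ᵥ x)) • a) =
      fun x => (ξ j * c * f' (ξ ⬝ᵥ x)) • a := by
  ext x
  have hdot : HasFDerivAt (fun x : Dom n => ξ ⬝ᵥ x)
      (∑ i, ξ i • (ContinuousLinearMap.proj i : Dom n →L[ℝ] ℝ)) x :=
    HasFDerivAt.fun_sum fun i _ =>
      (ContinuousLinearMap.proj (R := ℝ) (φ := fun _ : Fin n => ℝ) i).hasFDerivAt.const_smul (ξ i)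
  have hwave := (((hf (ξ ⬝ᵥ x)).comp_hasFDerivAt x hdot).const_mul c).smul_const a
  have hsingle : ∑ i, ξ i * (Pi.single j (1 : ℝ) : Dom n) i = ξ j := by
    simp [Pi.single_apply]
  simp only [Function.comp_apply] at hwave
  rw [pderivDir, hwave.fderiv]
  simp only [ContinuousLinearMap.smulRight_apply, _root_.smul_apply,
    _root_.sum_apply, ContinuousLinearMap.proj_apply, smul_eq_mul, hsingle]
  congr 1
  ring

lemma mderiv_planeWave (α : Fin n → ℕ) (h : ℕ → ℝ → ℝ)
    (hh : ∀ m s, HasDerivAt (h m) (h (m + 1) s) s) (ξ : Dom n) (a : V) :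
    mderiv α (fun x => h 0 (ξ ⬝ᵥ x) • a) =
      fun x => ((∏ i, ξ i ^ α i) * h (∑ i, α i) (ξ ⬝ᵥ x)) • a := by
  refine mderiv_induction
    (fun β f => f = fun x => ((∏ i, ξ i ^ β i) * h (∑ i, β i) (ξ ⬝ᵥ x)) • a)
    (fun β f j hf => ?_) α (by simp)
  rw [hf, pderivDir_planeWave (hh _), prod_pow_add_single_one, sum_add_single_one]

lemma opApply_planeWave (A : (Fin n → ℕ) → V →L[ℝ] W) (k : ℕ) (h : ℕ → ℝ → ℝ)
    (hh : ∀ m s, HasDerivAt (h m) (h (m + 1) s) s) (ξ : Dom n) (a : V) (x : Dom n) :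
    opApply A k (fun x => h 0 (ξ ⬝ᵥ x) • a) x = h k (ξ ⬝ᵥ x) • opSymbol A k ξ a := by
  simp only [opApply, opSymbol, mderiv_planeWave _ h hh, _root_.sum_apply, Finset.smul_sum]
  refine Finset.sum_congr rfl fun α hα => ?_
  rw [sum_eq_of_mem_degSet hα]
  simp [smul_smul, mul_comm]

end Calculus

/-! ### Cubic cells -/

section Cells

variable {n : ℕ} {E : Type*} [NormedAddCommGroup E] [NormedSpace ℝ E]

/-- The point of the lattice `ℤⁿ ⊂ ℝⁿ` with integer coordinates `k`. -/
def latticePoint (k : Fin n → ℤ) : Dom n := fun i => (k i : ℝ)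

/-- The open cell of side `1/M` centred at `M⁻¹ k`; the affine map `x ↦ M x - k` takes it onto the
unit cube. -/
def cell (M : ℝ) (k : Fin n → ℤ) : Set (Dom n) := {x | M • x - latticePoint k ∈ unitCube n}

lemma mem_unitCube {x : Dom n} : x ∈ unitCube n ↔ ∀ i, -(1 / 2) < x i ∧ x i < 1 / 2 := by
  simp [unitCube, Set.mem_pi]

lemma isOpen_unitCube : IsOpen (unitCube n) :=
  isOpen_set_pi Set.finite_univ fun _ _ => isOpen_Ioo

lemma measurableSet_unitCube : MeasurableSet (unitCube n) := isOpen_unitCube.measurableSet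

lemma volume_unitCube : volume (unitCube n) = 1 := by
  rw [unitCube, Real.volume_pi_Ioo]
  norm_num

lemma volumeReal_unitCube : volume.real (unitCube n) = 1 := by
  rw [Measure.real, volume_unitCube, ENNReal.toReal_one]

lemma unitCube_subset_closedUnitCube : unitCube n ⊆ closedUnitCube n :=
  Set.pi_mono fun _ _ => Set.Ioo_subset_Icc_self

lemma isCompact_closedUnitCube : IsCompact (closedUnitCube n) :=
  isCompact_univ_pi fun _ => isCompact_Icc

lemma mem_cell {M : ℝ} {k : Fin n → ℤ} {x : Dom n} :
    x ∈ cell M k ↔ ∀ i, -(1 / 2) < M * x i - k i ∧ M * x i - k i < 1 / 2 := by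
  simp [cell, mem_unitCube, latticePoint]

lemma isOpen_cell (M : ℝ) (k : Fin n → ℤ) : IsOpen (cell M k) :=
  isOpen_unitCube.preimage (by fun_prop)

lemma measurableSet_cell (M : ℝ) (k : Fin n → ℤ) : MeasurableSet (cell M k) :=
  (isOpen_cell M k).measurableSet

lemma inv_smul_latticePoint_mem_cell {M : ℝ} (hM : M ≠ 0) (k : Fin n → ℤ) :
    M⁻¹ • latticePoint k ∈ cell M k := by
  rw [cell, Set.mem_ofPred_eq, smul_inv_smul₀ hM, sub_self, mem_unitCube]
  norm_num

lemma eq_of_mem_cell {M : ℝ} {k k' : Fin n → ℤ} {x : Dom n} (h : x ∈ cell M k)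
    (h' : x ∈ cell M k') : k = k' := by
  ext i
  have hi := mem_cell.1 h i
  have hi' := mem_cell.1 h' i
  have hdist : |((k i - k' i : ℤ) : ℝ)| < 1 := by
    rw [abs_lt]
    push_cast
    constructor <;> linarith
  have hdist' : |k i - k' i| < 1 := by exact_mod_cast hdist
  rw [Int.abs_lt_one_iff] at hdist'
  omega

lemma disjoint_cell (M : ℝ) {k k' : Fin n → ℤ} (h : k ≠ k') : Disjoint (cell M k) (cell M k') :=
  Set.disjoint_left.2 fun _ hx hx' => h (eq_of_mem_cell hx hx')

lemma integral_comp_smul_sub {M : ℝ} (hM : 0 ≤ M) (b : Dom n) (f : Dom n → E) :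
    ∫ x, f (M • x - b) = (M ^ n)⁻¹ • ∫ y, f y := by
  rw [Measure.integral_comp_smul_of_nonneg volume (fun y => f (y - b)) _ (hR := hM),
    integral_sub_right_eq_self f, Module.finrank_fin_fun]

lemma setIntegral_cell_comp {M : ℝ} (hM : 0 ≤ M) (k : Fin n → ℤ) (f : Dom n → E) :
    ∫ x in cell M k, f (M • x - latticePoint k) = (M ^ n)⁻¹ • ∫ y in unitCube n, f y := by
  rw [← integral_indicator (measurableSet_cell M k), ← integral_indicator measurableSet_unitCube]
  exact integral_comp_smul_sub hM (latticePoint k) ((unitCube n).indicator f)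

lemma volumeReal_cell {M : ℝ} (hM : 0 ≤ M) (k : Fin n → ℤ) :
    volume.real (cell M k) = (M ^ n)⁻¹ := by
  simpa [volumeReal_unitCube] using setIntegral_cell_comp hM k fun _ => (1 : ℝ)

lemma dist_le_of_mem_cell {M : ℝ} (hM : 0 < M) {k : Fin n → ℤ} {x y : Dom n} (hx : x ∈ cell M k)
    (hy : y ∈ cell M k) : dist x y ≤ M⁻¹ := by
  refine (dist_pi_le_iff (by positivity)).2 fun i => ?_
  have hxi := mem_cell.1 hx i
  have hyi := mem_cell.1 hy i
  rw [Real.dist_eq, inv_eq_one_div, le_div_iff₀ hM, ← abs_of_pos hM, ← abs_mul, abs_le]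
  constructor <;> linarith

lemma isBounded_cell {M : ℝ} (hM : 0 < M) (k : Fin n → ℤ) : Bornology.IsBounded (cell M k) :=
  Metric.isBounded_iff.2 ⟨M⁻¹, fun _ hx _ hy => dist_le_of_mem_cell hM hx hy⟩

lemma volume_cell_lt_top {M : ℝ} (hM : 0 < M) (k : Fin n → ℤ) : volume (cell M k) < ⊤ :=
  (isBounded_cell hM k).measure_lt_top

lemma ae_exists_mem_cell {M : ℝ} (hM : 0 < M) : ∀ᵐ x : Dom n, ∃ k, x ∈ cell M k := by
  have hface : ∀ᵐ x : Dom n, ∀ (i : Fin n) (p : ℤ), x i ≠ (p + 1 / 2) / M :=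
    ae_all_iff.2 fun i => ae_all_iff.2 fun p =>
      Measure.ae_eval_ne (μ := fun _ : Fin n => (volume : Measure ℝ)) i _
  filter_upwards [hface] with x hx
  refine ⟨fun i => round (M * x i), mem_cell.2 fun i => ?_⟩
  have hround := abs_le.1 (abs_sub_round (M * x i))
  refine ⟨hround.1.lt_of_ne fun he => hx i (round (M * x i) - 1) ?_,
    hround.2.lt_of_ne fun he => hx i (round (M * x i)) ?_⟩ <;>
  · rw [eq_div_iff hM.ne']
    push_cast
    linarith

instance isFiniteMeasure_restrict_unitCube :
    IsFiniteMeasure (volume.restrict (unitCube n)) :=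
  isFiniteMeasure_restrict.2 (by simp [volume_unitCube])

lemma isFiniteMeasure_restrict_cell {M : ℝ} (hM : 0 < M) (k : Fin n → ℤ) :
    IsFiniteMeasure (volume.restrict (cell M k)) :=
  isFiniteMeasure_restrict.2 (volume_cell_lt_top hM k).ne

/-- The indices `k` with `|k_i| ≤ m`: those of the cells of side `1/(2m+1)` that subdivide the unit
cube. -/
def subdivision (n m : ℕ) : Finset (Fin n → ℤ) := Fintype.piFinset fun _ => Finset.Icc (-(m : ℤ)) m

lemma card_subdivision (m : ℕ) : (subdivision n m).card = (2 * m + 1) ^ n := by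
  simp only [subdivision, Fintype.card_piFinset, Int.card_Icc, Finset.prod_const, Finset.card_univ,
    Fintype.card_fin]
  congr 1
  omega

lemma mem_unitCube_iff_mem_subdivision {m : ℕ} {k : Fin n → ℤ} {x : Dom n}
    (hx : x ∈ cell (2 * m + 1 : ℝ) k) : x ∈ unitCube n ↔ k ∈ subdivision n m := by
  have hm : (0 : ℝ) < 2 * m + 1 := by positivity
  simp only [mem_unitCube, subdivision, Fintype.mem_piFinset, Finset.mem_Icc]
  refine forall_congr' fun i => ?_
  obtain ⟨hlo, hhi⟩ := mem_cell.1 hx i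
  constructor
  · rintro ⟨hxlo, hxhi⟩
    have hklo : (-(m : ℝ) - 1) < k i := by nlinarith [hm]
    have hkhi : (k i : ℝ) < m + 1 := by nlinarith [hm]
    norm_cast at hklo hkhi
    omega
  · rintro ⟨hklo, hkhi⟩
    have hklo' : -(m : ℝ) ≤ k i := by exact_mod_cast hklo
    have hkhi' : (k i : ℝ) ≤ m := by exact_mod_cast hkhi
    constructor <;> by_contra! hc <;> nlinarith [hm]

lemma cell_subset_unitCube {m : ℕ} {k : Fin n → ℤ} (hk : k ∈ subdivision n m) :
    cell (2 * m + 1 : ℝ) k ⊆ unitCube n :=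
  fun _ hx => (mem_unitCube_iff_mem_subdivision hx).2 hk

lemma biUnion_subdivision_ae_eq_unitCube (m : ℕ) :
    (⋃ k ∈ subdivision n m, cell (2 * m + 1 : ℝ) k) =ᵐ[volume] unitCube n := by
  filter_upwards [ae_exists_mem_cell (M := (2 * m + 1 : ℝ)) (by positivity)] with x ⟨k, hk⟩
  refine propext ⟨fun h => ?_, fun h => ?_⟩
  · obtain ⟨k', hk', hx⟩ := Set.mem_iUnion₂.1 h
    exact cell_subset_unitCube hk' hx
  · exact Set.mem_iUnion₂.2 ⟨k, (mem_unitCube_iff_mem_subdivision hk).1 h, hk⟩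

lemma setIntegral_biUnion_cell (M : ℝ) (F : Finset (Fin n → ℤ)) {f : Dom n → E}
    (hf : ∀ k ∈ F, IntegrableOn f (cell M k)) :
    ∫ x in ⋃ k ∈ F, cell M k, f x = ∑ k ∈ F, ∫ x in cell M k, f x :=
  integral_biUnion_finset F (fun k _ => measurableSet_cell M k) (fun _ _ _ _ h => disjoint_cell M h)
    hf

lemma setIntegral_unitCube_eq_sum (m : ℕ) {f : Dom n → E} (hf : IntegrableOn f (unitCube n)) :
    ∫ x in unitCube n, f x = ∑ k ∈ subdivision n m, ∫ x in cell (2 * m + 1 : ℝ) k, f x := by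
  rw [← setIntegral_congr_set (biUnion_subdivision_ae_eq_unitCube m)]
  exact setIntegral_biUnion_cell _ _ fun k hk => hf.mono_set (cell_subset_unitCube hk)

end Cells

section CellEstimates

variable {n : ℕ} {E : Type*} [NormedAddCommGroup E]

lemma setIntegral_norm_sub_le_of_mem_cell {M : ℝ} (hM : 0 < M) {k : Fin n → ℤ} {z : Dom n → E}
    {a : E} {d : ℝ} (hd : ∀ x ∈ cell M k, ‖z x - a‖ ≤ d) :
    ∫ x in cell M k, ‖z x - a‖ ≤ (M ^ n)⁻¹ * d := by
  have hbound := norm_setIntegral_le_of_norm_le_const (volume_cell_lt_top hM k)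
    (f := fun x => ‖z x - a‖) (C := d) fun x hx => (norm_norm _).trans_le (hd x hx)
  rw [volumeReal_cell hM.le, mul_comm] at hbound
  exact (Real.le_norm_self _).trans hbound

lemma integrableOn_unitCube_of_continuous {f : Dom n → E} (hf : Continuous f) :
    IntegrableOn f (unitCube n) :=
  (hf.continuousOn.integrableOn_compact isCompact_closedUnitCube).mono_set
    unitCube_subset_closedUnitCube

lemma exists_subdivision_norm_sub_center_le {g : Dom n → E} (hg : Continuous g) {d : ℝ}
    (hd : 0 < d) : ∃ m : ℕ, ∀ k ∈ subdivision n m, ∀ x ∈ cell (2 * m + 1 : ℝ) k,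
      ‖g x - g ((2 * m + 1 : ℝ)⁻¹ • latticePoint k)‖ ≤ d := by
  obtain ⟨r, hr, hgr⟩ := Metric.uniformContinuousOn_iff.1
    (isCompact_closedUnitCube.uniformContinuousOn_of_continuous (hg.continuousOn
      (s := closedUnitCube n))) d hd
  obtain ⟨m, hm⟩ := exists_nat_gt r⁻¹
  have hM : (0 : ℝ) < 2 * m + 1 := by positivity
  have hMr : (2 * m + 1 : ℝ)⁻¹ < r := by
    rw [inv_lt_comm₀ hM hr]
    linarith [m.cast_nonneg (α := ℝ)]
  refine ⟨m, fun k hk x hx => ?_⟩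
  have hcell := (cell_subset_unitCube hk).trans unitCube_subset_closedUnitCube
  have hcenter := inv_smul_latticePoint_mem_cell hM.ne' k
  rw [← dist_eq_norm]
  exact (hgr x (hcell hx) _ (hcell hcenter) ((dist_le_of_mem_cell hM hx hcenter).trans_lt hMr)).le

lemma sum_subdivision_const (m : ℕ) (c : ℝ) :
    ∑ _ ∈ subdivision n m, ((2 * m + 1 : ℝ) ^ n)⁻¹ * c = c := by
  rw [Finset.sum_const, card_subdivision, nsmul_eq_mul]
  push_cast
  exact mul_inv_cancel_left₀ (by positivity) c

end CellEstimates

/-! ### Pasting rescaled fields into cells -/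

section Pasting

variable {n : ℕ} {U V : Type*} [NormedAddCommGroup V] [NormedSpace ℝ V]
  [NormedAddCommGroup U] [NormedSpace ℝ U]

/-- The sum over `k ∈ F` of the fields `u k`, each transported from the unit cube to the cell
`cell M k`. The amplitude `M⁻ˡ` makes an `l`-th order operator act on each copy without a factor. -/
def pasteCells (l : ℕ) (M : ℝ) (F : Finset (Fin n → ℤ)) (u : (Fin n → ℤ) → Dom n → U) :
    Dom n → U :=
  fun x => ∑ k ∈ F, (M ^ l)⁻¹ • u k (M • x - latticePoint k)

lemma contDiff_smul_comp_affine {u : Dom n → U} (hu : ContDiff ℝ ∞ u) (c M : ℝ) (b : Dom n) :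
    ContDiff ℝ ∞ fun x => c • u (M • x - b) :=
  contDiff_const.smul (hu.comp (by fun_prop))

lemma contDiff_pasteCells (l : ℕ) (M : ℝ) {F : Finset (Fin n → ℤ)}
    {u : (Fin n → ℤ) → Dom n → U} (hu : ∀ k ∈ F, ContDiff ℝ ∞ (u k)) :
    ContDiff ℝ ∞ (pasteCells l M F u) :=
  ContDiff.sum fun k hk => contDiff_smul_comp_affine (hu k hk) _ _ _

/-- The homeomorphism `x ↦ M x - b` of `ℝⁿ`. -/
def smulSubHomeomorph {M : ℝ} (hM : M ≠ 0) (b : Dom n) : Dom n ≃ₜ Dom n :=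
  (Homeomorph.smulOfNeZero M hM).trans (Homeomorph.subRight b)

lemma tsupport_pasteCells_subset (l : ℕ) {M : ℝ} (hM : M ≠ 0) (F : Finset (Fin n → ℤ))
    (u : (Fin n → ℤ) → Dom n → U) :
    tsupport (pasteCells l M F u) ⊆
      ⋃ k ∈ F, smulSubHomeomorph hM (latticePoint k) ⁻¹' tsupport (u k) := by
  refine closure_minimal (fun x hx => ?_) (F.finite_toSet.isClosed_biUnion fun k _ =>
    (isClosed_tsupport (u k)).preimage (smulSubHomeomorph hM (latticePoint k)).continuous)
  contrapose! hx
  simp only [Set.mem_iUnion, not_exists] at hx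
  refine Function.notMem_support.2 (Finset.sum_eq_zero fun k hk => ?_)
  have hzero : u k (M • x - latticePoint k) = 0 := image_eq_zero_of_notMem_tsupport (hx k hk)
  rw [hzero, smul_zero]

lemma ccSmooth_pasteCells (l : ℕ) {M : ℝ} (hM : M ≠ 0) {F : Finset (Fin n → ℤ)}
    {u : (Fin n → ℤ) → Dom n → U} (hu : ∀ k ∈ F, CcSmooth (unitCube n) (u k)) {Ω : Set (Dom n)}
    (hΩ : ∀ k ∈ F, cell M k ⊆ Ω) : CcSmooth Ω (pasteCells l M F u) := by
  have hsupp := tsupport_pasteCells_subset l hM F u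
  refine ⟨contDiff_pasteCells l M fun k hk => (hu k hk).1,
    IsCompact.of_isClosed_subset (F.finite_toSet.isCompact_biUnion fun k hk => ?_)
      (isClosed_tsupport _) hsupp,
    hsupp.trans (Set.iUnion₂_subset fun k hk x hx => hΩ k hk ((hu k hk).2.2 hx))⟩
  exact (smulSubHomeomorph hM (latticePoint k)).isCompact_preimage.2 (hu k hk).2.1

lemma opApply_pasteCells (B : (Fin n → ℕ) → U →L[ℝ] V) (l : ℕ) {M : ℝ} (hM : M ≠ 0)
    {F : Finset (Fin n → ℤ)} {u : (Fin n → ℤ) → Dom n → U} (hu : ∀ k ∈ F, ContDiff ℝ ∞ (u k))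
    (x : Dom n) :
    opApply B l (pasteCells l M F u) x = ∑ k ∈ F, opApply B l (u k) (M • x - latticePoint k) := by
  unfold pasteCells
  rw [opApply_sum B l F fun k hk => contDiff_smul_comp_affine (hu k hk) _ _ _]
  refine Finset.sum_congr rfl fun k _ => ?_
  rw [opApply_comp_affine, inv_mul_cancel₀ (pow_ne_zero l hM), one_smul]

lemma opApply_pasteCells_of_mem_cell (B : (Fin n → ℕ) → U →L[ℝ] V) (l : ℕ) {M : ℝ} (hM : M ≠ 0)
    {F : Finset (Fin n → ℤ)} {u : (Fin n → ℤ) → Dom n → U}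
    (hu : ∀ k ∈ F, CcSmooth (unitCube n) (u k)) {k : Fin n → ℤ} (hk : k ∈ F) {x : Dom n}
    (hx : x ∈ cell M k) :
    opApply B l (pasteCells l M F u) x = opApply B l (u k) (M • x - latticePoint k) := by
  rw [opApply_pasteCells B l hM fun k hk => (hu k hk).1, Finset.sum_eq_single_of_mem k hk]
  exact fun k' hk' hne => opApply_eq_zero_of_notMem_tsupport B l fun h =>
    hne (eq_of_mem_cell ((hu k' hk').2.2 h) hx)

lemma opApply_pasteCells_of_notMem_cell (B : (Fin n → ℕ) → U →L[ℝ] V) (l : ℕ) {M : ℝ} (hM : M ≠ 0)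
    {F : Finset (Fin n → ℤ)} {u : (Fin n → ℤ) → Dom n → U}
    (hu : ∀ k ∈ F, CcSmooth (unitCube n) (u k)) {x : Dom n} (hx : ∀ k ∈ F, x ∉ cell M k) :
    opApply B l (pasteCells l M F u) x = 0 := by
  rw [opApply_pasteCells B l hM fun k hk => (hu k hk).1]
  exact Finset.sum_eq_zero fun k hk => opApply_eq_zero_of_notMem_tsupport B l fun h =>
    hx k hk ((hu k hk).2.2 h)

lemma iteratedFDeriv_smul_comp_affine {u : Dom n → U} (hu : ContDiff ℝ ∞ u) (c M : ℝ)
    (b : Dom n) (j : ℕ) (x : Dom n) :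
    iteratedFDeriv ℝ j (fun x => c • u (M • x - b)) x =
      (c * M ^ j) • iteratedFDeriv ℝ j u (M • x - b) := by
  have hu' : ContDiff ℝ j u := hu.of_le (by exact_mod_cast le_top)
  have hshift : ContDiff ℝ j fun y => u (y - b) := hu'.comp (contDiff_id.sub contDiff_const)
  have hscale : ContDiff ℝ j fun x : Dom n => u (M • x - b) := hu'.comp (by fun_prop)
  rw [iteratedFDeriv_const_smul_apply' hscale.contDiffAt,
    congrFun (iteratedFDeriv_comp_const_smul M hshift) x, iteratedFDeriv_comp_sub, smul_smul]

lemma CcSmooth.integrable_norm_iteratedFDeriv {Ω : Set (Dom n)} {u : Dom n → U}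
    (hu : CcSmooth Ω u) (j : ℕ) : Integrable fun x => ‖iteratedFDeriv ℝ j u x‖ :=
  ((hu.1.continuous_iteratedFDeriv (by exact_mod_cast le_top)).integrable_of_hasCompactSupport
    (hu.2.1.iteratedFDeriv j)).norm

lemma norm_iteratedFDeriv_pasteCells_le {l j : ℕ} (hj : j < l) {M : ℝ} (hM : 1 ≤ M)
    {F : Finset (Fin n → ℤ)} {u : (Fin n → ℤ) → Dom n → U} (hu : ∀ k ∈ F, ContDiff ℝ ∞ (u k))
    (x : Dom n) :
    ‖iteratedFDeriv ℝ j (pasteCells l M F u) x‖ ≤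
      ∑ k ∈ F, M⁻¹ * ‖iteratedFDeriv ℝ j (u k) (M • x - latticePoint k)‖ := by
  have hM0 : 0 < M := zero_lt_one.trans_le hM
  have hfactor : ‖(M ^ l)⁻¹ * M ^ j‖ ≤ M⁻¹ := by
    rw [Real.norm_of_nonneg (by positivity), inv_mul_eq_div, inv_eq_one_div,
      div_le_div_iff₀ (by positivity) hM0, one_mul, ← pow_succ]
    exact pow_le_pow_right₀ hM hj
  unfold pasteCells
  rw [iteratedFDeriv_fun_sum_apply fun k hk =>
    ((contDiff_smul_comp_affine (hu k hk) _ _ _).of_le (by exact_mod_cast le_top)).contDiffAt]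
  refine norm_sum_le_of_le _ fun k hk => ?_
  rw [iteratedFDeriv_smul_comp_affine (hu k hk), norm_smul]
  gcongr

lemma sobNorm_pasteCells_le (l : ℕ) {M : ℝ} (hM : 1 ≤ M) {F : Finset (Fin n → ℤ)}
    {u : (Fin n → ℤ) → Dom n → U} (hu : ∀ k ∈ F, CcSmooth (unitCube n) (u k)) :
    sobNorm l (pasteCells l M F u) ≤ M⁻¹ * ∑ k ∈ F, (M ^ n)⁻¹ * sobNorm l (u k) := by
  have hM0 : 0 < M := zero_lt_one.trans_le hM
  have hint : ∀ j, ∀ k ∈ F, Integrable fun x =>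
      M⁻¹ * ‖iteratedFDeriv ℝ j (u k) (M • x - latticePoint k)‖ := fun j k hk =>
    ((integrable_comp_smul_iff volume _ hM0.ne').2
      (((hu k hk).integrable_norm_iteratedFDeriv j).comp_sub_right _)).const_mul _
  have horder : ∀ j ∈ Finset.range l, ∫ x, ‖iteratedFDeriv ℝ j (pasteCells l M F u) x‖ ≤
      ∑ k ∈ F, M⁻¹ * ((M ^ n)⁻¹ * ∫ x, ‖iteratedFDeriv ℝ j (u k) x‖) := fun j hj => by
    calc ∫ x, ‖iteratedFDeriv ℝ j (pasteCells l M F u) x‖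
        ≤ ∫ x, ∑ k ∈ F, M⁻¹ * ‖iteratedFDeriv ℝ j (u k) (M • x - latticePoint k)‖ :=
          integral_mono_of_nonneg (ae_of_all _ fun _ => norm_nonneg _)
            (integrable_finsetSum F (hint j)) (ae_of_all _ <|
              norm_iteratedFDeriv_pasteCells_le (Finset.mem_range.1 hj) hM fun k hk => (hu k hk).1)
      _ = _ := by
          rw [integral_finsetSum F (hint j)]
          refine Finset.sum_congr rfl fun k _ => ?_
          rw [integral_const_mul, integral_comp_smul_sub hM0.le (latticePoint k) fun y =>
            ‖iteratedFDeriv ℝ j (u k) y‖, smul_eq_mul]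
  refine (Finset.sum_le_sum horder).trans_eq ?_
  simp only [sobNorm, Finset.mul_sum]
  exact Finset.sum_comm

lemma sobNorm_nonneg (l : ℕ) (u : Dom n → U) : 0 ≤ sobNorm l u :=
  Finset.sum_nonneg fun _ _ => integral_nonneg fun _ => norm_nonneg _

end Pasting

/-! ### Integrals of Lipschitz functions -/

section LipschitzIntegrals

variable {α V : Type*} [MeasurableSpace α] {μ : Measure α} [IsFiniteMeasure μ]
  [NormedAddCommGroup V] {K : NNReal} {Φ : V → ℝ}

lemma abs_sub_le_of_lipschitzWith (hΦ : LipschitzWith K Φ) (z w : V) :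
    |Φ z - Φ w| ≤ K * ‖z - w‖ := by
  rw [← Real.dist_eq, ← dist_eq_norm]
  exact hΦ.dist_le_mul z w

lemma integrable_comp_of_lipschitzWith (hΦ : LipschitzWith K Φ) {f : α → V}
    (hf : Integrable f μ) : Integrable (fun x => Φ (f x)) μ := by
  refine ((integrable_const |Φ 0|).add (hf.norm.const_mul (K : ℝ))).mono'
    (hΦ.continuous.comp_aestronglyMeasurable hf.aestronglyMeasurable) (ae_of_all _ fun x => ?_)
  have hlip := abs_sub_le_of_lipschitzWith hΦ (f x) 0
  rw [sub_zero] at hlip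
  calc ‖Φ (f x)‖ = |Φ 0 + (Φ (f x) - Φ 0)| := by rw [add_sub_cancel, Real.norm_eq_abs]
    _ ≤ |Φ 0| + K * ‖f x‖ := (abs_add_le _ _).trans (by gcongr)

lemma abs_integral_comp_sub_le (hΦ : LipschitzWith K Φ) {f g : α → V} (hf : Integrable f μ)
    (hg : Integrable g μ) :
    |(∫ x, Φ (f x) ∂μ) - ∫ x, Φ (g x) ∂μ| ≤ K * ∫ x, ‖f x - g x‖ ∂μ := by
  rw [← integral_sub (integrable_comp_of_lipschitzWith hΦ hf)
    (integrable_comp_of_lipschitzWith hΦ hg), ← integral_const_mul, ← Real.norm_eq_abs]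
  exact norm_integral_le_of_norm_le ((hf.sub hg).norm.const_mul _)
    (ae_of_all _ fun x => abs_sub_le_of_lipschitzWith hΦ _ _)

end LipschitzIntegrals

/-! ### The envelope generated by compactly supported potentials -/

section Envelope

variable {n : ℕ} {U V : Type*} [NormedAddCommGroup V] [NormedSpace ℝ V]
  [NormedAddCommGroup U] [NormedSpace ℝ U]

lemma ccSmooth_zero (Ω : Set (Dom n)) : CcSmooth Ω fun _ : Dom n => (0 : U) := by
  refine ⟨contDiff_const, HasCompactSupport.zero, ?_⟩
  rw [show tsupport (fun _ : Dom n => (0 : U)) = ∅ from tsupport_eq_empty_iff.2 rfl]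
  exact Set.empty_subset _

lemma CcSmooth.add {Ω : Set (Dom n)} {u w : Dom n → U} (hu : CcSmooth Ω u) (hw : CcSmooth Ω w) :
    CcSmooth Ω fun x => u x + w x :=
  ⟨hu.1.add hw.1, hu.2.1.add hw.2.1, (tsupport_add u w).trans (Set.union_subset hu.2.2 hw.2.2)⟩

lemma CcSmooth.integrable_opApply {Ω : Set (Dom n)} {u : Dom n → U} (hu : CcSmooth Ω u)
    (B : (Fin n → ℕ) → U →L[ℝ] V) (l : ℕ) : Integrable (opApply B l u) := by
  refine (contDiff_opApply B l hu.1).continuous.integrable_of_hasCompactSupport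
    (HasCompactSupport.of_support_subset_isCompact hu.2.1 fun x hx => ?_)
  contrapose! hx
  exact Function.notMem_support.2 (opApply_eq_zero_of_notMem_tsupport B l hx)

/-- The energy `∫_𝕏 Φ(z + ℬu)` of a field `u` over the unit cube. -/
def cubeEnergy (B : (Fin n → ℕ) → U →L[ℝ] V) (l : ℕ) (Φ : V → ℝ) (z : V) (u : Dom n → U) : ℝ :=
  ∫ x in unitCube n, Φ (z + opApply B l u x)

/-- The infimum of `∫_𝕏 Φ(z + ℬu)` over `u ∈ C_c^∞(𝕏, 𝕌)`, the candidate for the `𝒜`-quasiconvex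
envelope of `Φ`. As a real infimum it takes the junk value `0` when the energies are unbounded
below. -/
def potEnv (B : (Fin n → ℕ) → U →L[ℝ] V) (l : ℕ) (Φ : V → ℝ) (z : V) : ℝ :=
  ⨅ u : {u : Dom n → U // CcSmooth (unitCube n) u}, cubeEnergy B l Φ z u

/-- The energies `∫_𝕏 Φ(z + ℬu)`, `u ∈ C_c^∞(𝕏, 𝕌)`, are bounded below. -/
def EnergyBddBelow (B : (Fin n → ℕ) → U →L[ℝ] V) (l : ℕ) (Φ : V → ℝ) (z : V) : Prop :=
  ∃ m : ℝ, ∀ u : Dom n → U, CcSmooth (unitCube n) u → m ≤ cubeEnergy B l Φ z u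

variable {B : (Fin n → ℕ) → U →L[ℝ] V} {l : ℕ} {K : NNReal} {Φ : V → ℝ}

lemma abs_cubeEnergy_sub_le (hΦ : LipschitzWith K Φ) {u : Dom n → U}
    (hu : CcSmooth (unitCube n) u) (z w : V) :
    |cubeEnergy B l Φ z u - cubeEnergy B l Φ w u| ≤ K * ‖z - w‖ := by
  have hint := (hu.integrable_opApply B l).integrableOn (s := unitCube n)
  simpa [cubeEnergy, volumeReal_unitCube] using
    abs_integral_comp_sub_le hΦ ((integrable_const z).add hint) ((integrable_const w).add hint)

lemma EnergyBddBelow.forall (hΦ : LipschitzWith K Φ) {z : V} (h : EnergyBddBelow B l Φ z)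
    (w : V) : EnergyBddBelow B l Φ w := by
  obtain ⟨m, hm⟩ := h
  refine ⟨m - K * ‖z - w‖, fun u hu => ?_⟩
  linarith [hm u hu, (abs_le.1 (abs_cubeEnergy_sub_le (B := B) (l := l) hΦ hu z w)).2]

lemma potEnv_le_cubeEnergy {z : V} (h : EnergyBddBelow B l Φ z) {u : Dom n → U}
    (hu : CcSmooth (unitCube n) u) : potEnv B l Φ z ≤ cubeEnergy B l Φ z u := by
  obtain ⟨m, hm⟩ := h
  exact ciInf_le (f := fun u : {u : Dom n → U // CcSmooth (unitCube n) u} => cubeEnergy B l Φ z u)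
    ⟨m, Set.forall_mem_range.2 fun u => hm u u.2⟩ ⟨u, hu⟩

lemma le_potEnv {z : V} {m : ℝ}
    (h : ∀ u : Dom n → U, CcSmooth (unitCube n) u → m ≤ cubeEnergy B l Φ z u) :
    m ≤ potEnv B l Φ z :=
  have : Nonempty {u : Dom n → U // CcSmooth (unitCube n) u} := ⟨⟨_, ccSmooth_zero _⟩⟩
  le_ciInf fun u => h u u.2

lemma exists_cubeEnergy_lt (B : (Fin n → ℕ) → U →L[ℝ] V) (l : ℕ) (Φ : V → ℝ) (z : V) {δ : ℝ}
    (hδ : 0 < δ) :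
    ∃ u : Dom n → U, CcSmooth (unitCube n) u ∧ cubeEnergy B l Φ z u < potEnv B l Φ z + δ := by
  have : Nonempty {u : Dom n → U // CcSmooth (unitCube n) u} := ⟨⟨_, ccSmooth_zero _⟩⟩
  obtain ⟨u, hu⟩ := exists_lt_of_ciInf_lt (lt_add_of_pos_right (potEnv B l Φ z) hδ)
  exact ⟨u, u.2, hu⟩

lemma potEnv_le_self {z : V} (h : EnergyBddBelow B l Φ z) : potEnv B l Φ z ≤ Φ z := by
  simpa [cubeEnergy, opApply_zero, volumeReal_unitCube] using
    potEnv_le_cubeEnergy h (ccSmooth_zero (U := U) (unitCube n))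

lemma lipschitzWith_potEnv (hΦ : LipschitzWith K Φ) {z₀ : V} (h : EnergyBddBelow B l Φ z₀) :
    LipschitzWith K (potEnv B l Φ) := by
  refine LipschitzWith.of_le_add_mul K fun z w => ?_
  rw [dist_eq_norm, ← sub_le_iff_le_add]
  refine le_potEnv fun u hu => ?_
  linarith [(abs_le.1 (abs_cubeEnergy_sub_le (B := B) (l := l) hΦ hu z w)).2,
    potEnv_le_cubeEnergy (h.forall hΦ z) hu]

lemma setIntegral_cell_comp_pasteCells (B : (Fin n → ℕ) → U →L[ℝ] V) (l : ℕ) (Φ : V → ℝ) {M : ℝ}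
    (hM : 0 < M) {F : Finset (Fin n → ℤ)} {u : (Fin n → ℤ) → Dom n → U}
    (hu : ∀ k ∈ F, CcSmooth (unitCube n) (u k)) {k : Fin n → ℤ} (hk : k ∈ F) (a : V) :
    ∫ x in cell M k, Φ (a + opApply B l (pasteCells l M F u) x) =
      (M ^ n)⁻¹ * cubeEnergy B l Φ a (u k) := by
  rw [cubeEnergy, ← smul_eq_mul,
    ← setIntegral_cell_comp hM.le k fun y => Φ (a + opApply B l (u k) y)]
  refine setIntegral_congr_fun (measurableSet_cell M k) fun x hx => ?_
  simp only [opApply_pasteCells_of_mem_cell B l hM.ne' hu hk hx]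

lemma abs_setIntegral_cell_sub_cubeEnergy_le (B : (Fin n → ℕ) → U →L[ℝ] V) (l : ℕ)
    (hΦ : LipschitzWith K Φ) {M : ℝ} (hM : 0 < M) {F : Finset (Fin n → ℤ)}
    {u : (Fin n → ℤ) → Dom n → U} (hu : ∀ k ∈ F, CcSmooth (unitCube n) (u k)) {k : Fin n → ℤ}
    (hk : k ∈ F) {z : Dom n → V} (hz : IntegrableOn z (cell M k)) (a : V) :
    |(∫ x in cell M k, Φ (z x + opApply B l (pasteCells l M F u) x)) -
        (M ^ n)⁻¹ * cubeEnergy B l Φ a (u k)| ≤ K * ∫ x in cell M k, ‖z x - a‖ := by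
  have := isFiniteMeasure_restrict_cell hM k
  have hψ : CcSmooth Set.univ (pasteCells l M F u) :=
    ccSmooth_pasteCells l hM.ne' hu fun _ _ => Set.subset_univ _
  have hint := (hψ.integrable_opApply B l).integrableOn (s := cell M k)
  rw [← setIntegral_cell_comp_pasteCells B l Φ hM hu hk a]
  simpa using abs_integral_comp_sub_le hΦ (hz.add hint) ((integrable_const a).add hint)

lemma setIntegral_cell_le_potEnv_add (hΦ : LipschitzWith K Φ) {z₀ : V}
    (h : EnergyBddBelow B l Φ z₀) {M : ℝ} (hM : 0 < M) {F : Finset (Fin n → ℤ)}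
    {u : (Fin n → ℤ) → Dom n → U} (hu : ∀ k ∈ F, CcSmooth (unitCube n) (u k)) {k : Fin n → ℤ}
    (hk : k ∈ F) {z : Dom n → V} (hz : IntegrableOn z (cell M k)) {a : V} {d : ℝ}
    (hd : ∀ x ∈ cell M k, ‖z x - a‖ ≤ d) (hua : cubeEnergy B l Φ a (u k) < potEnv B l Φ a + d) :
    ∫ x in cell M k, Φ (z x + opApply B l (pasteCells l M F u) x) ≤
      (∫ x in cell M k, potEnv B l Φ (z x)) + (M ^ n)⁻¹ * ((1 + 2 * K) * d) := by
  have := isFiniteMeasure_restrict_cell hM k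
  have hpaste := (abs_le.1 (abs_setIntegral_cell_sub_cubeEnergy_le B l hΦ hM hu hk hz a)).2
  have hfreeze := (abs_le.1 (abs_integral_comp_sub_le (lipschitzWith_potEnv hΦ h) hz
    (integrable_const a))).1
  have hconst : ∫ _ in cell M k, potEnv B l Φ a = (M ^ n)⁻¹ * potEnv B l Φ a := by
    simp [volumeReal_cell hM.le]
  have hnorm := mul_le_mul_of_nonneg_left (setIntegral_norm_sub_le_of_mem_cell hM hd) K.coe_nonneg
  have henergy := mul_le_mul_of_nonneg_left hua.le (by positivity : (0 : ℝ) ≤ (M ^ n)⁻¹)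
  rw [hconst] at hfreeze
  linarith

lemma exists_ccSmooth_setIntegral_le_potEnv_add (hΦ : LipschitzWith K Φ) {z₀ : V}
    (h : EnergyBddBelow B l Φ z₀) {g : Dom n → V} (hg : Continuous g) {δ : ℝ} (hδ : 0 < δ) :
    ∃ ψ : Dom n → U, CcSmooth (unitCube n) ψ ∧
      ∫ x in unitCube n, Φ (g x + opApply B l ψ x) ≤
        (∫ x in unitCube n, potEnv B l Φ (g x)) + δ := by
  have hd : 0 < δ / (1 + 2 * K) := by positivity
  obtain ⟨m, hm⟩ := exists_subdivision_norm_sub_center_le hg hd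
  set M : ℝ := 2 * m + 1
  have hM : 0 < M := by positivity
  choose u hu hQ using fun k : Fin n → ℤ =>
    exists_cubeEnergy_lt B l Φ (g (M⁻¹ • latticePoint k)) hd
  have hψ : CcSmooth (unitCube n) (pasteCells l M (subdivision n m) u) :=
    ccSmooth_pasteCells l hM.ne' (fun k _ => hu k) fun k hk => cell_subset_unitCube hk
  have hgi := integrableOn_unitCube_of_continuous hg
  refine ⟨_, hψ, ?_⟩
  rw [setIntegral_unitCube_eq_sum m (f := fun x => Φ (g x + opApply B l (pasteCells l M _ u) x))
      (integrable_comp_of_lipschitzWith hΦ (hgi.add (hψ.integrable_opApply B l).integrableOn)),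
    setIntegral_unitCube_eq_sum m
      (integrable_comp_of_lipschitzWith (lipschitzWith_potEnv hΦ h) hgi),
    ← sum_subdivision_const (n := n) m δ, ← Finset.sum_add_distrib]
  refine Finset.sum_le_sum fun k hk => ?_
  have hcell := setIntegral_cell_le_potEnv_add hΦ h hM (fun k _ => hu k) hk
    (hgi.mono_set (cell_subset_unitCube hk)) (hm k hk) (hQ k)
  rwa [mul_div_cancel₀ _ (by positivity)] at hcell

lemma potEnv_le_setIntegral_of_ccSmooth (hΦ : LipschitzWith K Φ) {z₀ : V}
    (h : EnergyBddBelow B l Φ z₀) (z : V) {u : Dom n → U} (hu : CcSmooth (unitCube n) u) :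
    potEnv B l Φ z ≤ ∫ x in unitCube n, potEnv B l Φ (z + opApply B l u x) := by
  refine le_of_forall_pos_le_add fun ε hε => ?_
  obtain ⟨ψ, hψ, hle⟩ := exists_ccSmooth_setIntegral_le_potEnv_add hΦ h
    (g := fun x => z + opApply B l u x)
    (continuous_const.add (contDiff_opApply B l hu.1).continuous) hε
  refine (potEnv_le_cubeEnergy (h.forall hΦ z) (hu.add hψ)).trans (le_trans (le_of_eq ?_) hle)
  simp only [cubeEnergy, opApply_add B l hu.1 hψ.1, add_assoc]

end Envelope

/-! ### Periodic potentials -/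

section Periodic

variable {n : ℕ}

lemma ZPeriodic.exists_norm_le {E : Type*} [NormedAddCommGroup E] {f : Dom n → E}
    (hp : ZPeriodic f) (hf : Continuous f) : ∃ C : ℝ, ∀ x, ‖f x‖ ≤ C := by
  obtain ⟨C, hC⟩ :=
    isCompact_closedUnitCube.exists_bound_of_continuousOn (hf.continuousOn (s := closedUnitCube n))
  refine ⟨C, fun x => ?_⟩
  have hmem : (x + fun i => ((-round (x i) : ℤ) : ℝ)) ∈ closedUnitCube n := fun i _ => by
    have := abs_le.1 (abs_sub_round (x i))
    simp only [Pi.add_apply, Int.cast_neg, Set.mem_Icc]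
    constructor <;> linarith
  simpa only [hp x] using hC _ hmem

lemma ZPeriodic.setIntegral_unitCube_comp_smul {E : Type*} [NormedAddCommGroup E] [NormedSpace ℝ E]
    {f : Dom n → E} (hp : ZPeriodic f) (hf : Continuous f) (m : ℕ) :
    ∫ x in unitCube n, f ((2 * m + 1 : ℝ) • x) = ∫ x in unitCube n, f x := by
  set M : ℝ := 2 * m + 1
  have hM : 0 < M := by positivity
  have hcell (k : Fin n → ℤ) :
      ∫ x in cell M k, f (M • x) = (M ^ n)⁻¹ • ∫ x in unitCube n, f x := by
    rw [← setIntegral_cell_comp hM.le k]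
    refine integral_congr_ae (ae_of_all _ fun x => ?_)
    have hshift := hp (M • x - latticePoint k) k
    rwa [show (fun i => (k i : ℝ)) = latticePoint k from rfl, sub_add_cancel] at hshift
  rw [setIntegral_unitCube_eq_sum m
      (integrableOn_unitCube_of_continuous (f := fun x => f (M • x)) (by fun_prop)),
    Finset.sum_congr rfl fun k _ => hcell k, Finset.sum_const, card_subdivision,
    ← Nat.cast_smul_eq_nsmul ℝ, smul_smul]
  push_cast
  rw [mul_inv_cancel₀ (pow_pos hM n).ne', one_smul]

lemma setIntegral_norm_le_of_eq_zero_on {α E : Type*} [MeasurableSpace α] {μ : Measure α}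
    [NormedAddCommGroup E] {f : α → E} {s t : Set α} (hs : MeasurableSet s)
    (hμ : μ (s \ t) ≠ ⊤) (hf : ∀ x ∈ t, f x = 0) {C : ℝ}
    (hC : ∀ x, ‖f x‖ ≤ C) : ∫ x in s, ‖f x‖ ∂μ ≤ C * μ.real (s \ t) := by
  have hst : ∫ x in s, ‖f x‖ ∂μ = ∫ x in s \ t, ‖f x‖ ∂μ :=
    setIntegral_eq_of_subset_of_forall_sdiff_eq_zero hs Set.sdiff_subset fun x hx => by
      rw [hf x (by_contra fun hxt => hx.2 ⟨hx.1, hxt⟩), norm_zero]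
  rw [hst]
  refine (le_abs_self _).trans ?_
  rw [← Real.norm_eq_abs]
  exact norm_setIntegral_le_of_norm_le_const hμ.lt_top fun x _ => by
    rw [norm_norm]
    exact hC x

section Cutoff

lemma exists_ccSmooth_eq_one_nhds {Ω K : Set (Dom n)} (hΩ : IsOpen Ω) (hK : IsCompact K)
    (hKΩ : K ⊆ Ω) : ∃ χ : Dom n → ℝ, CcSmooth Ω χ ∧ (∀ x ∈ K, ∀ᶠ y in 𝓝 x, χ y = 1) ∧
      ∀ x, |χ x| ≤ 1 := by
  obtain ⟨L, hL, hKL, hLΩ⟩ := exists_compact_between hK hΩ hKΩ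
  obtain ⟨χ, h0, h1, hχ⟩ := exists_contMDiffMap_zero_one_nhds_of_isClosed (n := (⊤ : ℕ∞))
    (modelWithCornersSelf ℝ (Dom n)) isOpen_interior.isClosed_compl hK.isClosed
    (Set.disjoint_left.2 fun x hx hxK => hx (hKL hxK))
  have hsupp : tsupport χ ⊆ L := fun x hx => by
    by_contra hxL
    have hzero : χ =ᶠ[𝓝 x] 0 :=
      eventually_nhdsSet_iff_forall.1 h0 x fun hxi => hxL (interior_subset hxi)
    exact notMem_tsupport_iff_eventuallyEq.2 hzero hx
  exact ⟨χ, ⟨χ.contMDiff.contDiff, hL.of_isClosed_subset (isClosed_tsupport _) hsupp,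
    hsupp.trans hLΩ⟩, eventually_nhdsSet_iff_forall.1 h1,
    fun x => abs_le.2 ⟨by linarith [(hχ x).1], (hχ x).2⟩⟩

variable {U V : Type*} [NormedAddCommGroup U] [NormedSpace ℝ U]
  [NormedAddCommGroup V] [NormedSpace ℝ V]

lemma CcSmooth.smul {Ω : Set (Dom n)} {χ : Dom n → ℝ} (hχ : CcSmooth Ω χ) {u : Dom n → U}
    (hu : ContDiff ℝ ∞ u) : CcSmooth Ω fun x => χ x • u x :=
  ⟨hχ.1.smul hu, hχ.2.1.smul_right, (tsupport_smul_subset_left χ u).trans hχ.2.2⟩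

lemma CcSmooth.exists_norm_iteratedFDeriv_le {Ω : Set (Dom n)} {u : Dom n → U} (hu : CcSmooth Ω u)
    (j : ℕ) : ∃ C, ∀ x, ‖iteratedFDeriv ℝ j u x‖ ≤ C :=
  (hu.1.continuous_iteratedFDeriv (by exact_mod_cast le_top)).bounded_above_of_compact_support
    (hu.2.1.iteratedFDeriv j)

lemma ZPeriodic.exists_norm_iteratedFDeriv_le {u : Dom n → U} (hp : ZPeriodic u)
    (hu : ContDiff ℝ ∞ u) (j : ℕ) : ∃ C, ∀ x, ‖iteratedFDeriv ℝ j u x‖ ≤ C := by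
  refine ZPeriodic.exists_norm_le (fun x m => ?_)
    (hu.continuous_iteratedFDeriv (by exact_mod_cast le_top))
  rw [← iteratedFDeriv_comp_add_right, show (fun y => u (y + fun i => (m i : ℝ))) = u from
    funext fun y => hp y m]

lemma ZPeriodic.opApply {u : Dom n → U} (hp : ZPeriodic u) (B : (Fin n → ℕ) → U →L[ℝ] V) (l : ℕ) :
    ZPeriodic (opApply B l u) := fun x m => by
  have hshift := opApply_comp_affine B l 1 1 (-fun i => (m i : ℝ)) u x
  simp only [one_smul, sub_neg_eq_add, one_pow, one_mul] at hshift
  rw [← hshift, show (fun y => u (y + fun i => (m i : ℝ))) = u from funext fun y => hp y m]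

lemma exists_norm_iteratedFDeriv_le_of_le {u : Dom n → U}
    (h : ∀ j, ∃ C, ∀ x, ‖iteratedFDeriv ℝ j u x‖ ≤ C) (l : ℕ) :
    ∃ C, ∀ j ≤ l, ∀ x, ‖iteratedFDeriv ℝ j u x‖ ≤ C := by
  choose C hC using h
  obtain ⟨D, hD⟩ := ((Finset.range (l + 1)).image C).exists_le
  exact ⟨D, fun j hj x => (hC j x).trans (hD _ (Finset.mem_image_of_mem C (by simpa using hj)))⟩

lemma norm_iteratedFDeriv_oscillating_le {u : Dom n → U} (hu : ContDiff ℝ ∞ u) {l j : ℕ}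
    (hj : j ≤ l) {C M : ℝ} (hC : ∀ x, ‖iteratedFDeriv ℝ j u x‖ ≤ C) (hM : 0 < M) (x : Dom n) :
    ‖iteratedFDeriv ℝ j (fun x => (M ^ l)⁻¹ • u (M • x - 0)) x‖ ≤ (M ^ (l - j))⁻¹ * C := by
  rw [iteratedFDeriv_smul_comp_affine hu, norm_smul, Real.norm_of_nonneg (by positivity),
    pow_sub₀ M hM.ne' hj, mul_inv, inv_inv]
  exact mul_le_mul_of_nonneg_left (hC _) (by positivity)

lemma sum_range_choose_succ_le (l : ℕ) : ∑ i ∈ Finset.range l, (l.choose (i + 1) : ℝ) ≤ 2 ^ l := by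
  have hsum := Nat.sum_range_choose l
  rw [Finset.sum_range_succ'] at hsum
  exact_mod_cast le_of_add_le_left hsum.le

/-- In the Leibniz expansion each derivative falling on `χ` costs the oscillating factor one
power of `M`. -/
lemma norm_iteratedFDeriv_smul_oscillating_le {χ : Dom n → ℝ} {u : Dom n → U}
    (hχ : ContDiff ℝ ∞ χ) (hu : ContDiff ℝ ∞ u) (hχ1 : ∀ x, |χ x| ≤ 1) {l : ℕ} {C D M : ℝ}
    (hC : ∀ j ≤ l, ∀ x, ‖iteratedFDeriv ℝ j u x‖ ≤ C)
    (hD : ∀ j ≤ l, ∀ x, ‖iteratedFDeriv ℝ j χ x‖ ≤ D) (hM : 1 ≤ M) (x : Dom n) :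
    ‖iteratedFDeriv ℝ l (fun x => χ x • (M ^ l)⁻¹ • u (M • x - 0)) x‖ ≤
      C + M⁻¹ * (2 ^ l * (D * C)) := by
  have hM0 : 0 < M := by linarith
  have hC0 : 0 ≤ C := (norm_nonneg _).trans (hC 0 (Nat.zero_le l) x)
  have hD0 : 0 ≤ D := (norm_nonneg _).trans (hD 0 (Nat.zero_le l) x)
  have hosc (j : ℕ) (hj : j ≤ l) := norm_iteratedFDeriv_oscillating_le hu hj (hC j hj) hM0 x
  have hlower (i : ℕ) (hi : i + 1 ≤ l) :
      ‖iteratedFDeriv ℝ (l - (i + 1)) (fun x => (M ^ l)⁻¹ • u (M • x - 0)) x‖ ≤ M⁻¹ * C := by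
    refine (hosc _ (Nat.sub_le _ _)).trans ?_
    gcongr
    exact le_self_pow₀ hM (by omega)
  refine (norm_iteratedFDeriv_smul_le hχ (contDiff_smul_comp_affine hu _ _ _) x
    (by exact_mod_cast le_top)).trans ?_
  rw [Finset.sum_range_succ', add_comm]
  refine add_le_add ?_ ?_
  · simpa using mul_le_mul (hχ1 x) (hosc l le_rfl) (norm_nonneg _) zero_le_one
  · calc _ ≤ ∑ i ∈ Finset.range l, (l.choose (i + 1) : ℝ) * (D * (M⁻¹ * C)) := by
          refine Finset.sum_le_sum fun i hi => ?_
          have hil : i + 1 ≤ l := Finset.mem_range.1 hi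
          rw [mul_assoc]
          have := hlower i hil
          have := hD (i + 1) hil x
          gcongr
      _ ≤ 2 ^ l * (D * (M⁻¹ * C)) := by
          rw [← Finset.sum_mul]
          gcongr
          exact sum_range_choose_succ_le l
      _ = M⁻¹ * (2 ^ l * (D * C)) := by ring

lemma eventually_norm_opApply_smul_oscillating_le (B : (Fin n → ℕ) → U →L[ℝ] V) (l : ℕ)
    {Ω : Set (Dom n)} {χ : Dom n → ℝ} {u : Dom n → U} (hχ : CcSmooth Ω χ)
    (hχ1 : ∀ x, |χ x| ≤ 1) (hu : ContDiff ℝ ∞ u) {C : ℝ}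
    (hC : ∀ j ≤ l, ∀ x, ‖iteratedFDeriv ℝ j u x‖ ≤ C) :
    ∀ᶠ M : ℝ in atTop, ∀ x, ‖opApply B l (fun x => χ x • (M ^ l)⁻¹ • u (M • x - 0)) x‖ ≤
      (∑ α ∈ degSet n l, ‖B α‖) * (C + 1) := by
  obtain ⟨D, hD⟩ := exists_norm_iteratedFDeriv_le_of_le hχ.exists_norm_iteratedFDeriv_le l
  have hsmall : ∀ᶠ M : ℝ in atTop, M⁻¹ * (2 ^ l * (D * C)) < 1 := by
    have hlim : Tendsto (fun M : ℝ => M⁻¹ * (2 ^ l * (D * C))) atTop (𝓝 0) := by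
      simpa using tendsto_inv_atTop_zero.mul_const (2 ^ l * (D * C))
    exact hlim.eventually_lt_const one_pos
  filter_upwards [hsmall, eventually_ge_atTop 1] with M hMS hM x
  refine (norm_opApply_le B l (hχ.smul (contDiff_smul_comp_affine hu _ _ _)).1 x).trans ?_
  gcongr
  exact (norm_iteratedFDeriv_smul_oscillating_le hχ.1 hu hχ1 hC hD hM x).trans (by gcongr)

lemma opApply_smul_oscillating_of_eventually_eq_one (B : (Fin n → ℕ) → U →L[ℝ] V) (l : ℕ)
    {χ : Dom n → ℝ} (u : Dom n → U) {M : ℝ} (hM : M ≠ 0) {x : Dom n}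
    (hχ : ∀ᶠ y in 𝓝 x, χ y = 1) :
    opApply B l (fun x => χ x • (M ^ l)⁻¹ • u (M • x - 0)) x = opApply B l u (M • x) := by
  have hloc : (fun x => χ x • (M ^ l)⁻¹ • u (M • x - 0)) =ᶠ[𝓝 x]
      fun x => (M ^ l)⁻¹ • u (M • x - 0) := by
    filter_upwards [hχ] with y hy
    rw [hy, one_smul]
  rw [opApply_congr B l hloc, opApply_comp_affine, inv_mul_cancel₀ (pow_ne_zero l hM), one_smul,
    sub_zero]

lemma exists_ccSmooth_setIntegral_norm_sub_le_of_zPeriodic (B : (Fin n → ℕ) → U →L[ℝ] V) (l : ℕ)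
    {u : Dom n → U} (hu : ContDiff ℝ ∞ u) (hp : ZPeriodic u) {θ : ℝ} (hθ : 0 < θ) :
    ∃ (m : ℕ) (ψ : Dom n → U), CcSmooth (unitCube n) ψ ∧
      ∫ x in unitCube n, ‖opApply B l ψ x - opApply B l u ((2 * m + 1 : ℝ) • x)‖ ≤ θ := by
  obtain ⟨C, hC⟩ := exists_norm_iteratedFDeriv_le_of_le (hp.exists_norm_iteratedFDeriv_le hu) l
  set R : ℝ := (∑ α ∈ degSet n l, ‖B α‖) * (C + 1)
  have hC0 : 0 ≤ C := (norm_nonneg _).trans (hC 0 (Nat.zero_le l) 0)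
  have hsum0 : 0 ≤ ∑ α ∈ degSet n l, ‖B α‖ := Finset.sum_nonneg fun _ _ => norm_nonneg _
  have : 0 ≤ R := by positivity
  have hub (x : Dom n) : ‖opApply B l u x‖ ≤ R :=
    (norm_opApply_le B l hu x).trans
      (mul_le_mul_of_nonneg_left (by linarith [hC l le_rfl x]) hsum0)
  obtain ⟨K, hKs, hK, hKv⟩ := measurableSet_unitCube.exists_isCompact_sdiff_lt
    (volume_unitCube (n := n) ▸ ENNReal.one_ne_top : volume (unitCube n) ≠ ⊤)
    (ε := ENNReal.ofReal (θ / (2 * R + 1))) (by simpa using by positivity)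
  obtain ⟨χ, hχ, hχK, hχ1⟩ := exists_ccSmooth_eq_one_nhds isOpen_unitCube hK hKs
  have htop : Tendsto (fun m : ℕ => 2 * (m : ℝ) + 1) atTop atTop :=
    tendsto_atTop_add_const_right _ _ (tendsto_natCast_atTop_atTop.const_mul_atTop two_pos)
  obtain ⟨m, hm⟩ :=
    (htop.eventually (eventually_norm_opApply_smul_oscillating_le B l hχ hχ1 hu hC)).exists
  set M : ℝ := 2 * m + 1
  refine ⟨m, _, hχ.smul (contDiff_smul_comp_affine hu (M ^ l)⁻¹ M 0), ?_⟩
  have hbound := setIntegral_norm_le_of_eq_zero_on measurableSet_unitCube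
    (hKv.trans ENNReal.ofReal_lt_top).ne
    (fun x hx => sub_eq_zero.2 (opApply_smul_oscillating_of_eventually_eq_one B l u
      (by positivity : M ≠ 0) (hχK x hx)))
    fun x => (norm_sub_le _ _).trans (add_le_add (hm x) (hub (M • x)))
  have hvol : volume.real (unitCube n \ K) ≤ θ / (2 * R + 1) :=
    ENNReal.toReal_le_of_le_ofReal (by positivity) hKv.le
  refine hbound.trans ?_
  calc (R + R) * volume.real (unitCube n \ K) ≤ (2 * R + 1) * (θ / (2 * R + 1)) := by
        exact mul_le_mul (by linarith) hvol measureReal_nonneg (by positivity)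
    _ = θ := mul_div_cancel₀ _ (by positivity)

/-- The rapidly oscillating rescalings `ℬu(M ·)` have the same averages as `ℬu`, and can be cut off
near the boundary of the cube at small cost. -/
lemma potEnv_le_setIntegral_of_zPeriodic {B : (Fin n → ℕ) → U →L[ℝ] V} {l : ℕ} {K : NNReal}
    {Φ : V → ℝ} (hΦ : LipschitzWith K Φ) {z₀ : V} (h : EnergyBddBelow B l Φ z₀) (z : V)
    {u : Dom n → U} (hu : ContDiff ℝ ∞ u) (hp : ZPeriodic u) :
    potEnv B l Φ z ≤ ∫ x in unitCube n, potEnv B l Φ (z + opApply B l u x) := by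
  have hQ := lipschitzWith_potEnv hΦ h
  have hcont : Continuous (opApply B l u) := (contDiff_opApply B l hu).continuous
  refine le_of_forall_pos_le_add fun ε hε => ?_
  obtain ⟨m, ψ, hψ, hclose⟩ := exists_ccSmooth_setIntegral_norm_sub_le_of_zPeriodic B l hu hp
    (θ := ε / (K + 1)) (by positivity)
  have hoscInt : IntegrableOn (fun x => z + opApply B l u ((2 * m + 1 : ℝ) • x)) (unitCube n) :=
    integrableOn_unitCube_of_continuous (by fun_prop)
  have hcompare := (abs_le.1 (abs_integral_comp_sub_le hQ
    ((integrable_const z).add (hψ.integrable_opApply B l).integrableOn) hoscInt)).2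
  simp only [Pi.add_apply, add_sub_add_left_eq_sub] at hcompare
  have hper : ZPeriodic fun x => potEnv B l Φ (z + opApply B l u x) := fun x m =>
    congrArg (fun w => potEnv B l Φ (z + w)) (hp.opApply B l x m)
  rw [hper.setIntegral_unitCube_comp_smul
    (hQ.continuous.comp (continuous_const.add hcont)) m] at hcompare
  have hsmall : (K : ℝ) * (ε / (K + 1)) ≤ ε := by
    rw [mul_div_assoc', div_le_iff₀ (by positivity)]
    nlinarith [hε]
  linarith [potEnv_le_setIntegral_of_ccSmooth hΦ h z hψ,
    mul_le_mul_of_nonneg_left hclose K.coe_nonneg]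

end Cutoff

end Periodic

/-! ### Fourier series of periodic fields -/

section Fourier

variable {n : ℕ}

/-- The frequency `2πξ` of the character of `ℝⁿ/ℤⁿ` with index `ξ`. -/
def frequency (ξ : Fin n → ℤ) : Dom n := fun i => 2 * Real.pi * ξ i

lemma frequency_ne_zero {ξ : Fin n → ℤ} (hξ : ξ ≠ 0) : frequency ξ ≠ 0 := fun h =>
  hξ (funext fun i => by simpa [frequency, Real.pi_ne_zero] using congr_fun h i)

lemma frequency_neg (ξ : Fin n → ℤ) : frequency (-ξ) = -frequency ξ := by
  ext i
  simp [frequency]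

lemma frequency_dotProduct_add_int (ξ m : Fin n → ℤ) (x : Dom n) :
    frequency ξ ⬝ᵥ (x + fun i => (m i : ℝ)) =
      frequency ξ ⬝ᵥ x + (∑ i, ξ i * m i : ℤ) * (2 * Real.pi) := by
  simp only [dotProduct, frequency, Pi.add_apply, Int.cast_sum, Int.cast_mul, Finset.sum_mul,
    ← Finset.sum_add_distrib]
  exact Finset.sum_congr rfl fun i _ => by ring

@[fun_prop]
lemma continuous_dotProduct_const (ζ : Dom n) : Continuous fun x : Dom n => ζ ⬝ᵥ x :=
  continuous_finsetSum _ fun i _ => by fun_prop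

lemma contDiff_dotProduct_const (ζ : Dom n) : ContDiff ℝ ∞ fun x : Dom n => ζ ⬝ᵥ x :=
  ContDiff.sum fun i _ => by fun_prop

section Coefficients

variable {V V' : Type*} [NormedAddCommGroup V] [NormedSpace ℝ V]
  [NormedAddCommGroup V'] [NormedSpace ℝ V']

/-- The cosine Fourier coefficient of `v` over the unit cube, without normalizing factor. -/
def cosCoeff (v : Dom n → V) (ξ : Fin n → ℤ) : V :=
  ∫ y in unitCube n, Real.cos (frequency ξ ⬝ᵥ y) • v y

/-- The sine Fourier coefficient of `v` over the unit cube, without normalizing factor. -/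
def sinCoeff (v : Dom n → V) (ξ : Fin n → ℤ) : V :=
  ∫ y in unitCube n, Real.sin (frequency ξ ⬝ᵥ y) • v y

/-- The term of the real Fourier series of `v` belonging to `ξ`; the series runs over all of `ℤⁿ`,
so that each character occurs twice, for `ξ` and for `-ξ`. -/
def fourierTerm (v : Dom n → V) (ξ : Fin n → ℤ) (x : Dom n) : V :=
  Real.cos (frequency ξ ⬝ᵥ x) • cosCoeff v ξ + Real.sin (frequency ξ ⬝ᵥ x) • sinCoeff v ξ

@[fun_prop]
lemma continuous_fourierTerm (v : Dom n → V) (ξ : Fin n → ℤ) : Continuous (fourierTerm v ξ) := by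
  unfold fourierTerm
  fun_prop

lemma fourierTerm_clm_comp [CompleteSpace V] [CompleteSpace V'] (L : V →L[ℝ] V') {v : Dom n → V}
    (hv : Continuous v) (ξ : Fin n → ℤ) (x : Dom n) :
    fourierTerm (fun y => L (v y)) ξ x = L (fourierTerm v ξ x) := by
  simp only [fourierTerm, cosCoeff, sinCoeff, map_add, map_smul]
  rw [← L.integral_comp_comm (integrableOn_unitCube_of_continuous (by fun_prop)),
    ← L.integral_comp_comm (integrableOn_unitCube_of_continuous (by fun_prop))]
  simp only [map_smul]

end Coefficients

section Torus

/-- The volume for which Mathlib states the Fourier theory of `UnitAddTorus`, through a local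
instance that is not visible outside of its file. -/
local instance measureSpaceUnitAddCircle : MeasureSpace UnitAddCircle := ⟨AddCircle.haarAddCircle⟩

local instance isProbabilityMeasure_unitAddCircle :
    IsProbabilityMeasure (volume : Measure UnitAddCircle) :=
  inferInstanceAs (IsProbabilityMeasure AddCircle.haarAddCircle)

lemma integral_unitAddTorus_eq {E : Type*} [NormedAddCommGroup E] [NormedSpace ℝ E]
    (f : UnitAddTorus (Fin n) → E) :
    ∫ y, f y = ∫ x in unitCube n, f fun i => (x i : UnitAddCircle) := by
  rw [UnitAddTorus.integral_preimage f fun _ => -(1 / 2 : ℝ)]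
  refine setIntegral_congr_set ?_
  have hset : {x : Dom n | ∀ i, x i ∈ Set.Ioc (-(1 / 2 : ℝ)) (-(1 / 2) + 1)} =
      Set.univ.pi fun _ => Set.Ioc (-(1 / 2 : ℝ)) (1 / 2) := by
    ext x
    norm_num [Set.mem_pi]
  rw [hset]
  exact (Measure.univ_pi_Ioc_ae_eq_Icc (μ := fun _ : Fin n => (volume : Measure ℝ))).trans
    (Measure.univ_pi_Ioo_ae_eq_Icc (μ := fun _ : Fin n => (volume : Measure ℝ))).symm

lemma mFourier_coe_eq_exp (ξ : Fin n → ℤ) (x : Dom n) :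
    UnitAddTorus.mFourier ξ (fun i => (x i : UnitAddCircle)) =
      Complex.exp ((frequency ξ ⬝ᵥ x : ℝ) * Complex.I) := by
  simp only [UnitAddTorus.mFourier, ContinuousMap.coe_mk, fourier_coe_apply, dotProduct, frequency]
  rw [← Complex.exp_sum]
  push_cast
  rw [Finset.sum_mul]
  exact congrArg _ (Finset.sum_congr rfl fun i _ => by ring)

lemma ZPeriodic.exists_unitAddTorus_lift {E : Type*} [TopologicalSpace E] {f : Dom n → E}
    (hp : ZPeriodic f) (hf : Continuous f) :
    ∃ F : C(UnitAddTorus (Fin n), E), ∀ x : Dom n, F (fun i => (x i : UnitAddCircle)) = f x := by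
  let π : Dom n → UnitAddTorus (Fin n) := Pi.map fun _ (x : ℝ) => (x : UnitAddCircle)
  have hπ : IsOpenQuotientMap π :=
    IsOpenQuotientMap.piMap fun _ => QuotientAddGroup.isOpenQuotientMap_mk
  have hfac : ∀ x y, π x = π y → f x = f y := fun x y hxy => by
    have hint : ∀ i, ∃ m : ℤ, x i = y i + m := fun i => by
      have hi : (x i : UnitAddCircle) = y i := congr_fun hxy i
      rw [← sub_eq_zero, ← AddCircle.coe_sub, AddCircle.coe_eq_zero_iff] at hi
      obtain ⟨m, hm⟩ := hi
      rw [zsmul_eq_mul, mul_one] at hm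
      exact ⟨m, by linarith⟩
    choose m hm using hint
    rw [show x = y + fun i => (m i : ℝ) from funext hm, hp]
  have hlift (x : Dom n) : f (Function.surjInv hπ.surjective (π x)) = f x :=
    hfac _ x (Function.surjInv_eq hπ.surjective (π x))
  refine ⟨⟨fun y => f (Function.surjInv hπ.surjective y), ?_⟩, hlift⟩
  rw [hπ.isQuotientMap.continuous_iff]
  exact hf.congr fun x => (hlift x).symm

lemma mFourierCoeff_eq_cosCoeff_sub_sinCoeff {f : Dom n → ℝ} (hf : Continuous f)
    {F : UnitAddTorus (Fin n) → ℂ} (hF : ∀ x : Dom n, F (fun i => (x i : UnitAddCircle)) = f x)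
    (ξ : Fin n → ℤ) :
    UnitAddTorus.mFourierCoeff F ξ =
      ((cosCoeff f ξ : ℝ) : ℂ) - ((sinCoeff f ξ : ℝ) : ℂ) * Complex.I := by
  have hcos : IntegrableOn (fun y => ((Real.cos (frequency ξ ⬝ᵥ y) • f y : ℝ) : ℂ)) (unitCube n) :=
    integrableOn_unitCube_of_continuous (by fun_prop)
  have hsin : IntegrableOn
      (fun y => ((Real.sin (frequency ξ ⬝ᵥ y) • f y : ℝ) : ℂ) * Complex.I) (unitCube n) :=
    integrableOn_unitCube_of_continuous (by fun_prop)
  rw [UnitAddTorus.mFourierCoeff, integral_unitAddTorus_eq, cosCoeff, sinCoeff,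
    ← integral_complex_ofReal, ← integral_complex_ofReal, ← integral_mul_const,
    ← integral_sub hcos hsin]
  refine integral_congr_ae (ae_of_all _ fun x => ?_)
  simp only [hF, mFourier_coe_eq_exp, frequency_neg, neg_dotProduct, Complex.ofReal_neg,
    Complex.exp_mul_I, Complex.cos_neg, Complex.sin_neg, smul_eq_mul, Complex.ofReal_mul,
    Complex.ofReal_cos, Complex.ofReal_sin]
  ring

lemma re_mul_mFourier_eq_fourierTerm {f : Dom n → ℝ} (hf : Continuous f)
    {F : UnitAddTorus (Fin n) → ℂ} (hF : ∀ x : Dom n, F (fun i => (x i : UnitAddCircle)) = f x)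
    (ξ : Fin n → ℤ) (x : Dom n) :
    (UnitAddTorus.mFourierCoeff F ξ *
      UnitAddTorus.mFourier ξ (fun i => (x i : UnitAddCircle))).re = fourierTerm f ξ x := by
  rw [mFourierCoeff_eq_cosCoeff_sub_sinCoeff hf hF, mFourier_coe_eq_exp, Complex.exp_mul_I,
    ← Complex.ofReal_cos, ← Complex.ofReal_sin]
  simp [fourierTerm, mul_comm, Complex.cos_ofReal_re, Complex.sin_ofReal_re]

lemma integral_norm_le_norm_toLp_two {X : Type*} [TopologicalSpace X] [CompactSpace X]
    [MeasurableSpace X] [BorelSpace X] {μ : Measure X} [IsProbabilityMeasure μ] (G : C(X, ℂ)) :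
    ∫ y, ‖G y‖ ∂μ ≤ ‖ContinuousMap.toLp 2 μ ℂ G‖ := by
  have hcoe := ContinuousMap.coeFn_toLp μ (𝕜 := ℂ) (p := 2) G
  have hmem : MemLp G 2 μ := (memLp_congr_ae hcoe).1 (Lp.memLp _)
  rw [Lp.norm_def, eLpNorm_congr_ae hcoe, integral_norm_eq_lintegral_enorm hmem.1,
    ← eLpNorm_one_eq_lintegral_enorm]
  exact ENNReal.toReal_mono hmem.2.ne
    (eLpNorm_le_eLpNorm_of_exponent_le (by norm_num) hmem.1)

lemma eventually_integral_norm_sub_mFourier_lt (F : C(UnitAddTorus (Fin n), ℂ)) {δ : ℝ}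
    (hδ : 0 < δ) :
    ∀ᶠ s : Finset (Fin n → ℤ) in atTop,
      ∫ y, ‖F y - ∑ ξ ∈ s, UnitAddTorus.mFourierCoeff F ξ * UnitAddTorus.mFourier ξ y‖ < δ := by
  have hsum : HasSum (fun ξ => UnitAddTorus.mFourierCoeff F ξ • UnitAddTorus.mFourierLp 2 ξ)
      (ContinuousMap.toLp 2 volume ℂ F) := by
    simpa only [UnitAddTorus.mFourierCoeff_toLp] using
      UnitAddTorus.hasSum_mFourier_series_L2 (ContinuousMap.toLp 2 volume ℂ F)
  filter_upwards [Metric.tendsto_nhds.1 hsum δ hδ] with s hs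
  rw [dist_comm, dist_eq_norm] at hs
  have htoLp : ContinuousMap.toLp 2 (volume : Measure (UnitAddTorus (Fin n))) ℂ
      (F - ∑ ξ ∈ s, UnitAddTorus.mFourierCoeff F ξ • UnitAddTorus.mFourier ξ) =
      ContinuousMap.toLp 2 volume ℂ F -
        ∑ ξ ∈ s, UnitAddTorus.mFourierCoeff F ξ • UnitAddTorus.mFourierLp 2 ξ := by
    rw [map_sub, map_sum]
    rfl
  rw [← htoLp] at hs
  simpa [ContinuousMap.sum_apply] using (integral_norm_le_norm_toLp_two _).trans_lt hs

lemma eventually_setIntegral_abs_sub_fourierTerm_lt {f : Dom n → ℝ} (hf : Continuous f)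
    (hp : ZPeriodic f) {δ : ℝ} (hδ : 0 < δ) :
    ∀ᶠ s : Finset (Fin n → ℤ) in atTop,
      ∫ x in unitCube n, |f x - ∑ ξ ∈ s, fourierTerm f ξ x| < δ := by
  have hpc : ZPeriodic fun x => (f x : ℂ) := fun x m => congrArg Complex.ofReal (hp x m)
  obtain ⟨F, hF⟩ := hpc.exists_unitAddTorus_lift (Complex.continuous_ofReal.comp hf)
  filter_upwards [eventually_integral_norm_sub_mFourier_lt F hδ] with s hs
  rw [integral_unitAddTorus_eq] at hs
  refine (integral_mono (integrableOn_unitCube_of_continuous (by fun_prop))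
    (integrableOn_unitCube_of_continuous ?_) fun x => ?_).trans_lt hs
  · have : Continuous fun x : Dom n => fun i => (x i : UnitAddCircle) :=
      continuous_pi fun i => (AddCircle.continuous_mk' 1).comp (continuous_apply i)
    fun_prop
  · refine le_trans (le_of_eq ?_) (Complex.abs_re_le_norm _)
    simp only [hF, Complex.sub_re, Complex.ofReal_re, Complex.re_sum,
      re_mul_mFourier_eq_fourierTerm hf hF]

end Torus

section VectorValued

variable {V : Type*} [NormedAddCommGroup V] [InnerProductSpace ℝ V]

lemma norm_le_sum_abs_inner {ι : Type*} [Fintype ι] (e : OrthonormalBasis ι ℝ V) (w : V) :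
    ‖w‖ ≤ ∑ i, |inner ℝ (e i) w| := by
  conv_lhs => rw [← e.sum_repr' w]
  refine (norm_sum_le _ _).trans (Finset.sum_le_sum fun i _ => ?_)
  rw [norm_smul, e.orthonormal.1 i, mul_one, Real.norm_eq_abs]

lemma exists_setIntegral_norm_sub_fourierTerm_le [FiniteDimensional ℝ V] {v : Dom n → V}
    (hv : Continuous v) (hp : ZPeriodic v) {δ : ℝ} (hδ : 0 < δ) :
    ∃ s : Finset (Fin n → ℤ), ∫ x in unitCube n, ‖v x - ∑ ξ ∈ s, fourierTerm v ξ x‖ ≤ δ := by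
  let e := stdOrthonormalBasis ℝ V
  set N : ℝ := ((Module.finrank ℝ V : ℕ) : ℝ)
  have hδN : 0 < δ / (N + 1) := by positivity
  obtain ⟨s, hs⟩ := (eventually_all.2 fun i => eventually_setIntegral_abs_sub_fourierTerm_lt
    (f := fun x => inner ℝ (e i) (v x)) (by fun_prop) (fun x m => by simp only [hp x m])
    hδN).exists
  have hcoord (i) (x : Dom n) : inner ℝ (e i) (v x - ∑ ξ ∈ s, fourierTerm v ξ x) =
      inner ℝ (e i) (v x) - ∑ ξ ∈ s, fourierTerm (fun y => inner ℝ (e i) (v y)) ξ x := by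
    rw [inner_sub_right, inner_sum]
    exact congrArg _ (Finset.sum_congr rfl fun ξ _ =>
      (fourierTerm_clm_comp (innerSL ℝ (e i)) hv ξ x).symm)
  refine ⟨s, ?_⟩
  calc ∫ x in unitCube n, ‖v x - ∑ ξ ∈ s, fourierTerm v ξ x‖
      ≤ ∫ x in unitCube n, ∑ i, |inner ℝ (e i) (v x - ∑ ξ ∈ s, fourierTerm v ξ x)| :=
        integral_mono (integrableOn_unitCube_of_continuous (by fun_prop))
          (integrableOn_unitCube_of_continuous (by fun_prop)) fun x => norm_le_sum_abs_inner e _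
    _ = ∑ i, ∫ x in unitCube n, |inner ℝ (e i) (v x - ∑ ξ ∈ s, fourierTerm v ξ x)| :=
        integral_finsetSum _ fun i _ => integrableOn_unitCube_of_continuous (by fun_prop)
    _ ≤ ∑ _i : Fin (Module.finrank ℝ V), δ / (N + 1) :=
        Finset.sum_le_sum fun i _ => by simpa only [hcoord] using (hs i).le
    _ ≤ δ := by
        rw [Finset.sum_const, Finset.card_univ, Fintype.card_fin, nsmul_eq_mul, mul_div_assoc',
          div_le_iff₀ (by positivity)]
        nlinarith [hδ]

end VectorValued

end Fourier

/-! ### Potentials of periodic fields in the kernel of `A` -/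

section IntegrationByParts

lemma ZPeriodic.apply_insertNth_half {n : ℕ} {E : Type*} {F : Dom (n + 1) → E}
    (hp : ZPeriodic F) (j : Fin (n + 1)) (y : Dom n) :
    F (j.insertNth (1 / 2 : ℝ) y) = F (j.insertNth (-(1 / 2) : ℝ) y) := by
  rw [← hp (j.insertNth (-(1 / 2) : ℝ) y) (Pi.single j 1)]
  congr 1
  ext m
  refine Fin.succAboveCases j ?_ (fun m => ?_) m
  · norm_num [Fin.insertNth_apply_same]
  · simp

variable {n : ℕ} {V : Type*} [NormedAddCommGroup V] [NormedSpace ℝ V]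

protected lemma ZPeriodic.pderivDir {F : Dom n → V} (hp : ZPeriodic F) (j : Fin n) :
    ZPeriodic (pderivDir j F) := fun x m => by
  simp only [pderivDir]
  rw [← fderiv_comp_add_right, show (fun y => F (y + fun i => (m i : ℝ))) = F from
    funext fun y => hp y m]

lemma closedUnitCube_ae_eq_unitCube : closedUnitCube n =ᵐ[volume] unitCube n := by
  have hIcc : closedUnitCube n = Set.Icc (fun _ => -(1 / 2 : ℝ)) fun _ => 1 / 2 :=
    Set.pi_univ_Icc _ _
  rw [hIcc]
  exact (Measure.univ_pi_Ioo_ae_eq_Icc (μ := fun _ : Fin n => (volume : Measure ℝ))).symm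

lemma ZPeriodic.integral_pderivDir_eq_zero {F : Dom n → V} (hp : ZPeriodic F)
    (hF : ContDiff ℝ ∞ F) (j : Fin n) : ∫ x in unitCube n, pderivDir j F x = 0 := by
  rw [← setIntegral_congr_set closedUnitCube_ae_eq_unitCube]
  cases n with
  | zero => exact j.elim0
  | succ n =>
    have hdiv (x : Dom (n + 1)) :
        ∑ i, (if i = j then fderiv ℝ F x else 0) (Pi.single i 1) = pderivDir j F x := by
      rw [Finset.sum_eq_single j (fun i _ hi => by simp [hi]) (by simp)]
      simp [pderivDir]
    have hcont : Continuous (pderivDir j F) := (contDiff_pderivDir j hF).continuous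
    have hgauss := integral_divergence_of_hasFDerivAt_off_countable'
      (fun _ : Fin (n + 1) => -(1 / 2 : ℝ)) (fun _ => 1 / 2) (fun i => by norm_num)
      (fun i => if i = j then F else 0) (fun i x => if i = j then fderiv ℝ F x else 0)
      ∅ Set.countable_empty
      (fun i => by split_ifs <;> [exact hF.continuous.continuousOn; exact continuousOn_const])
      (fun x _ i => by
        split_ifs
        · exact (hF.differentiable (by simp) x).hasFDerivAt
        · exact hasFDerivAt_const _ _)
      (by simpa only [hdiv] using hcont.continuousOn.integrableOn_compact isCompact_Icc)
    simp only [hdiv] at hgauss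
    rw [show closedUnitCube (n + 1) = Set.Icc (fun _ => -(1 / 2 : ℝ)) fun _ => 1 / 2 from
      Set.pi_univ_Icc _ _, hgauss]
    refine Finset.sum_eq_zero fun i _ => sub_eq_zero.2 (integral_congr_ae (ae_of_all _ fun y => ?_))
    split_ifs with hij
    · exact hij ▸ hp.apply_insertNth_half i y
    · rfl

lemma hasFDerivAt_comp_dotProduct {h : ℝ → ℝ} {h' : ℝ} (ζ x : Dom n)
    (hh : HasDerivAt h h' (ζ ⬝ᵥ x)) :
    HasFDerivAt (fun x : Dom n => h (ζ ⬝ᵥ x))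
      (h' • ∑ i, ζ i • (ContinuousLinearMap.proj i : Dom n →L[ℝ] ℝ)) x := by
  refine hh.comp_hasFDerivAt x ?_
  refine (∑ i, ζ i • (ContinuousLinearMap.proj i : Dom n →L[ℝ] ℝ)).hasFDerivAt.congr_of_eventuallyEq
    (Eventually.of_forall fun y => ?_)
  simp [dotProduct]

lemma pderivDir_planeWave_smul {h h' : ℝ → ℝ} (hh : ∀ s, HasDerivAt h (h' s) s) (ζ : Dom n)
    {f : Dom n → V} (hf : ContDiff ℝ ∞ f) (j : Fin n) (x : Dom n) :
    pderivDir j (fun x => h (ζ ⬝ᵥ x) • f x) x =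
      h (ζ ⬝ᵥ x) • pderivDir j f x + ζ j • h' (ζ ⬝ᵥ x) • f x := by
  have hd := (hasFDerivAt_comp_dotProduct ζ x (hh _)).smul
    (hf.differentiable (by simp) x).hasFDerivAt
  change fderiv ℝ ((fun x => h (ζ ⬝ᵥ x)) • f) x (Pi.single j 1) = _
  rw [hd.fderiv]
  simp [pderivDir, Pi.single_apply, smul_smul, mul_comm]

lemma setIntegral_planeWave_smul_mderiv {h : ℕ → ℝ → ℝ}
    (hh : ∀ m s, HasDerivAt (h m) (h (m + 1) s) s) (hs : ∀ m, ContDiff ℝ ∞ (h m)) {ζ : Dom n}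
    (hper : ∀ m, ZPeriodic fun x : Dom n => h m (ζ ⬝ᵥ x)) {v : Dom n → V}
    (hv : ContDiff ℝ ∞ v) (hp : ZPeriodic v) (α : Fin n → ℕ) (q : ℕ) :
    ∫ x in unitCube n, h q (ζ ⬝ᵥ x) • mderiv α v x =
      ((-1) ^ (∑ i, α i) * ∏ i, ζ i ^ α i) •
        ∫ x in unitCube n, h (q + ∑ i, α i) (ζ ⬝ᵥ x) • v x := by
  have hwave (m : ℕ) : ContDiff ℝ ∞ fun x : Dom n => h m (ζ ⬝ᵥ x) :=
    (hs m).comp (contDiff_dotProduct_const ζ)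
  suffices hind : ContDiff ℝ ∞ (mderiv α v) ∧ ZPeriodic (mderiv α v) ∧
      ∀ q, ∫ x in unitCube n, h q (ζ ⬝ᵥ x) • mderiv α v x =
        ((-1) ^ (∑ i, α i) * ∏ i, ζ i ^ α i) •
          ∫ x in unitCube n, h (q + ∑ i, α i) (ζ ⬝ᵥ x) • v x from hind.2.2 q
  refine mderiv_induction (fun β f => ContDiff ℝ ∞ f ∧ ZPeriodic f ∧
    ∀ q, ∫ x in unitCube n, h q (ζ ⬝ᵥ x) • f x = ((-1) ^ (∑ i, β i) * ∏ i, ζ i ^ β i) •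
      ∫ x in unitCube n, h (q + ∑ i, β i) (ζ ⬝ᵥ x) • v x) ?_ α ⟨hv, hp, fun q => by simp⟩
  rintro β f j ⟨hf, hfp, hparts⟩
  refine ⟨contDiff_pderivDir j hf, hfp.pderivDir j, fun q => ?_⟩
  have hzero := ZPeriodic.integral_pderivDir_eq_zero (F := fun x => h q (ζ ⬝ᵥ x) • f x)
    (fun x m => congrArg₂ (· • ·) (hper q x m) (hfp x m)) ((hwave q).smul hf) j
  have hint₁ : IntegrableOn (fun x : Dom n => h q (ζ ⬝ᵥ x) • pderivDir j f x) (unitCube n) :=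
    integrableOn_unitCube_of_continuous
      ((hwave q).continuous.smul (contDiff_pderivDir j hf).continuous)
  have hint₂ : IntegrableOn (fun x : Dom n => ζ j • h (q + 1) (ζ ⬝ᵥ x) • f x) (unitCube n) :=
    integrableOn_unitCube_of_continuous
      (((hwave (q + 1)).continuous.smul hf.continuous).const_smul (ζ j))
  simp only [pderivDir_planeWave_smul (hh q) ζ hf j] at hzero
  rw [integral_add hint₁ hint₂, integral_smul, hparts (q + 1)] at hzero
  rw [eq_neg_of_add_eq_zero_left hzero, smul_smul, ← neg_smul, sum_add_single_one,
    prod_pow_add_single_one, show q + 1 + ∑ i, β i = q + (∑ i, β i + 1) by ring]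
  congr 1
  ring

end IntegrationByParts

section ShiftedCosine

/-- The `m`-th derivative of `s ↦ cos (s + φ)`. -/
def shiftedCos (φ : ℝ) (m : ℕ) (s : ℝ) : ℝ := Real.cos (s + φ + m * (Real.pi / 2))

lemma hasDerivAt_shiftedCos (φ : ℝ) (m : ℕ) (s : ℝ) :
    HasDerivAt (shiftedCos φ m) (shiftedCos φ (m + 1) s) s := by
  have hsucc : shiftedCos φ (m + 1) s = -Real.sin (s + φ + m * (Real.pi / 2)) * 1 := by
    rw [mul_one, ← Real.cos_add_pi_div_two, shiftedCos]
    push_cast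
    ring_nf
  rw [hsucc]
  exact (Real.hasDerivAt_cos _).comp s (((hasDerivAt_id s).add_const φ).add_const _)

lemma contDiff_shiftedCos (φ : ℝ) (m : ℕ) : ContDiff ℝ ∞ (shiftedCos φ m) := by
  unfold shiftedCos
  fun_prop

lemma zPeriodic_shiftedCos {n : ℕ} (φ : ℝ) (m : ℕ) (ξ : Fin n → ℤ) :
    ZPeriodic fun x : Dom n => shiftedCos φ m (frequency ξ ⬝ᵥ x) := fun x p => by
  simp only [shiftedCos, frequency_dotProduct_add_int]
  rw [add_right_comm _ _ φ, add_right_comm, Real.cos_add_int_mul_two_pi]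

lemma shiftedCos_eq_cos (k : ℕ) (s : ℝ) : shiftedCos (-(k * (Real.pi / 2))) k s = Real.cos s := by
  simp [shiftedCos]

lemma shiftedCos_eq_sin (k : ℕ) (s : ℝ) :
    shiftedCos (-(k * (Real.pi / 2)) - Real.pi / 2) k s = Real.sin s := by
  rw [shiftedCos, ← Real.cos_sub_pi_div_two]
  ring_nf

end ShiftedCosine

section FourierCoefficients

variable {n : ℕ} {V W : Type*} [NormedAddCommGroup V] [NormedSpace ℝ V] [CompleteSpace V]
  [NormedAddCommGroup W] [NormedSpace ℝ W]

/- Integrals in `W` have the junk value `0` unless `W` is complete; hence the identity is tested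
against continuous functionals. -/
lemma sum_clm_integral_eq_zero {ι X : Type*} [MeasurableSpace X] {μ : Measure X} (s : Finset ι)
    (A : ι → V →L[ℝ] W) {g : ι → X → V} (hg : ∀ i, Integrable (g i) μ)
    (hA : ∀ x, ∑ i ∈ s, A i (g i x) = 0) : ∑ i ∈ s, A i (∫ x, g i x ∂μ) = 0 := by
  refine SeparatingDual.eq_zero_of_forall_dual_eq_zero (R := ℝ) fun f => ?_
  calc f (∑ i ∈ s, A i (∫ x, g i x ∂μ))
      = ∑ i ∈ s, ∫ x, f (A i (g i x)) ∂μ := by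
        rw [map_sum]
        exact Finset.sum_congr rfl fun i _ => ((f.comp (A i)).integral_comp_comm (hg i)).symm
    _ = ∫ x, f (∑ i ∈ s, A i (g i x)) ∂μ := by
        simp only [map_sum]
        exact (integral_finsetSum _ fun i _ => (f.comp (A i)).integrable_comp (hg i)).symm
    _ = 0 := by simp [hA]

variable {A : (Fin n → ℕ) → (V →L[ℝ] W)} {k : ℕ} {v : Dom n → V}

lemma opSymbol_integral_shiftedCos_eq_zero (hv : ContDiff ℝ ∞ v) (hp : ZPeriodic v)
    (hA : ∀ x, opApply A k v x = 0) (ξ : Fin n → ℤ) (φ : ℝ) :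
    opSymbol A k (frequency ξ)
      (∫ x in unitCube n, shiftedCos φ k (frequency ξ ⬝ᵥ x) • v x) = 0 := by
  have hcont : Continuous fun x : Dom n => shiftedCos φ 0 (frequency ξ ⬝ᵥ x) :=
    (contDiff_shiftedCos φ 0).continuous.comp (continuous_dotProduct_const _)
  have htest : ∑ α ∈ degSet n k,
      A α (∫ x in unitCube n, shiftedCos φ 0 (frequency ξ ⬝ᵥ x) • mderiv α v x) = 0 :=
    sum_clm_integral_eq_zero _ A
      (fun α => integrableOn_unitCube_of_continuous (hcont.smul (contDiff_mderiv α hv).continuous))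
      fun x => by
        simp only [map_smul, ← Finset.smul_sum]
        exact smul_eq_zero_of_right _ (hA x)
  have hparts : ∑ α ∈ degSet n k,
      A α (∫ x in unitCube n, shiftedCos φ 0 (frequency ξ ⬝ᵥ x) • mderiv α v x) =
      (-1 : ℝ) ^ k • opSymbol A k (frequency ξ)
        (∫ x in unitCube n, shiftedCos φ k (frequency ξ ⬝ᵥ x) • v x) := by
    rw [opSymbol, sum_apply, Finset.smul_sum]
    refine Finset.sum_congr rfl fun α hα => ?_
    rw [setIntegral_planeWave_smul_mderiv (hasDerivAt_shiftedCos φ) (contDiff_shiftedCos φ)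
      (fun m => zPeriodic_shiftedCos φ m ξ) hv hp, sum_eq_of_mem_degSet hα, map_smul,
      smul_apply, smul_smul, zero_add]
  exact (smul_eq_zero.1 (hparts.symm.trans htest)).resolve_left (by simp)

lemma opSymbol_cosCoeff_eq_zero (hv : ContDiff ℝ ∞ v) (hp : ZPeriodic v)
    (hA : ∀ x, opApply A k v x = 0) (ξ : Fin n → ℤ) :
    opSymbol A k (frequency ξ) (cosCoeff v ξ) = 0 := by
  simpa only [cosCoeff, shiftedCos_eq_cos] using
    opSymbol_integral_shiftedCos_eq_zero hv hp hA ξ (-(k * (Real.pi / 2)))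

lemma opSymbol_sinCoeff_eq_zero (hv : ContDiff ℝ ∞ v) (hp : ZPeriodic v)
    (hA : ∀ x, opApply A k v x = 0) (ξ : Fin n → ℤ) :
    opSymbol A k (frequency ξ) (sinCoeff v ξ) = 0 := by
  simpa only [sinCoeff, shiftedCos_eq_sin] using
    opSymbol_integral_shiftedCos_eq_zero hv hp hA ξ (-(k * (Real.pi / 2)) - Real.pi / 2)

end FourierCoefficients

section Potentials

variable {n k l : ℕ} {U W : Type*} [NormedAddCommGroup U] [NormedSpace ℝ U]
  [NormedAddCommGroup W] [NormedSpace ℝ W]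

section Normed

variable {V : Type*} [NormedAddCommGroup V] [NormedSpace ℝ V]
  {A : (Fin n → ℕ) → (V →L[ℝ] W)} {B : (Fin n → ℕ) → (U →L[ℝ] V)}

lemma ExactPotential.exists_opApply_eq_shiftedCos (hex : ExactPotential A k B l) {ξ : Fin n → ℤ}
    (hξ : ξ ≠ 0) {a : V} (ha : opSymbol A k (frequency ξ) a = 0) (φ : ℝ) :
    ∃ u : Dom n → U, ContDiff ℝ ∞ u ∧ ZPeriodic u ∧
      ∀ x, opApply B l u x = shiftedCos φ l (frequency ξ ⬝ᵥ x) • a := by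
  have hker : a ∈ LinearMap.ker (opSymbol A k (frequency ξ) : V →ₗ[ℝ] W) := ha
  rw [hex _ (frequency_ne_zero hξ)] at hker
  obtain ⟨b, rfl⟩ := hker
  exact ⟨fun x => shiftedCos φ 0 (frequency ξ ⬝ᵥ x) • b,
    ((contDiff_shiftedCos φ 0).comp (contDiff_dotProduct_const _)).smul contDiff_const,
    fun x m => congrArg (· • b) (zPeriodic_shiftedCos φ 0 ξ x m),
    opApply_planeWave B l (shiftedCos φ) (hasDerivAt_shiftedCos φ) (frequency ξ) b⟩

lemma ExactPotential.exists_opApply_eq_fourierTerm [CompleteSpace V]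
    (hex : ExactPotential A k B l) {v : Dom n → V} (hv : ContDiff ℝ ∞ v) (hp : ZPeriodic v)
    (hmean : ∫ x in unitCube n, v x = 0) (hA : ∀ x, opApply A k v x = 0) (ξ : Fin n → ℤ) :
    ∃ u : Dom n → U, ContDiff ℝ ∞ u ∧ ZPeriodic u ∧ ∀ x, opApply B l u x = fourierTerm v ξ x := by
  rcases eq_or_ne ξ 0 with rfl | hξ
  · refine ⟨fun _ => 0, contDiff_const, fun _ _ => rfl, fun x => ?_⟩
    have hfreq : frequency (0 : Fin n → ℤ) = 0 := by
      ext i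
      simp [frequency]
    simp [fourierTerm, cosCoeff, hfreq, hmean, opApply_zero]
  · obtain ⟨u₁, hu₁, hp₁, he₁⟩ := hex.exists_opApply_eq_shiftedCos hξ
      (opSymbol_cosCoeff_eq_zero hv hp hA ξ) (-(l * (Real.pi / 2)))
    obtain ⟨u₂, hu₂, hp₂, he₂⟩ := hex.exists_opApply_eq_shiftedCos hξ
      (opSymbol_sinCoeff_eq_zero hv hp hA ξ) (-(l * (Real.pi / 2)) - Real.pi / 2)
    refine ⟨fun x => u₁ x + u₂ x, hu₁.add hu₂,
      fun x m => congrArg₂ (· + ·) (hp₁ x m) (hp₂ x m), fun x => ?_⟩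
    rw [opApply_add B l hu₁ hu₂, he₁, he₂, shiftedCos_eq_cos, shiftedCos_eq_sin, fourierTerm]

end Normed

variable {V : Type*} [NormedAddCommGroup V] [InnerProductSpace ℝ V] [FiniteDimensional ℝ V]
  {A : (Fin n → ℕ) → (V →L[ℝ] W)} {B : (Fin n → ℕ) → (U →L[ℝ] V)}

lemma ExactPotential.exists_zPeriodic_setIntegral_norm_sub_le (hex : ExactPotential A k B l)
    {v : Dom n → V} (hv : ContDiff ℝ ∞ v) (hp : ZPeriodic v)
    (hmean : ∫ x in unitCube n, v x = 0) (hA : ∀ x, opApply A k v x = 0) {δ : ℝ} (hδ : 0 < δ) :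
    ∃ u : Dom n → U, ContDiff ℝ ∞ u ∧ ZPeriodic u ∧
      ∫ x in unitCube n, ‖v x - opApply B l u x‖ ≤ δ := by
  obtain ⟨s, hs⟩ := exists_setIntegral_norm_sub_fourierTerm_le hv.continuous hp hδ
  choose u hu hup hueq using hex.exists_opApply_eq_fourierTerm hv hp hmean hA
  refine ⟨fun x => ∑ ξ ∈ s, u ξ x, ContDiff.sum fun ξ _ => hu ξ,
    fun x m => Finset.sum_congr rfl fun ξ _ => hup ξ x m, ?_⟩
  simpa only [opApply_sum B l s fun ξ _ => hu ξ, hueq] using hs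

theorem aQuasiconvex_potEnv (hex : ExactPotential A k B l) {K : NNReal} {Φ : V → ℝ}
    (hΦ : LipschitzWith K Φ) {z₀ : V} (hbdd : EnergyBddBelow B l Φ z₀) :
    AQuasiconvex A k (potEnv B l Φ) := by
  have henv := lipschitzWith_potEnv hΦ hbdd
  refine ⟨henv.continuous, fun z v hv hp hmean hA => le_of_forall_pos_le_add fun ε hε => ?_⟩
  obtain ⟨u, hu, hup, hclose⟩ := hex.exists_zPeriodic_setIntegral_norm_sub_le hv hp hmean hA
    (show 0 < ε / (K + 1) by positivity)
  have hjensen := potEnv_le_setIntegral_of_zPeriodic hΦ hbdd z hu hup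
  have hdiff := (abs_le.1 (abs_integral_comp_sub_le henv
    (f := fun x => z + v x) (g := fun x => z + opApply B l u x)
    (integrableOn_unitCube_of_continuous (continuous_const.add hv.continuous))
    (integrableOn_unitCube_of_continuous
      (continuous_const.add (contDiff_opApply B l hu).continuous)))).1
  simp only [add_sub_add_left_eq_sub] at hdiff
  have hsmall : (K : ℝ) * ∫ x in unitCube n, ‖v x - opApply B l u x‖ ≤ ε :=
    calc (K : ℝ) * ∫ x in unitCube n, ‖v x - opApply B l u x‖
        ≤ K * (ε / (K + 1)) := by gcongr
      _ ≤ ε := by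
          rw [mul_div_assoc', div_le_iff₀ (by positivity)]
          nlinarith [hε]
  linarith

end Potentials

/-! ### Simultaneous energies -/

section Tiling

variable {n : ℕ} {U V : Type*} [NormedAddCommGroup U] [NormedSpace ℝ U]
  [NormedAddCommGroup V] [NormedSpace ℝ V] {B : (Fin n → ℕ) → (U →L[ℝ] V)} {l : ℕ}
  {K : NNReal} {Φ : V → ℝ} {u : (Fin n → ℤ) → Dom n → U}

lemma CcSmooth.integrableOn_comp_add_opApply (hΦ : LipschitzWith K Φ) (a : V) {w : Dom n → U}
    (hw : CcSmooth (unitCube n) w) :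
    IntegrableOn (fun x => Φ (a + opApply B l w x)) (unitCube n) :=
  integrable_comp_of_lipschitzWith (f := fun x => a + opApply B l w x) hΦ
    ((integrable_const a).add (hw.integrable_opApply B l).integrableOn)

lemma ccSmooth_pasteCells_subdivision (l m : ℕ) (hu : ∀ k, CcSmooth (unitCube n) (u k)) :
    CcSmooth (unitCube n) (pasteCells l (2 * m + 1) (subdivision n m) u) :=
  ccSmooth_pasteCells l (by positivity) (fun k _ => hu k) fun _ hk => cell_subset_unitCube hk

lemma cubeEnergy_pasteCells_subdivision (hΦ : LipschitzWith K Φ) (a : V) (m : ℕ)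
    (hu : ∀ k, CcSmooth (unitCube n) (u k)) :
    cubeEnergy B l Φ a (pasteCells l (2 * m + 1) (subdivision n m) u) =
      ∑ k ∈ subdivision n m, ((2 * m + 1 : ℝ) ^ n)⁻¹ * cubeEnergy B l Φ a (u k) := by
  rw [cubeEnergy, setIntegral_unitCube_eq_sum m
    ((ccSmooth_pasteCells_subdivision l m hu).integrableOn_comp_add_opApply hΦ a)]
  exact Finset.sum_congr rfl fun k hk =>
    setIntegral_cell_comp_pasteCells B l Φ (by positivity) (fun k _ => hu k) hk a

lemma CcSmooth.exists_sobNorm_lt_cubeEnergy_eq (B : (Fin n → ℕ) → (U →L[ℝ] V)) (l : ℕ)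
    {w : Dom n → U} (hw : CcSmooth (unitCube n) w) {ε : ℝ} (hε : 0 < ε) :
    ∃ w' : Dom n → U, CcSmooth (unitCube n) w' ∧ sobNorm l w' < ε ∧
      ∀ {K : NNReal} {Φ : V → ℝ} (a : V), LipschitzWith K Φ →
        cubeEnergy B l Φ a w' = cubeEnergy B l Φ a w := by
  obtain ⟨m, hm⟩ := exists_nat_gt (sobNorm l w / ε)
  have hM : (0 : ℝ) < 2 * m + 1 := by positivity
  refine ⟨pasteCells l (2 * m + 1) (subdivision n m) fun _ => w,
    ccSmooth_pasteCells_subdivision l m fun _ => hw, ?_, fun a hΦ => ?_⟩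
  · refine (sobNorm_pasteCells_le l (by linarith [m.cast_nonneg (α := ℝ)])
      fun _ _ => hw).trans_lt ?_
    rw [sum_subdivision_const, inv_mul_lt_iff₀ hM]
    rw [div_lt_iff₀ hε] at hm
    nlinarith [m.cast_nonneg (α := ℝ)]
  · rw [cubeEnergy_pasteCells_subdivision hΦ a m fun _ => hw, sum_subdivision_const]

end Tiling

section Separation

variable {ι : Type*} [Fintype ι]

lemma exists_mem_closedBall_dotProduct_eq (c P : ι → ℝ) {r : ℝ} (hr : 0 ≤ r) :
    ∃ q ∈ Metric.closedBall P r, c ⬝ᵥ q = c ⬝ᵥ P + r * ∑ i, |c i| := by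
  refine ⟨fun i => P i + r * SignType.sign (c i), ?_, ?_⟩
  · rw [Metric.mem_closedBall, dist_pi_le_iff hr]
    intro i
    have hsign : |((SignType.sign (c i) : SignType) : ℝ)| ≤ 1 := by
      rcases SignType.sign (c i) <;> simp
    rw [Real.dist_eq, add_sub_cancel_left, abs_mul, abs_of_nonneg hr]
    exact mul_le_of_le_one_right hr hsign
  · simp only [dotProduct, Finset.mul_sum, ← Finset.sum_add_distrib, ← self_mul_sign]
    exact Finset.sum_congr rfl fun i _ => by ring

lemma exists_mem_closure_mem_closedBall_of_forall_le {S : Set (ι → ℝ)}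
    (hS : Convex ℝ (closure S)) (P : ι → ℝ) {r : ℝ} (hr : 0 ≤ r)
    (hsupp : ∀ (c : ι → ℝ) (t : ℝ), (∀ s ∈ S, t ≤ c ⬝ᵥ s) → t ≤ c ⬝ᵥ P + r * ∑ i, |c i|) :
    ∃ q ∈ closure S, q ∈ Metric.closedBall P r := by
  classical
  by_contra! hdisj
  obtain ⟨f, s, t, hball, hst, hclosure⟩ := geometric_hahn_banach_compact_closed
    (convex_closedBall P r) (isCompact_closedBall P r) hS isClosed_closure
    (Set.disjoint_right.2 hdisj)
  let c : ι → ℝ := fun i => f (Pi.single i 1)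
  have hf (x : ι → ℝ) : f x = c ⬝ᵥ x := by
    conv_lhs => rw [pi_eq_sum_univ' x]
    simp only [map_sum, map_smul, smul_eq_mul, dotProduct, c]
    exact Finset.sum_congr rfl fun i _ => mul_comm _ _
  obtain ⟨q, hq, hcq⟩ := exists_mem_closedBall_dotProduct_eq c P hr
  have hle := hsupp c t fun x hx => (hf x ▸ hclosure x (subset_closure hx)).le
  have hlt := hball q hq
  rw [hf, hcq] at hlt
  linarith

end Separation

section Achievable

variable {n : ℕ} {U V : Type*} [NormedAddCommGroup U] [NormedSpace ℝ U]
  [NormedAddCommGroup V] [NormedSpace ℝ V] {B : (Fin n → ℕ) → (U →L[ℝ] V)} {l : ℕ}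
  {ι : Type*} {K : NNReal} {Φ : ι → V → ℝ}

/-- The vectors of energies of the integrands `Φ i` at `a` that are attained simultaneously by one
test field on the unit cube. -/
def achievableSet (B : (Fin n → ℕ) → (U →L[ℝ] V)) (l : ℕ) (Φ : ι → V → ℝ) (a : V) :
    Set (ι → ℝ) :=
  {s | ∃ u : Dom n → U, CcSmooth (unitCube n) u ∧ s = fun i => cubeEnergy B l (Φ i) a u}

lemma smul_add_smul_mem_achievableSet (hΦ : ∀ i, LipschitzWith K (Φ i)) {a : V} {s₁ s₂ : ι → ℝ}
    (hs₁ : s₁ ∈ achievableSet B l Φ a) (hs₂ : s₂ ∈ achievableSet B l Φ a) {m j : ℕ}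
    (hj : j ≤ (2 * m + 1) ^ n) :
    ((j : ℝ) / ((2 * m + 1) ^ n : ℕ)) • s₁ + (1 - (j : ℝ) / ((2 * m + 1) ^ n : ℕ)) • s₂ ∈
      achievableSet B l Φ a := by
  classical
  obtain ⟨u₁, hu₁, rfl⟩ := hs₁
  obtain ⟨u₂, hu₂, rfl⟩ := hs₂
  obtain ⟨G, hG, hGcard⟩ := Finset.exists_subset_card_eq
    (s := subdivision n m) (n := j) (by rwa [card_subdivision])
  have hu (k) : CcSmooth (unitCube n) (if k ∈ G then u₁ else u₂) := by split_ifs <;> assumption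
  refine ⟨_, ccSmooth_pasteCells_subdivision l m hu, funext fun i => ?_⟩
  have hsplit (k) : cubeEnergy B l (Φ i) a (if k ∈ G then u₁ else u₂) =
      if k ∈ G then cubeEnergy B l (Φ i) a u₁ else cubeEnergy B l (Φ i) a u₂ := by split_ifs <;> rfl
  have hN : ((2 * m + 1 : ℝ) ^ n) ≠ 0 := by positivity
  rw [cubeEnergy_pasteCells_subdivision (hΦ i) a m hu, ← Finset.mul_sum]
  simp only [hsplit, Finset.sum_ite, Finset.sum_const, nsmul_eq_mul,
    Finset.filter_mem_eq_inter, Finset.inter_eq_right.2 hG, Finset.filter_notMem_eq_sdiff,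
    Finset.card_sdiff_of_subset hG, hGcard, card_subdivision, Nat.cast_sub hj, Pi.add_apply,
    Pi.smul_apply, smul_eq_mul]
  push_cast
  field_simp

lemma convex_closure_achievableSet (hn : 0 < n) (hΦ : ∀ i, LipschitzWith K (Φ i)) (a : V) :
    Convex ℝ (closure (achievableSet B l Φ a)) := by
  intro x hx y hy θ θ' hθ hθ' hsum
  rw [← closure_closure]
  refine map_mem_closure₂ (f := fun x y : ι → ℝ => θ • x + θ' • y) (by fun_prop) hx hy ?_
  intro s₁ hs₁ s₂ hs₂
  obtain rfl : θ' = 1 - θ := by linarith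
  let N : ℕ → ℕ := fun m => (2 * m + 1) ^ n
  have hN : Tendsto (fun m => (N m : ℝ)) atTop atTop := by
    refine tendsto_atTop_mono (f := fun m : ℕ => (m : ℝ)) (fun m => ?_) tendsto_natCast_atTop_atTop
    exact_mod_cast (by omega : m ≤ 2 * m + 1).trans (Nat.le_self_pow hn.ne' _)
  have hlim : Tendsto (fun m => (⌊θ * N m⌋₊ : ℝ) / N m) atTop (𝓝 θ) :=
    (tendsto_nat_floor_mul_div_atTop hθ).comp hN
  refine mem_closure_of_tendsto
    ((hlim.smul_const s₁).add ((tendsto_const_nhds.sub hlim).smul_const s₂))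
    (Eventually.of_forall fun m => smul_add_smul_mem_achievableSet hΦ hs₁ hs₂ ?_)
  exact Nat.floor_le_of_le (mul_le_of_le_one_left (Nat.cast_nonneg _) (by linarith))

lemma cubeEnergy_sum [Fintype ι] (hΦ : ∀ i, LipschitzWith K (Φ i)) (c : ι → ℝ) (a : V)
    {u : Dom n → U} (hu : CcSmooth (unitCube n) u) :
    cubeEnergy B l (fun z => ∑ i, c i * Φ i z) a u = ∑ i, c i * cubeEnergy B l (Φ i) a u := by
  simp only [cubeEnergy]
  rw [integral_finsetSum _ fun i _ => (hu.integrableOn_comp_add_opApply (hΦ i) a).const_mul (c i)]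
  exact Finset.sum_congr rfl fun i _ => integral_const_mul _ _

theorem exists_ccSmooth_abs_sub_cubeEnergy_le [Fintype ι] (hn : 0 < n)
    (hΦ : ∀ i, LipschitzWith K (Φ i)) {a : V} {P : ι → ℝ} {r : ℝ} (hr : 0 ≤ r)
    (hjensen : ∀ c : ι → ℝ, EnergyBddBelow B l (fun z => ∑ i, c i * Φ i z) a →
      potEnv B l (fun z => ∑ i, c i * Φ i z) a ≤ ∑ i, c i * P i + r * ∑ i, |c i|)
    {δ ε : ℝ} (hδ : 0 < δ) (hε : 0 < ε) :
    ∃ u : Dom n → U, CcSmooth (unitCube n) u ∧ sobNorm l u < ε ∧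
      ∀ i, |P i - cubeEnergy B l (Φ i) a u| ≤ r + δ := by
  obtain ⟨q, hq, hqP⟩ := exists_mem_closure_mem_closedBall_of_forall_le
    (convex_closure_achievableSet (B := B) (l := l) hn hΦ a) P hr fun c t ht => by
      have hbdd : ∀ u : Dom n → U, CcSmooth (unitCube n) u →
          t ≤ cubeEnergy B l (fun z => ∑ i, c i * Φ i z) a u := fun u hu => by
        rw [cubeEnergy_sum hΦ c a hu]
        exact ht _ ⟨u, hu, rfl⟩
      exact (le_potEnv hbdd).trans (hjensen c ⟨t, hbdd⟩)
  obtain ⟨_, ⟨u, hu, rfl⟩, hdist⟩ := Metric.mem_closure_iff.1 hq δ hδ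
  obtain ⟨w, hw, hsob, hwu⟩ := hu.exists_sobNorm_lt_cubeEnergy_eq B l hε
  refine ⟨w, hw, hsob, fun i => ?_⟩
  rw [hwu a (hΦ i), ← Real.dist_eq]
  exact (dist_triangle _ _ _).trans (add_le_add
    ((dist_le_pi_dist P q i).trans (Metric.mem_closedBall'.1 hqP))
    ((dist_le_pi_dist q _ i).trans hdist.le))

end Achievable

/-! ### Integrands with `‖TΦ‖_LIP ≤ 1` -/

section UnitLipschitzNorm

variable {X : Type*} [PseudoMetricSpace X] {s : Set X} {f : X → ℝ} {K : NNReal}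

lemma lipschitzOnWith_one_of_biSup_add_le_one (hf : LipschitzOnWith K f s)
    (h : (⨆ x ∈ s, |f x|) + (K : ℝ) ≤ 1) : LipschitzOnWith 1 f s := by
  have hsup : 0 ≤ ⨆ x ∈ s, |f x| :=
    Real.iSup_nonneg fun _ => Real.iSup_nonneg fun _ => abs_nonneg _
  exact hf.weaken (by rw [← NNReal.coe_le_coe, NNReal.coe_one]; linarith)

lemma abs_le_one_of_biSup_add_le_one (hs : Bornology.IsBounded s) (hf : LipschitzOnWith K f s)
    (h : (⨆ x ∈ s, |f x|) + (K : ℝ) ≤ 1) {x : X} (hx : x ∈ s) : |f x| ≤ 1 := by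
  have hbdd : BddAbove (Set.range fun y => ⨆ _ : y ∈ s, |f y|) := by
    refine ⟨|f x| + K * Metric.diam s, ?_⟩
    rintro _ ⟨y, rfl⟩
    refine Real.iSup_le (fun hy => ?_) (by positivity)
    have hdist : |f y - f x| ≤ K * Metric.diam s :=
      (hf.dist_le_mul y hy x hx).trans (by gcongr; exact Metric.dist_le_diam_of_mem hs hy hx)
    linarith [abs_sub_abs_le_abs_sub (f y) (f x)]
  have hle := le_ciSup hbdd x
  simp only [hx, ciSup_unique] at hle
  linarith [K.coe_nonneg]

end UnitLipschitzNorm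

section Compactification

variable {V : Type*} [NormedAddCommGroup V] [NormedSpace ℝ V] {Φ Ψ : V → ℝ}

lemma TLipUnit.abs_Tfun_le_one (h : TLipUnit Φ) {z : V} (hz : ‖z‖ ≤ 1) : |Tfun Φ z| ≤ 1 := by
  obtain ⟨K, hK, hsup⟩ := h
  exact abs_le_one_of_biSup_add_le_one Metric.isBounded_closedBall hK hsup
    (mem_closedBall_zero_iff.2 hz)

lemma TLipUnit.abs_Tfun_sub_le (h : TLipUnit Φ) {z w : V} (hz : ‖z‖ ≤ 1) (hw : ‖w‖ ≤ 1) :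
    |Tfun Φ z - Tfun Φ w| ≤ ‖z - w‖ := by
  obtain ⟨K, hK, hsup⟩ := h
  simpa [Real.dist_eq, dist_eq_norm] using
    (lipschitzOnWith_one_of_biSup_add_le_one hK hsup).dist_le_mul z (mem_closedBall_zero_iff.2 hz)
      w (mem_closedBall_zero_iff.2 hw)

lemma Tfun_of_norm_eq_one (Φ : V → ℝ) {w : V} (hw : ‖w‖ = 1) : Tfun Φ w = rrec Φ w :=
  if_neg (by simp [hw])

lemma norm_inv_one_add_norm_smul (z : V) : ‖(1 + ‖z‖)⁻¹ • z‖ = (1 + ‖z‖)⁻¹ * ‖z‖ := by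
  rw [norm_smul, Real.norm_of_nonneg (by positivity)]

lemma norm_inv_one_add_norm_smul_lt_one (z : V) : ‖(1 + ‖z‖)⁻¹ • z‖ < 1 := by
  rw [norm_inv_one_add_norm_smul, inv_mul_lt_iff₀ (by positivity)]
  linarith

lemma eq_one_add_norm_mul_Tfun (Φ : V → ℝ) (z : V) :
    Φ z = (1 + ‖z‖) * Tfun Φ ((1 + ‖z‖)⁻¹ • z) := by
  have hpos : 0 < 1 + ‖z‖ := by positivity
  have hsub : 1 - (1 + ‖z‖)⁻¹ * ‖z‖ = (1 + ‖z‖)⁻¹ := by field_simp; ring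
  rw [Tfun, if_pos (norm_inv_one_add_norm_smul_lt_one z), transf, norm_inv_one_add_norm_smul,
    hsub, inv_inv, smul_inv_smul₀ hpos.ne', mul_inv_cancel_left₀ hpos.ne']

lemma one_add_norm_mul_norm_sub_le (z w : V) :
    (1 + ‖w‖) * ‖(1 + ‖z‖)⁻¹ • z - (1 + ‖w‖)⁻¹ • w‖ ≤ 2 * ‖z - w‖ := by
  have hw : 0 < 1 + ‖w‖ := by positivity
  have hfactor : (1 + ‖w‖) * (1 + ‖z‖)⁻¹ = 1 + (‖w‖ - ‖z‖) * (1 + ‖z‖)⁻¹ := by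
    field_simp; ring
  have hdecomp : (1 + ‖w‖) • ((1 + ‖z‖)⁻¹ • z - (1 + ‖w‖)⁻¹ • w) =
      (z - w) + (‖w‖ - ‖z‖) • ((1 + ‖z‖)⁻¹ • z) := by
    rw [smul_sub, smul_inv_smul₀ hw.ne', smul_smul, smul_smul, hfactor, add_smul, one_smul]
    abel
  calc (1 + ‖w‖) * ‖(1 + ‖z‖)⁻¹ • z - (1 + ‖w‖)⁻¹ • w‖
      = ‖(z - w) + (‖w‖ - ‖z‖) • ((1 + ‖z‖)⁻¹ • z)‖ := by
        rw [← hdecomp, norm_smul, Real.norm_of_nonneg hw.le]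
    _ ≤ ‖z - w‖ + |‖w‖ - ‖z‖| * 1 := by
        grw [norm_add_le, norm_smul, norm_inv_one_add_norm_smul_lt_one, Real.norm_eq_abs]
    _ ≤ 2 * ‖z - w‖ := by
        linarith [abs_norm_sub_norm_le w z, norm_sub_rev z w]

lemma TLipUnit.abs_apply_le (h : TLipUnit Φ) (z : V) : |Φ z| ≤ 1 + ‖z‖ := by
  rw [eq_one_add_norm_mul_Tfun Φ z, abs_mul, abs_of_nonneg (by positivity)]
  exact mul_le_of_le_one_right (by positivity)
    (h.abs_Tfun_le_one (norm_inv_one_add_norm_smul_lt_one z).le)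

lemma TLipUnit.lipschitzWith (h : TLipUnit Φ) : LipschitzWith 3 Φ := by
  refine LipschitzWith.of_dist_le_mul fun z w => ?_
  set a := Tfun Φ ((1 + ‖z‖)⁻¹ • z) with ha
  set b := Tfun Φ ((1 + ‖w‖)⁻¹ • w) with hb
  have hz := (norm_inv_one_add_norm_smul_lt_one z).le
  have hw := (norm_inv_one_add_norm_smul_lt_one w).le
  have hdecomp : Φ z - Φ w = (‖z‖ - ‖w‖) * a + (1 + ‖w‖) * (a - b) := by
    rw [eq_one_add_norm_mul_Tfun Φ z, eq_one_add_norm_mul_Tfun Φ w, ← ha, ← hb]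
    ring
  calc dist (Φ z) (Φ w) ≤ |‖z‖ - ‖w‖| * |a| + (1 + ‖w‖) * |a - b| := by
        rw [Real.dist_eq, hdecomp, ← abs_mul, ← abs_of_pos (show 0 < 1 + ‖w‖ by positivity),
          ← abs_mul, abs_of_pos (show 0 < 1 + ‖w‖ by positivity)]
        exact abs_add_le _ _
    _ ≤ ‖z - w‖ * 1 + 2 * ‖z - w‖ := by
        refine add_le_add ?_ ?_
        · exact mul_le_mul (abs_norm_sub_norm_le z w) (h.abs_Tfun_le_one hz) (abs_nonneg a)
            (norm_nonneg _)
        · exact (mul_le_mul_of_nonneg_left (h.abs_Tfun_sub_le hz hw) (by positivity)).trans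
            (one_add_norm_mul_norm_sub_le z w)
    _ = (3 : NNReal) * dist z w := by
        rw [dist_eq_norm, NNReal.coe_ofNat]
        ring

lemma TLipUnit.abs_rrec_le_one (h : TLipUnit Φ) {w : V} (hw : ‖w‖ = 1) : |rrec Φ w| ≤ 1 :=
  Tfun_of_norm_eq_one Φ hw ▸ h.abs_Tfun_le_one hw.le

lemma TLipUnit.continuous_rrec (h : TLipUnit Φ) :
    Continuous fun w : Metric.sphere (0 : V) 1 => rrec Φ (w : V) := by
  refine LipschitzWith.continuous (K := 1) (LipschitzWith.of_dist_le_mul fun w w' => ?_)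
  have hw : ‖(w : V)‖ = 1 := norm_eq_of_mem_sphere w
  have hw' : ‖(w' : V)‖ = 1 := norm_eq_of_mem_sphere w'
  rw [Real.dist_eq, Subtype.dist_eq, dist_eq_norm, NNReal.coe_one, one_mul,
    ← Tfun_of_norm_eq_one Φ hw, ← Tfun_of_norm_eq_one Φ hw']
  exact h.abs_Tfun_sub_le hw.le hw'.le

lemma MemH.tendsto_rrec (h : MemH Φ) (w : V) :
    Tendsto (fun t : ℝ => Φ (t • w) / t) atTop (𝓝 (rrec Φ w)) := by
  obtain ⟨g, hg⟩ := h.2.2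
  have hlim : Tendsto (fun t : ℝ => Φ (t • w) / t) atTop (𝓝 (g w)) :=
    (TendstoLocallyUniformly.tendstoLocallyUniformlyOn hg).tendsto_at (Set.mem_univ w)
  rwa [rrec, hlim.limsup_eq]

lemma abs_sub_le_of_abs_Tfun_sub_le {δ : ℝ}
    (hd : ∀ z : V, ‖z‖ ≤ 1 → |Tfun Ψ z - Tfun Φ z| ≤ δ) (z : V) :
    |Ψ z - Φ z| ≤ δ * (1 + ‖z‖) := by
  rw [eq_one_add_norm_mul_Tfun Ψ, eq_one_add_norm_mul_Tfun Φ, ← mul_sub, abs_mul,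
    abs_of_nonneg (by positivity), mul_comm δ]
  exact mul_le_mul_of_nonneg_left (hd _ (norm_inv_one_add_norm_smul_lt_one z).le) (by positivity)

lemma abs_rrec_sub_le_of_abs_Tfun_sub_le {δ : ℝ}
    (hd : ∀ z : V, ‖z‖ ≤ 1 → |Tfun Ψ z - Tfun Φ z| ≤ δ) {w : V} (hw : ‖w‖ = 1) :
    |rrec Ψ w - rrec Φ w| ≤ δ := by
  rw [← Tfun_of_norm_eq_one Ψ hw, ← Tfun_of_norm_eq_one Φ hw]
  exact hd w hw.le

end Compactification

section OneAddNorm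

variable {V : Type*} [NormedAddCommGroup V] [NormedSpace ℝ V]

lemma memH_one_add_norm : MemH fun z : V => 1 + ‖z‖ := by
  refine ⟨by fun_prop, ⟨1, fun z => ?_⟩, fun z => ‖z‖, ?_⟩
  · rw [abs_of_nonneg (by positivity), one_mul]
  · refine TendstoUniformly.tendstoLocallyUniformly (Metric.tendstoUniformly_iff.2 fun ε hε => ?_)
    filter_upwards [eventually_gt_atTop (0 : ℝ), eventually_gt_atTop ε⁻¹] with t ht hεt z
    have hdiff : ‖z‖ - (1 + t * ‖z‖) / t = -t⁻¹ := by field_simp; ring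
    rw [Real.dist_eq, norm_smul, Real.norm_of_nonneg ht.le, hdiff, abs_neg,
      abs_of_pos (by positivity)]
    exact inv_lt_of_inv_lt₀ hε hεt

lemma rrec_one_add_norm (z : V) : rrec (fun z : V => 1 + ‖z‖) z = ‖z‖ := by
  refine Tendsto.limsup_eq ?_
  have hlim : Tendsto (fun t : ℝ => t⁻¹ + ‖z‖) atTop (𝓝 ‖z‖) := by
    simpa using tendsto_inv_atTop_zero.add_const ‖z‖
  refine hlim.congr' ?_
  filter_upwards [eventually_gt_atTop (0 : ℝ)] with t ht
  rw [norm_smul, Real.norm_of_nonneg ht.le]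
  field_simp

lemma Tfun_one_add_norm {z : V} (hz : ‖z‖ ≤ 1) : Tfun (fun z : V => 1 + ‖z‖) z = 1 := by
  rcases hz.lt_or_eq with h | h
  · have hne : 1 - ‖z‖ ≠ 0 := by linarith
    rw [Tfun, if_pos h, transf, norm_smul, Real.norm_of_nonneg (by rw [inv_nonneg]; linarith)]
    field_simp
    ring
  · rw [Tfun_of_norm_eq_one _ h, rrec_one_add_norm, h]

lemma tLipUnit_one_add_norm : TLipUnit fun z : V => 1 + ‖z‖ := by
  refine ⟨0, LipschitzOnWith.of_dist_le_mul fun z hz w hw => ?_, ?_⟩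
  · rw [Tfun_one_add_norm (mem_closedBall_zero_iff.1 hz),
      Tfun_one_add_norm (mem_closedBall_zero_iff.1 hw)]
    simp
  · rw [NNReal.coe_zero, add_zero]
    refine Real.iSup_le (fun z => Real.iSup_le (fun hz => ?_) zero_le_one) zero_le_one
    rw [Tfun_one_add_norm (mem_closedBall_zero_iff.1 hz), abs_one]

end OneAddNorm

section FiniteNet

variable {V : Type*} [NormedAddCommGroup V] [NormedSpace ℝ V]

lemma abs_Tfun_sub_le_add {Φ Ψ : V → ℝ} (hΦ : TLipUnit Φ) (hΨ : TLipUnit Ψ) {z s : V}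
    (hz : ‖z‖ ≤ 1) (hs : ‖s‖ ≤ 1) :
    |Tfun Ψ z - Tfun Φ z| ≤ |Tfun Ψ s - Tfun Φ s| + 2 * ‖z - s‖ := by
  have hΨ' := abs_le.1 (hΨ.abs_Tfun_sub_le hz hs)
  have hΦ' := abs_le.1 (hΦ.abs_Tfun_sub_le hz hs)
  have hs' := abs_le.1 (le_refl |Tfun Ψ s - Tfun Φ s|)
  rw [abs_le]
  constructor <;> linarith [hΨ'.1, hΨ'.2, hΦ'.1, hΦ'.2, hs'.1, hs'.2]

-- Arzelà–Ascoli by hand: evaluate the integrands on a finite net of the unit ball.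
lemma exists_finset_forall_tLipUnit_abs_Tfun_sub_le [FiniteDimensional ℝ V] {δ : ℝ} (hδ : 0 < δ) :
    ∃ S : Finset (V → ℝ), (∀ Φ ∈ S, MemH Φ ∧ TLipUnit Φ) ∧
      ∀ Ψ : V → ℝ, MemH Ψ → TLipUnit Ψ →
        ∃ Φ ∈ S, ∀ z, ‖z‖ ≤ 1 → |Tfun Ψ z - Tfun Φ z| ≤ δ := by
  have : ProperSpace V := FiniteDimensional.proper_real V
  obtain ⟨N, hNball, hNfin, hN⟩ := Metric.finite_approx_of_totallyBounded
    (isCompact_closedBall (0 : V) 1).totallyBounded (δ / 4) (by positivity)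
  have : Fintype N := hNfin.fintype
  let evalN : (V → ℝ) → N → ℝ := fun Φ s => Tfun Φ s
  let 𝒞 : Set (V → ℝ) := {Φ | MemH Φ ∧ TLipUnit Φ}
  have htb : TotallyBounded (evalN '' 𝒞) := by
    refine (isCompact_closedBall (0 : N → ℝ) 1).totallyBounded.subset ?_
    rintro _ ⟨Φ, hΦ, rfl⟩
    rw [mem_closedBall_zero_iff, pi_norm_le_iff_of_nonneg zero_le_one]
    exact fun s => hΦ.2.abs_Tfun_le_one (mem_closedBall_zero_iff.1 (hNball s.2))
  obtain ⟨T, hT, hTfin, hcover⟩ :=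
    Metric.finite_approx_of_totallyBounded htb (δ / 4) (by positivity)
  obtain ⟨S, hS, hSfin, rfl⟩ := Set.exists_subset_image_finite_and (p := (· = T)).1
    ⟨T, hT, hTfin, rfl⟩
  refine ⟨hSfin.toFinset, fun Φ hΦ => hS (hSfin.mem_toFinset.1 hΦ), fun Ψ hΨH hΨ => ?_⟩
  have hmem := hcover (Set.mem_image_of_mem evalN (show Ψ ∈ 𝒞 from ⟨hΨH, hΨ⟩))
  simp only [Set.mem_iUnion, exists_prop, Set.exists_mem_image] at hmem
  obtain ⟨Φ, hΦS, hΦΨ⟩ := hmem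
  refine ⟨Φ, hSfin.mem_toFinset.2 hΦS, fun z hz => ?_⟩
  have hzN := hN (mem_closedBall_zero_iff.2 hz)
  simp only [Set.mem_iUnion, exists_prop] at hzN
  obtain ⟨s, hs, hzs⟩ := hzN
  have hs' : |Tfun Ψ s - Tfun Φ s| ≤ δ / 4 :=
    (dist_le_pi_dist (evalN Ψ) (evalN Φ) ⟨s, hs⟩).trans (Metric.mem_ball.1 hΦΨ).le
  rw [Metric.mem_ball, dist_eq_norm] at hzs
  linarith [abs_Tfun_sub_le_add (hS hΦS).2 hΨ hz (mem_closedBall_zero_iff.1 (hNball hs))]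

end FiniteNet

/-! ### The upper recession function of a Lipschitz function -/

section UpperRecession

variable {V : Type*} [NormedAddCommGroup V] [NormedSpace ℝ V] {K : NNReal} {f : V → ℝ}

lemma eventually_abs_div_le_of_lipschitzWith (hf : LipschitzWith K f) (w : V) :
    ∀ᶠ p : ℝ × V in atTop ×ˢ 𝓝 w, |f (p.1 • p.2) / p.1| ≤ |f 0| + K * (‖w‖ + 1) := by
  filter_upwards [(eventually_ge_atTop (1 : ℝ)).prod_mk (Metric.ball_mem_nhds w one_pos)]
    with ⟨t, z⟩ ⟨ht, hz⟩
  have hz' : ‖z‖ ≤ ‖w‖ + 1 := by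
    linarith [norm_sub_norm_le z w, dist_eq_norm z w, Metric.mem_ball.1 hz]
  have ht0 : 0 < t := zero_lt_one.trans_le ht
  have hlip := abs_sub_le_of_lipschitzWith hf (t • z) 0
  rw [sub_zero, norm_smul, Real.norm_of_nonneg ht0.le] at hlip
  have hgrow : (K : ℝ) * (t * ‖z‖) ≤ K * (t * (‖w‖ + 1)) := by gcongr
  rw [abs_div, abs_of_pos ht0, div_le_iff₀ ht0]
  nlinarith [abs_sub_abs_le_abs_sub (f (t • z)) (f 0),
    mul_le_mul_of_nonneg_left ht (abs_nonneg (f 0))]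

lemma isBoundedUnder_le_div_of_lipschitzWith (hf : LipschitzWith K f) (w : V) :
    IsBoundedUnder (· ≤ ·) (atTop ×ˢ 𝓝 w) fun p : ℝ × V => f (p.1 • p.2) / p.1 :=
  ⟨_, eventually_map.2 ((eventually_abs_div_le_of_lipschitzWith hf w).mono
    fun _ h => (abs_le.1 h).2)⟩

lemma isCoboundedUnder_le_div_of_lipschitzWith (hf : LipschitzWith K f) (w : V) :
    IsCoboundedUnder (· ≤ ·) (atTop ×ˢ 𝓝 w) fun p : ℝ × V => f (p.1 • p.2) / p.1 :=
  IsBoundedUnder.isCoboundedUnder_le ⟨_, eventually_map.2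
    ((eventually_abs_div_le_of_lipschitzWith hf w).mono fun _ h => (abs_le.1 h).1)⟩

lemma urec_le_add_of_lipschitzWith (hf : LipschitzWith K f) {w w' : V} {c : ℝ}
    (hc : urec f w' < c) : urec f w ≤ c + K * dist w w' := by
  have hev : ∀ᶠ p : ℝ × V in atTop ×ˢ 𝓝 w', f (p.1 • p.2) / p.1 < c :=
    eventually_lt_of_limsup_lt hc (isBoundedUnder_le_div_of_lipschitzWith hf w')
  have htrans : Tendsto (fun p : ℝ × V => (p.1, p.2 - w + w')) (atTop ×ˢ 𝓝 w)
      (atTop ×ˢ 𝓝 w') := by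
    have hcont : Tendsto (fun z : V => z - w + w') (𝓝 w) (𝓝 w') := by
      simpa using (show Continuous fun z : V => z - w + w' by fun_prop).tendsto w
    exact tendsto_fst.prodMk (hcont.comp tendsto_snd)
  refine limsup_le_of_le (isCoboundedUnder_le_div_of_lipschitzWith hf w) ?_
  filter_upwards [htrans.eventually hev, tendsto_fst.eventually (eventually_gt_atTop (0 : ℝ))]
    with ⟨t, z⟩ hlt ht
  have hlip := (abs_le.1 (abs_sub_le_of_lipschitzWith hf (t • z) (t • (z - w + w')))).2
  rw [← smul_sub, show z - (z - w + w') = w - w' by abel, norm_smul, Real.norm_of_nonneg ht.le,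
    ← dist_eq_norm] at hlip
  rw [div_lt_iff₀ ht] at hlt
  rw [div_le_iff₀ ht]
  linarith

lemma lipschitzWith_urec (hf : LipschitzWith K f) : LipschitzWith K (urec f) :=
  LipschitzWith.of_le_add_mul K fun w w' => le_of_forall_pos_le_add fun ε hε => by
    linarith [urec_le_add_of_lipschitzWith hf (w := w) (lt_add_of_pos_right (urec f w') hε)]

lemma urec_le_of_tendsto {K' : NNReal} {Φ : V → ℝ} (hf : LipschitzWith K f)
    (hΦ : LipschitzWith K' Φ) (hle : ∀ z, f z ≤ Φ z) {w : V} {r : ℝ}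
    (hr : Tendsto (fun t : ℝ => Φ (t • w) / t) atTop (𝓝 r)) : urec f w ≤ r := by
  have hnorm : Tendsto (fun z : V => (K' : ℝ) * ‖z - w‖) (𝓝 w) (𝓝 0) := by
    simpa using (show Continuous fun z : V => (K' : ℝ) * ‖z - w‖ by fun_prop).tendsto w
  have hlim : Tendsto (fun p : ℝ × V => Φ (p.1 • w) / p.1 + K' * ‖p.2 - w‖) (atTop ×ˢ 𝓝 w)
      (𝓝 r) := by
    simpa using (hr.comp tendsto_fst).add (hnorm.comp tendsto_snd)
  rw [← hlim.limsup_eq]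
  refine limsup_le_limsup ?_ (isCoboundedUnder_le_div_of_lipschitzWith hf w)
    hlim.isBoundedUnder_le
  filter_upwards [tendsto_fst.eventually (eventually_gt_atTop (0 : ℝ))] with ⟨t, z⟩ ht
  have hlip := (abs_le.1 (abs_sub_le_of_lipschitzWith hΦ (t • z) (t • w))).2
  rw [← smul_sub, norm_smul, Real.norm_of_nonneg ht.le] at hlip
  rw [div_add' _ _ _ ht.ne', div_le_div_iff_of_pos_right ht]
  linarith [hle (t • z)]

end UpperRecession

/-! ### Duality pairing with a Young measure -/

lemma exists_stronglyMeasurable_eq_integral {X T E : Type*} [MeasurableSpace X]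
    [MeasurableSpace T] [NormedAddCommGroup E] [NormedSpace ℝ E] {κ : X → Measure T}
    (hκ : Measurable κ) {F : T → E} (hF : StronglyMeasurable F) :
    ∃ G : X → E, StronglyMeasurable G ∧
      ∀ x, IsProbabilityMeasure (κ x) → G x = ∫ z, F z ∂κ x := by
  classical
  have hprob : MeasurableSet {x | κ x Set.univ = 1} :=
    (Measure.measurable_coe MeasurableSet.univ).comp hκ (measurableSet_singleton 1)
  let K : ProbabilityTheory.Kernel X T :=
    ⟨fun x => if κ x Set.univ = 1 then κ x else 0, Measurable.ite hprob hκ measurable_const⟩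
  have hK : ∀ x, K x = if κ x Set.univ = 1 then κ x else 0 := fun _ => rfl
  have : ProbabilityTheory.IsFiniteKernel K := by
    refine ⟨1, ENNReal.one_lt_top, fun x => ?_⟩
    rw [hK]
    split_ifs with h
    · exact h.le
    · simp
  refine ⟨_, StronglyMeasurable.integral_kernel (κ := K) hF, fun x hx => ?_⟩
  rw [hK, if_pos hx.measure_univ]

lemma lipschitzWith_sum_mul {X ι : Type*} [PseudoMetricSpace X] [Fintype ι] {Φ : ι → X → ℝ}
    {K : NNReal} (hΦ : ∀ i, LipschitzWith K (Φ i)) (c : ι → ℝ) :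
    LipschitzWith (K * ∑ i, ‖c i‖₊) (fun z => ∑ i, c i * Φ i z) := by
  refine LipschitzWith.of_dist_le_mul fun z w => ?_
  rw [Real.dist_eq, ← Finset.sum_sub_distrib]
  calc |∑ i, (c i * Φ i z - c i * Φ i w)|
      ≤ ∑ i, |c i * Φ i z - c i * Φ i w| := Finset.abs_sum_le_sum_abs _ _
    _ ≤ ∑ i, |c i| * (K * dist z w) := by
        refine Finset.sum_le_sum fun i _ => ?_
        rw [← mul_sub, abs_mul]
        exact mul_le_mul_of_nonneg_left ((hΦ i).dist_le_mul z w) (abs_nonneg _)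
    _ = _ := by
        rw [← Finset.sum_mul]
        push_cast
        simp only [Real.norm_eq_abs]
        ring

lemma linearGrowth_of_lipschitzWith {V : Type*} [NormedAddCommGroup V] {f : V → ℝ} {K : NNReal}
    (hf : LipschitzWith K f) : LinearGrowth f := by
  refine ⟨|f 0| + K, fun z => ?_⟩
  have hz : |f z| ≤ |f 0| + K * ‖z‖ := by
    have := abs_sub_le_of_lipschitzWith hf z 0
    rw [sub_zero] at this
    linarith [abs_sub_abs_le_abs_sub (f z) (f 0)]
  nlinarith [mul_nonneg (abs_nonneg (f 0)) (norm_nonneg z), K.coe_nonneg]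

section Envelope

variable {n : ℕ} {U V ι : Type*} [NormedAddCommGroup V] [NormedSpace ℝ V]
  [NormedAddCommGroup U] [NormedSpace ℝ U] [Fintype ι]
  {B : (Fin n → ℕ) → (U →L[ℝ] V)} {l : ℕ} {Φ : ι → V → ℝ} {a : V}

lemma urec_potEnv_le_sum (hH : ∀ i, MemH (Φ i)) (hΦ : ∀ i, TLipUnit (Φ i)) {c : ι → ℝ}
    (hbdd : EnergyBddBelow B l (fun z => ∑ i, c i * Φ i z) a) (w : V) :
    urec (potEnv B l fun z => ∑ i, c i * Φ i z) w ≤ ∑ i, c i * rrec (Φ i) w := by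
  have hlip := lipschitzWith_sum_mul (fun i => (hΦ i).lipschitzWith) c
  refine urec_le_of_tendsto (lipschitzWith_potEnv hlip hbdd) hlip
    (fun z => potEnv_le_self (hbdd.forall hlip z)) ?_
  refine (tendsto_finsetSum _ fun i _ => ((hH i).tendsto_rrec w).const_mul (c i)).congr fun t => ?_
  simp only [Finset.sum_div, mul_div_assoc]

end Envelope

namespace YoungMeasure

section Pairing

variable {n : ℕ} {V E : Type*} [NormedAddCommGroup V] [InnerProductSpace ℝ V]
  [FiniteDimensional ℝ V] [MeasurableSpace V] [BorelSpace V] {Ω : Set (Dom n)}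
  [NormedAddCommGroup E] [NormedSpace ℝ E] {x : Dom n}

/-- The almost sure properties of the fibres of a Young measure. Where `λ^a` vanishes nothing is
known about the concentration-angle measure. -/
structure IsRegularAt (Y : YoungMeasure n V Ω) (x : Dom n) : Prop where
  isProbabilityMeasure_osc : IsProbabilityMeasure (Y.osc x)
  integrable_osc : Integrable id (Y.osc x)
  isProbabilityMeasure_ang : Y.lamA x ≠ 0 → IsProbabilityMeasure (Y.ang x)

/-- The pairing `⟨F, ν_x⟩ + λ^a(x) ⟨G, ν_x^∞⟩`, for vector-valued `F` and `G`. -/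
def pairing (Y : YoungMeasure n V Ω) (F G : V → E) (x : Dom n) : E :=
  (∫ z, F z ∂Y.osc x) + Y.lamA x • ∫ w, G w ∂Y.ang x

/-- The density `⟨1 + |·|, ν_x⟩ + λ^a(x)` of the absolutely continuous part of the total mass. -/
def massDensity (Y : YoungMeasure n V Ω) (x : Dom n) : ℝ :=
  1 + (∫ z, ‖z‖ ∂Y.osc x) + Y.lamA x

variable (Y : YoungMeasure n V Ω)

lemma lamA_nonneg (x : Dom n) : 0 ≤ Y.lamA x := ENNReal.toReal_nonneg

lemma massDensity_nonneg (x : Dom n) : 0 ≤ Y.massDensity x := by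
  have := Y.lamA_nonneg x
  unfold massDensity
  positivity

lemma integrable_lamA : Integrable Y.lamA := by
  have := Y.conc_finite
  exact Measure.integrable_toReal_rnDeriv

lemma measurable_lintegral_nnnorm_osc : Measurable fun x => ∫⁻ z, ‖z‖₊ ∂Y.osc x :=
  (Measure.measurable_lintegral (by fun_prop)).comp Y.osc_meas

lemma integrableOn_integral_norm_osc : IntegrableOn (fun x => ∫ z, ‖z‖ ∂Y.osc x) Ω := by
  refine (integrable_toReal_of_lintegral_ne_top
    Y.measurable_lintegral_nnnorm_osc.aemeasurable Y.moment.ne).congr (ae_of_all _ fun x => ?_)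
  exact (integral_norm_eq_lintegral_enorm (f := fun z : V => z) aestronglyMeasurable_id).symm

lemma integrableOn_massDensity (hΩ : volume Ω < ⊤) : IntegrableOn Y.massDensity Ω :=
  ((integrableOn_const hΩ.ne).add Y.integrableOn_integral_norm_osc).add
    Y.integrable_lamA.integrableOn

lemma ae_isProbabilityMeasure_ang : ∀ᵐ x, Y.lamA x ≠ 0 → IsProbabilityMeasure (Y.ang x) := by
  have hdens : ∀ᵐ x ∂volume.withDensity (Y.conc.rnDeriv volume), IsProbabilityMeasure (Y.ang x) :=
    (Measure.absolutelyContinuous_of_le (Measure.withDensity_rnDeriv_le _ _)).ae_le Y.ang_prob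
  rw [ae_withDensity_iff (Measure.measurable_rnDeriv _ _)] at hdens
  filter_upwards [hdens] with x hx h
  exact hx fun h0 => h (by rw [lamA, h0, ENNReal.toReal_zero])

lemma ae_isRegularAt : ∀ᵐ x ∂volume.restrict Ω, Y.IsRegularAt x := by
  filter_upwards [Y.osc_prob, ae_lt_top Y.measurable_lintegral_nnnorm_osc Y.moment.ne,
    ae_restrict_of_ae Y.ae_isProbabilityMeasure_ang] with x hprob hfin hang
  exact ⟨hprob, ⟨aestronglyMeasurable_id, hfin⟩, hang⟩

variable {Y} {C : ℝ} {F F' G G' : V → E}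

lemma IsRegularAt.integrable_one_add_norm (h : Y.IsRegularAt x) :
    Integrable (fun z => 1 + ‖z‖) (Y.osc x) :=
  have := h.isProbabilityMeasure_osc
  (integrable_const 1).add h.integrable_osc.norm

lemma IsRegularAt.integrable_of_linearGrowth {f : V → ℝ} (h : Y.IsRegularAt x) (hf : Continuous f)
    (hgrowth : LinearGrowth f) : Integrable f (Y.osc x) :=
  let ⟨c, hc⟩ := hgrowth
  (h.integrable_one_add_norm.const_mul c).mono' hf.aestronglyMeasurable (ae_of_all _ hc)

lemma IsRegularAt.integrable_ang {E : Type*} [NormedAddCommGroup E] {G : V → E}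
    (h : Y.IsRegularAt x) (hG : Continuous fun w : Metric.sphere (0 : V) 1 => G w)
    (hx : Y.lamA x ≠ 0) : Integrable (fun w : Metric.sphere (0 : V) 1 => G w) (Y.ang x) :=
  have := h.isProbabilityMeasure_ang hx
  hG.integrable_of_hasCompactSupport (HasCompactSupport.of_compactSpace _)

lemma IsRegularAt.norm_pairing_le (h : Y.IsRegularAt x) (hF : ∀ z, ‖F z‖ ≤ C * (1 + ‖z‖))
    (hG : ∀ w, ‖w‖ = 1 → ‖G w‖ ≤ C) : ‖Y.pairing F G x‖ ≤ C * Y.massDensity x := by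
  have := h.isProbabilityMeasure_osc
  have hosc : ‖∫ z, F z ∂Y.osc x‖ ≤ C * (1 + ∫ z, ‖z‖ ∂Y.osc x) := by
    refine (norm_integral_le_of_norm_le (h.integrable_one_add_norm.const_mul C)
      (ae_of_all _ hF)).trans_eq ?_
    rw [integral_const_mul, integral_add (f := fun _ => 1) (g := fun z => ‖z‖)
      (integrable_const 1) h.integrable_osc.norm]
    simp
  have hang : ‖Y.lamA x • ∫ w, G w ∂Y.ang x‖ ≤ C * Y.lamA x := by
    by_cases hx : Y.lamA x = 0
    · simp [hx]
    have := h.isProbabilityMeasure_ang hx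
    rw [norm_smul, Real.norm_of_nonneg (Y.lamA_nonneg x), mul_comm]
    refine mul_le_mul_of_nonneg_right ?_ (Y.lamA_nonneg x)
    simpa using norm_integral_le_of_norm_le_const (μ := Y.ang x)
      (ae_of_all _ fun w => hG w (norm_eq_of_mem_sphere w))
  calc ‖Y.pairing F G x‖ ≤ C * (1 + ∫ z, ‖z‖ ∂Y.osc x) + C * Y.lamA x :=
        (norm_add_le _ _).trans (add_le_add hosc hang)
    _ = C * Y.massDensity x := by rw [massDensity]; ring

lemma aestronglyMeasurable_pairing (hF : StronglyMeasurable F)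
    (hG : StronglyMeasurable fun w : Metric.sphere (0 : V) 1 => G w) :
    AEStronglyMeasurable (Y.pairing F G) (volume.restrict Ω) := by
  obtain ⟨F', hF', hFF'⟩ := exists_stronglyMeasurable_eq_integral Y.osc_meas hF
  obtain ⟨G', hG', hGG'⟩ := exists_stronglyMeasurable_eq_integral Y.ang_meas hG
  have hlam := Y.integrable_lamA.aestronglyMeasurable.restrict (s := Ω)
  refine (hF'.aestronglyMeasurable.add (hlam.smul hG'.aestronglyMeasurable)).congr ?_
  filter_upwards [Y.ae_isRegularAt] with x h
  change F' x + Y.lamA x • G' x = Y.pairing F G x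
  rw [hFF' x h.isProbabilityMeasure_osc, pairing]
  by_cases hx : Y.lamA x = 0
  · simp [hx]
  · rw [hGG' x (h.isProbabilityMeasure_ang hx)]

lemma integrableOn_pairing (hΩ : volume Ω < ⊤) (hF : StronglyMeasurable F)
    (hG : StronglyMeasurable fun w : Metric.sphere (0 : V) 1 => G w)
    (hFC : ∀ z, ‖F z‖ ≤ C * (1 + ‖z‖)) (hGC : ∀ w, ‖w‖ = 1 → ‖G w‖ ≤ C) :
    IntegrableOn (Y.pairing F G) Ω := by
  refine ((Y.integrableOn_massDensity hΩ).const_mul C).mono'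
    (aestronglyMeasurable_pairing hF hG) ?_
  filter_upwards [Y.ae_isRegularAt] with x h
  exact h.norm_pairing_le hFC hGC

lemma pairing_sub (hF : Integrable F (Y.osc x)) (hF' : Integrable F' (Y.osc x))
    (hG : Y.lamA x ≠ 0 → Integrable (fun w : Metric.sphere (0 : V) 1 => G w) (Y.ang x))
    (hG' : Y.lamA x ≠ 0 → Integrable (fun w : Metric.sphere (0 : V) 1 => G' w) (Y.ang x)) :
    Y.pairing (fun z => F z - F' z) (fun w => G w - G' w) x
      = Y.pairing F G x - Y.pairing F' G' x := by
  unfold pairing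
  rw [integral_sub hF hF', add_sub_add_comm]
  by_cases hx : Y.lamA x = 0
  · simp [hx]
  · rw [integral_sub (hG hx) (hG' hx), smul_sub]

lemma pairing_sum_mul {ι : Type*} [Fintype ι] {F G : ι → V → ℝ} (c : ι → ℝ)
    (hF : ∀ i, Integrable (F i) (Y.osc x)) (hG : ∀ i, Y.lamA x ≠ 0 →
      Integrable (fun w : Metric.sphere (0 : V) 1 => G i w) (Y.ang x)) :
    Y.pairing (fun z => ∑ i, c i * F i z) (fun w => ∑ i, c i * G i w) x
      = ∑ i, c i * Y.pairing (F i) (G i) x := by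
  simp only [pairing, smul_eq_mul, mul_add, Finset.sum_add_distrib]
  rw [integral_finsetSum _ fun i _ => (hF i).const_mul _]
  by_cases hx : Y.lamA x = 0
  · simp [hx, integral_const_mul]
  · rw [integral_finsetSum _ fun i _ => (hG i hx).const_mul _, Finset.mul_sum]
    simp only [integral_const_mul, mul_left_comm]

lemma pairing_mono {F F' G G' : V → ℝ} (hF : Integrable F (Y.osc x))
    (hF' : Integrable F' (Y.osc x))
    (hG : Y.lamA x ≠ 0 → Integrable (fun w : Metric.sphere (0 : V) 1 => G w) (Y.ang x))
    (hG' : Y.lamA x ≠ 0 → Integrable (fun w : Metric.sphere (0 : V) 1 => G' w) (Y.ang x))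
    (hFF' : ∀ z, F z ≤ F' z) (hGG' : ∀ w, G w ≤ G' w) :
    Y.pairing F G x ≤ Y.pairing F' G' x := by
  refine add_le_add (integral_mono hF hF' hFF') ?_
  by_cases hx : Y.lamA x = 0
  · simp [hx]
  · exact mul_le_mul_of_nonneg_left (integral_mono (hG hx) (hG' hx) fun w => hGG' w)
      (Y.lamA_nonneg x)

end Pairing

section RecessionPairing

variable {n : ℕ} {V : Type*} [NormedAddCommGroup V] [InnerProductSpace ℝ V]
  [FiniteDimensional ℝ V] [MeasurableSpace V] [BorelSpace V] {Ω : Set (Dom n)}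
  (Y : YoungMeasure n V Ω) {Φ Ψ : V → ℝ}

/-- The pairing `⟨Φ, ν_x⟩ + λ^a(x) ⟨Φ^∞, ν_x^∞⟩` with an integrand `Φ`. -/
def recPairing (Y : YoungMeasure n V Ω) (Φ : V → ℝ) : Dom n → ℝ :=
  Y.pairing Φ (rrec Φ)

lemma integrableOn_baryAC (hΩ : volume Ω < ⊤) : IntegrableOn Y.baryAC Ω :=
  integrableOn_pairing (F := id) (G := id) (C := 1) hΩ stronglyMeasurable_id
    continuous_subtype_val.stronglyMeasurable (fun z => by simp) fun _ hw => hw.le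

lemma integrableOn_recPairing (hΩ : volume Ω < ⊤) (hΦ : TLipUnit Φ) :
    IntegrableOn (Y.recPairing Φ) Ω :=
  integrableOn_pairing (C := 1) hΩ hΦ.lipschitzWith.continuous.stronglyMeasurable
    hΦ.continuous_rrec.stronglyMeasurable
    (fun z => (hΦ.abs_apply_le z).trans_eq (one_mul _).symm) fun _ => hΦ.abs_rrec_le_one

lemma ae_abs_recPairing_le (hΦ : TLipUnit Φ) :
    ∀ᵐ x ∂volume.restrict Ω, |Y.recPairing Φ x| ≤ Y.massDensity x := by
  filter_upwards [Y.ae_isRegularAt] with x h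
  simpa only [one_mul, Real.norm_eq_abs] using! h.norm_pairing_le (C := 1) (G := rrec Φ)
    (fun z => (hΦ.abs_apply_le z).trans_eq (one_mul _).symm) fun _ => hΦ.abs_rrec_le_one

variable {Y} in
lemma IsRegularAt.integrable_of_tLipUnit {x : Dom n} (h : Y.IsRegularAt x) (hΦ : TLipUnit Φ) :
    Integrable Φ (Y.osc x) :=
  h.integrable_of_linearGrowth hΦ.lipschitzWith.continuous
    (linearGrowth_of_lipschitzWith hΦ.lipschitzWith)

lemma ae_abs_recPairing_sub_le (hΦ : TLipUnit Φ) (hΨ : TLipUnit Ψ) {δ : ℝ}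
    (hd : ∀ z, ‖z‖ ≤ 1 → |Tfun Ψ z - Tfun Φ z| ≤ δ) :
    ∀ᵐ x ∂volume.restrict Ω, |Y.recPairing Ψ x - Y.recPairing Φ x| ≤ δ * Y.massDensity x := by
  filter_upwards [Y.ae_isRegularAt] with x h
  rw [recPairing, recPairing, ← pairing_sub (h.integrable_of_tLipUnit hΨ)
    (h.integrable_of_tLipUnit hΦ) (h.integrable_ang hΨ.continuous_rrec)
    (h.integrable_ang hΦ.continuous_rrec)]
  exact h.norm_pairing_le (G := fun w => rrec Ψ w - rrec Φ w)
    (abs_sub_le_of_abs_Tfun_sub_le hd) fun _ => abs_rrec_sub_le_of_abs_Tfun_sub_le hd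

end RecessionPairing

section Jensen

variable {n : ℕ} {U V W ι : Type*} [NormedAddCommGroup V] [InnerProductSpace ℝ V]
  [FiniteDimensional ℝ V] [MeasurableSpace V] [BorelSpace V] {Ω : Set (Dom n)}
  [NormedAddCommGroup W] [NormedSpace ℝ W] [NormedAddCommGroup U] [NormedSpace ℝ U] [Fintype ι]
  {A : (Fin n → ℕ) → (V →L[ℝ] W)} {k : ℕ} {B : (Fin n → ℕ) → (U →L[ℝ] V)} {l : ℕ}
  {Y : YoungMeasure n V Ω} {Φ : ι → V → ℝ} {a : V}

lemma JensenAE.ae_potEnv_baryAC_le (hJ : Y.JensenAE A k) (hex : ExactPotential A k B l)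
    (hH : ∀ i, MemH (Φ i)) (hΦ : ∀ i, TLipUnit (Φ i)) {c : ι → ℝ}
    (hbdd : EnergyBddBelow B l (fun z => ∑ i, c i * Φ i z) a) :
    ∀ᵐ x ∂volume.restrict Ω, potEnv B l (fun z => ∑ i, c i * Φ i z) (Y.baryAC x)
      ≤ ∑ i, c i * Y.recPairing (Φ i) x := by
  have hlip := lipschitzWith_sum_mul (fun i => (hΦ i).lipschitzWith) c
  have hlipEnv := lipschitzWith_potEnv hlip hbdd
  have hgrowth := linearGrowth_of_lipschitzWith hlipEnv
  filter_upwards [hJ _ (aQuasiconvex_potEnv hex hlip hbdd) hgrowth, Y.ae_isRegularAt] with x hx h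
  simp only [recPairing]
  rw [← pairing_sum_mul c (fun i => h.integrable_of_tLipUnit (hΦ i))
    fun i => h.integrable_ang (hΦ i).continuous_rrec]
  refine hx.trans (pairing_mono (h.integrable_of_linearGrowth hlipEnv.continuous hgrowth)
    (h.integrable_of_linearGrowth hlip.continuous (linearGrowth_of_lipschitzWith hlip))
    (h.integrable_ang ((lipschitzWith_urec hlipEnv).continuous.comp continuous_subtype_val))
    (h.integrable_ang (G := fun w => ∑ i, c i * rrec (Φ i) w) ?_)
    (fun z => potEnv_le_self (hbdd.forall hlip z)) (urec_potEnv_le_sum hH hΦ hbdd))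
  exact continuous_finsetSum _ fun i _ => continuous_const.mul (hΦ i).continuous_rrec

lemma JensenAE.potEnv_le_average (hJ : Y.JensenAE A k) (hex : ExactPotential A k B l)
    (hΩ : volume Ω < ⊤) (hH : ∀ i, MemH (Φ i)) (hΦ : ∀ i, TLipUnit (Φ i)) {Q : Set (Dom n)}
    (hQΩ : Q ⊆ Ω) {N : ℝ} (hN : 0 < N) (hQN : volume.real Q = N⁻¹) {c : ι → ℝ}
    (hbdd : EnergyBddBelow B l (fun z => ∑ i, c i * Φ i z) a) :
    potEnv B l (fun z => ∑ i, c i * Φ i z) a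
      ≤ ∑ i, c i * (N * ∫ x in Q, Y.recPairing (Φ i) x)
        + 3 * (N * ∫ x in Q, ‖Y.baryAC x - a‖) * ∑ i, |c i| := by
  have hlip := lipschitzWith_sum_mul (fun i => (hΦ i).lipschitzWith) c
  have : IsFiniteMeasure (volume.restrict Q) := ⟨by simpa using (measure_mono hQΩ).trans_lt hΩ⟩
  have hpair : IntegrableOn (fun x => ∑ i, c i * Y.recPairing (Φ i) x) Q :=
    integrable_finsetSum _ fun i _ =>
      ((Y.integrableOn_recPairing hΩ (hΦ i)).mono_set hQΩ).const_mul _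
  have hdist : IntegrableOn (fun x => 3 * (∑ i, |c i|) * ‖Y.baryAC x - a‖) Q :=
    (((Y.integrableOn_baryAC hΩ).mono_set hQΩ).sub (integrable_const a)).norm.const_mul _
  have hle : ∫ _ in Q, potEnv B l (fun z => ∑ i, c i * Φ i z) a
      ≤ ∫ x in Q, (∑ i, c i * Y.recPairing (Φ i) x + 3 * (∑ i, |c i|) * ‖Y.baryAC x - a‖) := by
    refine integral_mono_ae (integrable_const _) (hpair.add hdist) ?_
    filter_upwards [ae_restrict_of_ae_restrict_of_subset hQΩ
      (hJ.ae_potEnv_baryAC_le hex hH hΦ hbdd)] with x hx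
    have := (abs_le.1 (abs_sub_le_of_lipschitzWith
      (lipschitzWith_potEnv hlip hbdd) a (Y.baryAC x))).2
    rw [norm_sub_rev] at this
    push_cast [Real.norm_eq_abs] at this
    linarith
  rw [integral_add hpair hdist, integral_finsetSum _ fun i _ =>
    ((Y.integrableOn_recPairing hΩ (hΦ i)).mono_set hQΩ).const_mul _, setIntegral_const, hQN,
    smul_eq_mul, inv_mul_le_iff₀ hN] at hle
  refine hle.trans_eq ?_
  simp only [integral_const_mul, mul_left_comm _ N, ← Finset.mul_sum]
  ring

end Jensen

end YoungMeasure

/-! ### Mollification in `L¹` -/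

section Mollification

open ContinuousLinearMap Convolution

variable {G V : Type*} [NormedAddCommGroup G] [NormedSpace ℝ G] [FiniteDimensional ℝ G]
  [MeasurableSpace G] [BorelSpace G] {μ : Measure G} [μ.IsAddHaarMeasure]
  [NormedAddCommGroup V] [NormedSpace ℝ V] {κ : G → ℝ} {f g : G → V}

lemma integral_norm_convolution_le (hκ : ∀ x, 0 ≤ κ x) (hκ1 : ∫ x, κ x ∂μ = 1)
    (hf : Integrable f μ) : ∫ x, ‖(κ ⋆[lsmul ℝ ℝ, μ] f) x‖ ∂μ ≤ ∫ x, ‖f x‖ ∂μ := by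
  have hκi : Integrable κ μ := integrable_of_integral_eq_one hκ1
  have hle : ∀ x, ‖(κ ⋆[lsmul ℝ ℝ, μ] f) x‖ ≤ (κ ⋆[lsmul ℝ ℝ, μ] fun y => ‖f y‖) x := by
    refine fun x => (norm_integral_le_integral_norm _).trans_eq (integral_congr_ae ?_)
    refine ae_of_all _ fun y => ?_
    simp only [lsmul_apply, norm_smul, Real.norm_of_nonneg (hκ y), smul_eq_mul]
  calc ∫ x, ‖(κ ⋆[lsmul ℝ ℝ, μ] f) x‖ ∂μ
      ≤ ∫ x, (κ ⋆[lsmul ℝ ℝ, μ] fun y => ‖f y‖) x ∂μ :=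
        integral_mono (hκi.integrable_convolution _ hf).norm
          (hκi.integrable_convolution _ hf.norm) hle
    _ = ∫ x, ‖f x‖ ∂μ := by
        rw [integral_convolution (lsmul ℝ ℝ) hκi hf.norm, hκ1, lsmul_apply, one_smul]

lemma ae_norm_convolution_sub_le (hκ : Integrable κ μ) (hf : Integrable f μ)
    (hg : Integrable g μ) {r : ℝ} (hgr : ∀ x, dist ((κ ⋆[lsmul ℝ ℝ, μ] g) x) (g x) ≤ r) :
    ∀ᵐ x ∂μ, ‖(κ ⋆[lsmul ℝ ℝ, μ] f) x - f x‖
      ≤ ‖(κ ⋆[lsmul ℝ ℝ, μ] fun y => f y - g y) x‖ + ‖f x - g x‖ + r := by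
  filter_upwards [hκ.ae_convolution_exists (lsmul ℝ ℝ) hf,
    hκ.ae_convolution_exists (lsmul ℝ ℝ) hg] with x hfx hgx
  have hsub : (κ ⋆[lsmul ℝ ℝ, μ] fun y => f y - g y) x
      = (κ ⋆[lsmul ℝ ℝ, μ] f) x - (κ ⋆[lsmul ℝ ℝ, μ] g) x := by
    simp only [convolution, map_sub]
    exact integral_sub hfx hgx
  have hsplit : (κ ⋆[lsmul ℝ ℝ, μ] f) x - f x
      = (κ ⋆[lsmul ℝ ℝ, μ] fun y => f y - g y) x - (f x - g x)
        + ((κ ⋆[lsmul ℝ ℝ, μ] g) x - g x) := by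
    rw [hsub]
    abel
  rw [hsplit]
  exact (norm_add_le _ _).trans
    (add_le_add (norm_sub_le _ _) ((dist_eq_norm _ _).symm.trans_le (hgr x)))

lemma setIntegral_norm_convolution_sub_le (hκ : ∀ x, 0 ≤ κ x) (hκ1 : ∫ x, κ x ∂μ = 1)
    (hf : Integrable f μ) (hg : Integrable g μ) {s : Set G} (hs : μ s < ⊤) {r : ℝ}
    (hgr : ∀ x, dist ((κ ⋆[lsmul ℝ ℝ, μ] g) x) (g x) ≤ r) :
    ∫ x in s, ‖(κ ⋆[lsmul ℝ ℝ, μ] f) x - f x‖ ∂μ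
      ≤ 2 * ∫ x, ‖f x - g x‖ ∂μ + μ.real s * r := by
  have hκi : Integrable κ μ := integrable_of_integral_eq_one hκ1
  have hfg : Integrable (fun x => f x - g x) μ := hf.sub hg
  have hconv := hκi.integrable_convolution (lsmul ℝ ℝ) hfg
  have hsum : IntegrableOn
      (fun x => ‖(κ ⋆[lsmul ℝ ℝ, μ] fun y => f y - g y) x‖ + ‖f x - g x‖) s μ :=
    hconv.norm.integrableOn.add hfg.norm.integrableOn
  calc ∫ x in s, ‖(κ ⋆[lsmul ℝ ℝ, μ] f) x - f x‖ ∂μ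
      ≤ ∫ x in s, (‖(κ ⋆[lsmul ℝ ℝ, μ] fun y => f y - g y) x‖ + ‖f x - g x‖ + r) ∂μ :=
        integral_mono_ae ((hκi.integrable_convolution _ hf).sub hf).norm.integrableOn
          (hsum.add (integrableOn_const hs.ne))
          (ae_restrict_of_ae (ae_norm_convolution_sub_le hκi hf hg hgr))
    _ = ∫ x in s, ‖(κ ⋆[lsmul ℝ ℝ, μ] fun y => f y - g y) x‖ ∂μ + ∫ x in s, ‖f x - g x‖ ∂μ
          + μ.real s * r := by
        rw [integral_add hsum (integrableOn_const hs.ne),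
          integral_add hconv.norm.integrableOn hfg.norm.integrableOn, setIntegral_const,
          smul_eq_mul]
    _ ≤ 2 * ∫ x, ‖f x - g x‖ ∂μ + μ.real s * r := by
        have hconv_le := (setIntegral_le_integral hconv.norm (ae_of_all _ fun _ => norm_nonneg _)
          (s := s)).trans (integral_norm_convolution_le hκ hκ1 hfg)
        have hfg_le := setIntegral_le_integral hfg.norm (ae_of_all _ fun _ => norm_nonneg _)
          (s := s)
        linarith

lemma exists_forall_setIntegral_norm_convolution_sub_lt [CompleteSpace V]
    (hf : Integrable f μ) {s : Set G} (hs : μ s < ⊤) {ε : ℝ} (hε : 0 < ε) :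
    ∃ t₀ > 0, ∀ κ : G → ℝ, (∀ x, 0 ≤ κ x) → ∫ x, κ x ∂μ = 1 →
      Function.support κ ⊆ Metric.ball 0 t₀ →
        ∫ x in s, ‖(κ ⋆[lsmul ℝ ℝ, μ] f) x - f x‖ ∂μ < ε := by
  obtain ⟨g, hgc, hfg, hg, hgi⟩ :=
    hf.exists_hasCompactSupport_integral_sub_le (show 0 < ε / 8 by positivity)
  have : 0 ≤ μ.real s := measureReal_nonneg
  obtain ⟨t₀, ht₀, hgt₀⟩ := Metric.uniformContinuous_iff.1
    (hgc.uniformContinuous_of_continuous hg) (ε / (2 * (μ.real s + 1))) (by positivity)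
  refine ⟨t₀, ht₀, fun κ hκ hκ1 hsupp => ?_⟩
  have hgr : ∀ x, dist ((κ ⋆[lsmul ℝ ℝ, μ] g) x) (g x) ≤ ε / (2 * (μ.real s + 1)) := fun x =>
    dist_convolution_le (by positivity) hsupp hκ hκ1 hg.aestronglyMeasurable
      fun y hy => (hgt₀ (Metric.mem_ball.1 hy)).le
  have hr : μ.real s * (ε / (2 * (μ.real s + 1))) ≤ ε / 2 := by
    rw [mul_div_assoc', div_le_div_iff₀ (by positivity) (by positivity)]
    nlinarith
  linarith [setIntegral_norm_convolution_sub_le hκ hκ1 hf hgi hs hgr]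

end Mollification

section MollificationKernel

variable {n : ℕ} {ρ : Dom n → ℝ} {t : ℝ}

lemma integral_mollK (hρ : ∫ x, ρ x = 1) (ht : 0 < t) : ∫ x, mollK ρ t x = 1 := by
  unfold mollK
  rw [integral_const_mul, Measure.integral_comp_inv_smul_of_nonneg _ _ ht.le, hρ]
  simp [ht.ne']

lemma mollK_nonneg (hρ : ∀ x, 0 ≤ ρ x) (ht : 0 < t) (x : Dom n) : 0 ≤ mollK ρ t x :=
  mul_nonneg (by positivity) (hρ _)

lemma support_mollK_subset (hρ : tsupport ρ ⊆ closedUnitCube n) (ht : 0 < t) :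
    Function.support (mollK ρ t) ⊆ Metric.ball 0 t := by
  intro x hx
  have hρx : ρ (t⁻¹ • x) ≠ 0 := fun h => hx (by simp [mollK, h])
  rw [mem_ball_zero_iff, pi_norm_lt_iff ht]
  intro i
  have hxi := hρ (subset_tsupport _ hρx) i (Set.mem_univ i)
  rw [Pi.smul_apply, smul_eq_mul, Set.mem_Icc, le_inv_mul_iff₀ ht, inv_mul_le_iff₀ ht] at hxi
  rw [Real.norm_eq_abs, abs_lt]
  constructor <;> linarith [hxi.1, hxi.2]

end MollificationKernel

namespace YoungMeasure

variable {n : ℕ} {V : Type*} [NormedAddCommGroup V] [InnerProductSpace ℝ V]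
  [FiniteDimensional ℝ V] [MeasurableSpace V] [BorelSpace V] {Ω : Set (Dom n)}
  (Y : YoungMeasure n V Ω) {ρ : Dom n → ℝ}

open ContinuousLinearMap Convolution

lemma mollACpart_eq_convolution (hΩ : MeasurableSet Ω) (t : ℝ) :
    Y.mollACpart ρ t = (mollK ρ t ⋆[lsmul ℝ ℝ] Ω.indicator Y.baryAC) := by
  ext1 x
  rw [convolution_lsmul_swap, mollACpart, ← integral_indicator hΩ]
  simp only [Set.indicator_smul_apply]

lemma exists_forall_setIntegral_norm_mollACpart_sub_lt (hΩ : MeasurableSet Ω)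
    (hΩfin : volume Ω < ⊤) (hρ : ∀ x, 0 ≤ ρ x) (hsupp : tsupport ρ ⊆ closedUnitCube n)
    (hρ1 : ∫ x, ρ x = 1) {ε : ℝ} (hε : 0 < ε) :
    ∃ t₀ > 0, ∀ t ∈ Set.Ioc 0 t₀, IntegrableOn (Y.mollACpart ρ t) Ω ∧
      ∫ x in Ω, ‖Y.mollACpart ρ t x - Y.baryAC x‖ < ε := by
  have hbary : Integrable (Ω.indicator Y.baryAC) :=
    (Y.integrableOn_baryAC hΩfin).integrable_indicator hΩ
  obtain ⟨t₀, ht₀, hlt⟩ := exists_forall_setIntegral_norm_convolution_sub_lt hbary hΩfin hε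
  refine ⟨t₀, ht₀, fun t ht => ?_⟩
  have hκ1 := integral_mollK hρ1 ht.1
  rw [mollACpart_eq_convolution Y hΩ]
  refine ⟨((integrable_of_integral_eq_one hκ1).integrable_convolution _ hbary).integrableOn, ?_⟩
  have hclose := hlt _ (mollK_nonneg hρ ht.1) hκ1
    ((support_mollK_subset hsupp ht.1).trans (Metric.ball_subset_ball ht.2))
  rwa [setIntegral_congr_fun hΩ fun x hx => by rw [Set.indicator_of_mem hx]] at hclose

end YoungMeasure

/-! ### Filling a bounded open set with small cells -/

section Mesh

variable {n : ℕ} {Ω : Set (Dom n)} {M : ℝ} {F : Finset (Fin n → ℤ)}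

lemma finite_setOf_cell_subset (hΩ : Bornology.IsBounded Ω) (hM : 0 < M) :
    {k : Fin n → ℤ | cell M k ⊆ Ω}.Finite := by
  obtain ⟨R, hR⟩ := hΩ.exists_norm_le
  obtain ⟨m, hm⟩ := exists_int_gt (M * R)
  refine (Set.finite_Icc (fun _ : Fin n => -m) (fun _ => m)).subset fun k hk => ?_
  have hcoord : ∀ i, |(k i : ℝ)| ≤ m := fun i => by
    have hi := (norm_le_pi_norm (M⁻¹ • latticePoint k) i).trans
      (hR _ (hk (inv_smul_latticePoint_mem_cell hM.ne' k)))
    simp only [Pi.smul_apply, smul_eq_mul, latticePoint, norm_mul, Real.norm_eq_abs, abs_inv,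
      abs_of_pos hM, inv_mul_le_iff₀ hM] at hi
    exact hi.trans hm.le
  exact ⟨fun i => mod_cast (abs_le.1 (hcoord i)).1, fun i => mod_cast (abs_le.1 (hcoord i)).2⟩

lemma ae_eventually_exists_mem_cell_subset (hΩ : IsOpen Ω) :
    ∀ᵐ x ∂volume.restrict Ω, ∀ᶠ m : ℕ in atTop,
      ∃ k, x ∈ cell ((m : ℝ) + 1) k ∧ cell ((m : ℝ) + 1) k ⊆ Ω := by
  have hcover : ∀ᵐ x : Dom n, ∀ m : ℕ, ∃ k, x ∈ cell ((m : ℝ) + 1) k :=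
    ae_all_iff.2 fun m => ae_exists_mem_cell (by positivity)
  filter_upwards [ae_restrict_of_ae hcover, ae_restrict_mem hΩ.measurableSet] with x hx hxΩ
  obtain ⟨r, hr, hball⟩ := Metric.isOpen_iff.1 hΩ x hxΩ
  filter_upwards [(tendsto_one_div_add_atTop_nhds_zero_nat (𝕜 := ℝ)).eventually_lt_const hr]
    with m hm
  obtain ⟨k, hk⟩ := hx m
  refine ⟨k, hk, fun y hy => hball (Metric.mem_ball.2 ?_)⟩
  exact (dist_le_of_mem_cell (by positivity) hy hk).trans_lt (by rwa [← one_div])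

lemma tendsto_setIntegral_zero_of_ae_eventually_notMem {α : Type*} [MeasurableSpace α]
    {μ : Measure α} {R : ℕ → Set α} (hR : ∀ m, MeasurableSet (R m)) {b : α → ℝ}
    (hb : Integrable b μ) (h : ∀ᵐ x ∂μ, ∀ᶠ m in atTop, x ∉ R m) :
    Tendsto (fun m => ∫ x in R m, b x ∂μ) atTop (𝓝 0) := by
  simp only [← integral_indicator (hR _)]
  rw [← integral_zero α ℝ (μ := μ)]
  refine tendsto_integral_of_dominated_convergence (fun x => ‖b x‖)
    (fun m => hb.aestronglyMeasurable.indicator (hR m)) hb.norm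
    (fun m => ae_of_all _ fun x => norm_indicator_le_norm_self b x) ?_
  filter_upwards [h] with x hx
  exact tendsto_const_nhds.congr' (hx.mono fun m hm => (Set.indicator_of_notMem hm b).symm)

lemma measurableSet_biUnion_cell (M : ℝ) (F : Finset (Fin n → ℤ)) :
    MeasurableSet (⋃ k ∈ F, cell M k) :=
  Finset.measurableSet_biUnion _ fun k _ => measurableSet_cell M k

lemma exists_cells_setIntegral_diff_lt (hΩo : IsOpen Ω) (hΩb : Bornology.IsBounded Ω)
    {b : Dom n → ℝ} (hb : IntegrableOn b Ω) {s δ : ℝ} (hs : 0 < s) (hδ : 0 < δ) :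
    ∃ M : ℝ, 1 ≤ M ∧ M⁻¹ < s ∧ ∃ F : Finset (Fin n → ℤ), (∀ k ∈ F, cell M k ⊆ Ω) ∧
      ∫ x in Ω \ ⋃ k ∈ F, cell M k, b x < δ := by
  have hfin : ∀ m : ℕ, {k : Fin n → ℤ | cell ((m : ℝ) + 1) k ⊆ Ω}.Finite :=
    fun m => finite_setOf_cell_subset hΩb (by positivity)
  have hmeas : ∀ m : ℕ, MeasurableSet (⋃ k ∈ (hfin m).toFinset, cell ((m : ℝ) + 1) k) :=
    fun m => measurableSet_biUnion_cell _ _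
  have hlim := tendsto_setIntegral_zero_of_ae_eventually_notMem (fun m => (hmeas m).compl) hb
    ((ae_eventually_exists_mem_cell_subset hΩo).mono fun x hx => hx.mono fun m ⟨k, hxk, hk⟩ =>
      not_not.2 (Set.mem_biUnion ((hfin m).mem_toFinset.2 hk) hxk))
  obtain ⟨m, hsmall, hms⟩ := ((hlim.eventually_lt_const hδ).and
    ((tendsto_one_div_add_atTop_nhds_zero_nat (𝕜 := ℝ)).eventually_lt_const hs)).exists
  refine ⟨m + 1, by simp, by rwa [← one_div], (hfin m).toFinset,
    fun k hk => (hfin m).mem_toFinset.1 hk, ?_⟩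
  rwa [Measure.restrict_restrict (hmeas m).compl, Set.inter_comm, ← Set.sdiff_eq] at hsmall

lemma sum_setIntegral_cell_le (hF : ∀ k ∈ F, cell M k ⊆ Ω) {f : Dom n → ℝ}
    (hf : IntegrableOn f Ω) (hf0 : ∀ᵐ x ∂volume.restrict Ω, 0 ≤ f x) :
    ∑ k ∈ F, ∫ x in cell M k, f x ≤ ∫ x in Ω, f x := by
  rw [← setIntegral_biUnion_cell M F fun k hk => hf.mono_set (hF k hk)]
  exact setIntegral_mono_set hf hf0 (Set.iUnion₂_subset hF).eventuallyLE

lemma setIntegral_eq_sum_cell_add (hF : ∀ k ∈ F, cell M k ⊆ Ω) {f : Dom n → ℝ}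
    (hf : IntegrableOn f Ω) :
    ∫ x in Ω, f x = (∑ k ∈ F, ∫ x in cell M k, f x) + ∫ x in Ω \ ⋃ k ∈ F, cell M k, f x := by
  rw [← setIntegral_biUnion_cell M F fun k hk => hf.mono_set (hF k hk),
    ← integral_inter_add_sdiff (measurableSet_biUnion_cell M F) hf,
    Set.inter_eq_right.2 (Set.iUnion₂_subset hF)]

lemma sum_inv_pow_le_volumeReal (hM : 0 ≤ M) (hF : ∀ k ∈ F, cell M k ⊆ Ω)
    (hΩ : volume Ω < ⊤) : ∑ _k ∈ F, (M ^ n)⁻¹ ≤ volume.real Ω := by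
  simpa [volumeReal_cell hM] using
    sum_setIntegral_cell_le hF (integrableOn_const (C := (1 : ℝ)) hΩ.ne)
      (ae_of_all _ fun _ => zero_le_one)

end Mesh

section PiecewiseConstant

variable {n : ℕ} {E : Type*} [NormedAddCommGroup E] [NormedSpace ℝ E] {Ω : Set (Dom n)}

lemma exists_continuous_setIntegral_norm_sub_le (hΩ : MeasurableSet Ω) {z : Dom n → E}
    (hz : IntegrableOn z Ω) {τ : ℝ} (hτ : 0 < τ) :
    ∃ g : Dom n → E, UniformContinuous g ∧ Integrable g ∧ ∫ x in Ω, ‖z x - g x‖ ≤ τ := by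
  have hzΩ := hz.integrable_indicator hΩ
  obtain ⟨g, hsupp, hzg, hcont, hg⟩ := hzΩ.exists_hasCompactSupport_integral_sub_le hτ
  refine ⟨g, hsupp.uniformContinuous_of_continuous hcont, hg, ?_⟩
  calc ∫ x in Ω, ‖z x - g x‖
      = ∫ x in Ω, ‖Ω.indicator z x - g x‖ :=
        setIntegral_congr_fun hΩ fun x hx => by simp only [Set.indicator_of_mem hx]
    _ ≤ ∫ x, ‖Ω.indicator z x - g x‖ :=
        setIntegral_le_integral (hzΩ.sub hg).norm (ae_of_all _ fun _ => norm_nonneg _)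
    _ ≤ τ := hzg

lemma exists_forall_sum_setIntegral_cell_norm_sub_le (hΩ : MeasurableSet Ω)
    (hΩfin : volume Ω < ⊤) {z : Dom n → E} (hz : IntegrableOn z Ω) {τ : ℝ} (hτ : 0 < τ) :
    ∃ g : Dom n → E, ∃ s > 0, ∀ (M : ℝ) (F : Finset (Fin n → ℤ)), 0 < M → M⁻¹ < s →
      (∀ k ∈ F, cell M k ⊆ Ω) →
      ∑ k ∈ F, ∫ x in cell M k, ‖z x - g (M⁻¹ • latticePoint k)‖ ≤ τ := by
  have := isFiniteMeasure_restrict.2 hΩfin.ne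
  obtain ⟨g, hguc, hg, hzg⟩ := exists_continuous_setIntegral_norm_sub_le hΩ hz (half_pos hτ)
  set d := τ / (2 * (volume.real Ω + 1)) with hd
  have hd0 : 0 < d := by positivity
  obtain ⟨s, hs, hgs⟩ := Metric.uniformContinuous_iff.1 hguc d hd0
  refine ⟨g, s, hs, fun M F hM hMs hF => ?_⟩
  have hnorm : IntegrableOn (fun x => ‖z x - g x‖) Ω := (hz.sub hg.integrableOn).norm
  have hbound : IntegrableOn (fun x => ‖z x - g x‖ + d) Ω := hnorm.add (integrable_const d)
  have hcell : ∀ k ∈ F, ∫ x in cell M k, ‖z x - g (M⁻¹ • latticePoint k)‖ ≤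
      ∫ x in cell M k, (‖z x - g x‖ + d) := fun k hk => by
    have := isFiniteMeasure_restrict_cell hM k
    refine setIntegral_mono_on ((hz.mono_set (hF k hk)).sub (integrable_const _)).norm
      (hbound.mono_set (hF k hk)) (measurableSet_cell M k) fun x hx => ?_
    have hclose := hgs ((dist_le_of_mem_cell hM hx
      (inv_smul_latticePoint_mem_cell hM.ne' k)).trans_lt hMs)
    rw [dist_eq_norm] at hclose
    linarith [norm_sub_le_norm_sub_add_norm_sub (z x) (g x) (g (M⁻¹ • latticePoint k))]
  calc ∑ k ∈ F, ∫ x in cell M k, ‖z x - g (M⁻¹ • latticePoint k)‖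
      ≤ ∑ k ∈ F, ∫ x in cell M k, (‖z x - g x‖ + d) := Finset.sum_le_sum hcell
    _ ≤ ∫ x in Ω, (‖z x - g x‖ + d) :=
        sum_setIntegral_cell_le hF hbound (ae_of_all _ fun _ => by positivity)
    _ = (∫ x in Ω, ‖z x - g x‖) + volume.real Ω * d := by
        rw [integral_add hnorm (integrable_const d), setIntegral_const, smul_eq_mul]
    _ ≤ τ / 2 + τ / 2 := by
        gcongr
        rw [hd, mul_div_assoc', div_le_div_iff₀ (by positivity) two_pos]
        nlinarith [hτ]
    _ = τ := add_halves τ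

end PiecewiseConstant

/-! ### Weights from the Lipschitz unit ball -/

section Weight

variable {n : ℕ} {Ω : Set (Dom n)} {η : Dom n → ℝ}

lemma etaLipUnit.abs_le_one (h : etaLipUnit Ω η) (hΩ : Bornology.IsBounded Ω) {x : Dom n}
    (hx : x ∈ Ω) : |η x| ≤ 1 := by
  obtain ⟨K, hK, hsup⟩ := h
  exact abs_le_one_of_biSup_add_le_one hΩ.closure hK hsup (subset_closure hx)

lemma etaLipUnit.lipschitzOnWith (h : etaLipUnit Ω η) : LipschitzOnWith 1 η Ω := by
  obtain ⟨K, hK, hsup⟩ := h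
  exact (lipschitzOnWith_one_of_biSup_add_le_one hK hsup).mono subset_closure

lemma integrableOn_mul_of_abs_le_one {G : Dom n → ℝ} (hΩ : MeasurableSet Ω)
    (hη : ∀ x ∈ Ω, |η x| ≤ 1) (hηm : AEStronglyMeasurable η (volume.restrict Ω))
    (hG : IntegrableOn G Ω) : IntegrableOn (fun x => η x * G x) Ω :=
  Integrable.bdd_mul (c := 1) hG hηm (ae_restrict_of_forall_mem hΩ hη)

lemma abs_setIntegral_mul_le_of_abs_le_one {G Q : Dom n → ℝ} (hΩ : MeasurableSet Ω)
    (hη : ∀ x ∈ Ω, |η x| ≤ 1) (hQ : IntegrableOn Q Ω)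
    (hGQ : ∀ᵐ x ∂volume.restrict Ω, |G x| ≤ Q x) : |∫ x in Ω, η x * G x| ≤ ∫ x in Ω, Q x := by
  rw [← Real.norm_eq_abs]
  refine norm_integral_le_of_norm_le hQ ?_
  filter_upwards [hGQ, ae_restrict_mem hΩ] with x hx hxΩ
  rw [norm_mul]
  exact (mul_le_of_le_one_left (norm_nonneg _) (hη x hxΩ)).trans hx

lemma abs_setIntegral_cell_mul_le {M : ℝ} (hM : 0 < M) {k : Fin n → ℤ}
    (hη : ∀ x ∈ cell M k, |η x| ≤ 1) (hηL : LipschitzOnWith 1 η (cell M k)) {G Q : Dom n → ℝ}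
    (hG : IntegrableOn G (cell M k)) (hQ : IntegrableOn Q (cell M k))
    (hGQ : ∀ᵐ x ∂volume.restrict (cell M k), |G x| ≤ Q x) :
    |∫ x in cell M k, η x * G x| ≤ |∫ x in cell M k, G x| + M⁻¹ * ∫ x in cell M k, Q x := by
  have hcenter := inv_smul_latticePoint_mem_cell hM.ne' k
  set c := M⁻¹ • latticePoint k
  have hmul := integrableOn_mul_of_abs_le_one (measurableSet_cell M k) hη
    (hηL.continuousOn.aestronglyMeasurable (measurableSet_cell M k)) hG
  have hosc : |∫ x in cell M k, (η x * G x - η c * G x)| ≤ M⁻¹ * ∫ x in cell M k, Q x := by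
    rw [← integral_const_mul, ← Real.norm_eq_abs]
    refine norm_integral_le_of_norm_le (hQ.const_mul _) ?_
    filter_upwards [hGQ, ae_restrict_mem (measurableSet_cell M k)] with x hx hxk
    have hηx : |η x - η c| ≤ M⁻¹ := by
      simpa [Real.dist_eq] using
        (hηL.dist_le_mul x hxk c hcenter).trans (by simpa using dist_le_of_mem_cell hM hxk hcenter)
    rw [← sub_mul, norm_mul]
    exact mul_le_mul hηx hx (abs_nonneg _) (by positivity)
  have hmean : |η c * ∫ x in cell M k, G x| ≤ |∫ x in cell M k, G x| := by
    rw [abs_mul]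
    exact mul_le_of_le_one_left (abs_nonneg _) (hη c hcenter)
  rw [integral_sub hmul (hG.const_mul _), integral_const_mul] at hosc
  linarith [abs_sub_abs_le_abs_sub (∫ x in cell M k, η x * G x) (η c * ∫ x in cell M k, G x)]

lemma abs_setIntegral_mul_le_sum_cell_add (hΩ : MeasurableSet Ω) {M : ℝ} (hM : 0 < M)
    {F : Finset (Fin n → ℤ)} (hF : ∀ k ∈ F, cell M k ⊆ Ω) (hη : ∀ x ∈ Ω, |η x| ≤ 1)
    (hηL : LipschitzOnWith 1 η Ω) {G Q : Dom n → ℝ} (hG : IntegrableOn G Ω)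
    (hQ : IntegrableOn Q Ω) (hGQ : ∀ᵐ x ∂volume.restrict Ω, |G x| ≤ Q x) :
    |∫ x in Ω, η x * G x| ≤ (∑ k ∈ F, |∫ x in cell M k, G x|) + M⁻¹ * (∫ x in Ω, Q x) +
      ∫ x in Ω \ ⋃ k ∈ F, cell M k, Q x := by
  have hmul := integrableOn_mul_of_abs_le_one hΩ hη
    (hηL.continuousOn.aestronglyMeasurable hΩ) hG
  have hrest : |∫ x in Ω \ ⋃ k ∈ F, cell M k, η x * G x| ≤ ∫ x in Ω \ ⋃ k ∈ F, cell M k, Q x :=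
    abs_setIntegral_mul_le_of_abs_le_one (hΩ.diff (measurableSet_biUnion_cell M F))
      (fun x hx => hη x hx.1) (hQ.mono_set Set.sdiff_subset)
      (ae_restrict_of_ae_restrict_of_subset Set.sdiff_subset hGQ)
  have hcells : |∑ k ∈ F, ∫ x in cell M k, η x * G x| ≤
      (∑ k ∈ F, |∫ x in cell M k, G x|) + M⁻¹ * ∑ k ∈ F, ∫ x in cell M k, Q x := by
    refine (Finset.abs_sum_le_sum_abs _ _).trans ?_
    rw [Finset.mul_sum, ← Finset.sum_add_distrib]
    exact Finset.sum_le_sum fun k hk => abs_setIntegral_cell_mul_le hM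
      (fun x hx => hη x (hF k hk hx)) (hηL.mono (hF k hk)) (hG.mono_set (hF k hk))
      (hQ.mono_set (hF k hk)) (ae_restrict_of_ae_restrict_of_subset (hF k hk) hGQ)
  have hQsum : M⁻¹ * ∑ k ∈ F, ∫ x in cell M k, Q x ≤ M⁻¹ * ∫ x in Ω, Q x := by
    gcongr
    exact sum_setIntegral_cell_le hF hQ (hGQ.mono fun x hx => (abs_nonneg _).trans hx)
  rw [setIntegral_eq_sum_cell_add hF hmul]
  linarith [abs_add_le (∑ k ∈ F, ∫ x in cell M k, η x * G x)
    (∫ x in Ω \ ⋃ k ∈ F, cell M k, η x * G x)]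

end Weight

lemma sobNorm_pasteCells_le_mul_volumeReal {n : ℕ} {U : Type*} [NormedAddCommGroup U]
    [NormedSpace ℝ U] {l : ℕ} {M : ℝ} (hM : 1 ≤ M) {F : Finset (Fin n → ℤ)}
    {u : (Fin n → ℤ) → Dom n → U} (hu : ∀ k ∈ F, CcSmooth (unitCube n) (u k)) {δ : ℝ}
    (hδ : 0 ≤ δ) (huδ : ∀ k ∈ F, sobNorm l (u k) ≤ δ) {Ω : Set (Dom n)} (hΩ : volume Ω < ⊤)
    (hF : ∀ k ∈ F, cell M k ⊆ Ω) : sobNorm l (pasteCells l M F u) ≤ volume.real Ω * δ := by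
  have hM0 : 0 < M := zero_lt_one.trans_le hM
  calc sobNorm l (pasteCells l M F u)
      ≤ M⁻¹ * ∑ k ∈ F, (M ^ n)⁻¹ * sobNorm l (u k) := sobNorm_pasteCells_le l hM hu
    _ ≤ ∑ k ∈ F, (M ^ n)⁻¹ * sobNorm l (u k) :=
        mul_le_of_le_one_left (Finset.sum_nonneg fun k _ =>
          mul_nonneg (by positivity) (sobNorm_nonneg l (u k))) (inv_le_one_of_one_le₀ hM)
    _ ≤ ∑ _k ∈ F, (M ^ n)⁻¹ * δ := by gcongr with k hk; exact huδ k hk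
    _ ≤ volume.real Ω * δ := by
        rw [← Finset.sum_mul]
        gcongr
        exact sum_inv_pow_le_volumeReal hM0.le hF hΩ

/-! ### Generating the absolutely continuous part of a Young measure -/

namespace YoungMeasure

section Defect

variable {n : ℕ} {U V : Type*} [NormedAddCommGroup V] [InnerProductSpace ℝ V]
  [FiniteDimensional ℝ V] [MeasurableSpace V] [BorelSpace V] {Ω : Set (Dom n)}
  [NormedAddCommGroup U] [NormedSpace ℝ U]

/-- The density by which the field `ν̄ + λ^a ν̄^∞ + ℬψ` fails to reproduce the pairing of the Young
measure with `Φ`. -/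
def defect (Y : YoungMeasure n V Ω) (B : (Fin n → ℕ) → (U →L[ℝ] V)) (l : ℕ) (ψ : Dom n → U)
    (Φ : V → ℝ) (x : Dom n) : ℝ :=
  Y.recPairing Φ x - Φ (Y.baryAC x + opApply B l ψ x)

/-- A common dominating function for the defects of all integrands `Φ` with `‖TΦ‖_LIP ≤ 1`. -/
def defectBound (Y : YoungMeasure n V Ω) (B : (Fin n → ℕ) → (U →L[ℝ] V)) (l : ℕ)
    (ψ : Dom n → U) (x : Dom n) : ℝ :=
  Y.massDensity x + (1 + ‖Y.baryAC x + opApply B l ψ x‖)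

variable (Y : YoungMeasure n V Ω) (B : (Fin n → ℕ) → (U →L[ℝ] V)) (l : ℕ) {ψ : Dom n → U}
  {Φ Ψ : V → ℝ}

lemma defectBound_nonneg (ψ : Dom n → U) (x : Dom n) : 0 ≤ Y.defectBound B l ψ x :=
  add_nonneg (Y.massDensity_nonneg x) (by positivity)

lemma integrableOn_baryAC_add_opApply (hΩ : volume Ω < ⊤) (hψ : CcSmooth Ω ψ) :
    IntegrableOn (fun x => Y.baryAC x + opApply B l ψ x) Ω :=
  (Y.integrableOn_baryAC hΩ).add (hψ.integrable_opApply B l).integrableOn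

lemma integrableOn_comp_baryAC_add_opApply (hΩ : volume Ω < ⊤) (hψ : CcSmooth Ω ψ)
    (hΦ : TLipUnit Φ) : IntegrableOn (fun x => Φ (Y.baryAC x + opApply B l ψ x)) Ω :=
  have := isFiniteMeasure_restrict.2 hΩ.ne
  integrable_comp_of_lipschitzWith hΦ.lipschitzWith (Y.integrableOn_baryAC_add_opApply B l hΩ hψ)

lemma integrableOn_defect (hΩ : volume Ω < ⊤) (hψ : CcSmooth Ω ψ) (hΦ : TLipUnit Φ) :
    IntegrableOn (Y.defect B l ψ Φ) Ω :=
  (Y.integrableOn_recPairing hΩ hΦ).sub (Y.integrableOn_comp_baryAC_add_opApply B l hΩ hψ hΦ)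

lemma integrableOn_defectBound (hΩ : volume Ω < ⊤) (hψ : CcSmooth Ω ψ) :
    IntegrableOn (Y.defectBound B l ψ) Ω :=
  (Y.integrableOn_massDensity hΩ).add
    (Y.integrableOn_comp_baryAC_add_opApply B l hΩ hψ tLipUnit_one_add_norm)

lemma ae_abs_defect_le (ψ : Dom n → U) (hΦ : TLipUnit Φ) :
    ∀ᵐ x ∂volume.restrict Ω, |Y.defect B l ψ Φ x| ≤ Y.defectBound B l ψ x := by
  filter_upwards [Y.ae_abs_recPairing_le hΦ] with x hx
  exact (abs_sub _ _).trans (add_le_add hx (hΦ.abs_apply_le _))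

lemma ae_abs_defect_sub_le (ψ : Dom n → U) (hΦ : TLipUnit Φ) (hΨ : TLipUnit Ψ) {δ : ℝ}
    (hd : ∀ z, ‖z‖ ≤ 1 → |Tfun Ψ z - Tfun Φ z| ≤ δ) :
    ∀ᵐ x ∂volume.restrict Ω,
      |Y.defect B l ψ Ψ x - Y.defect B l ψ Φ x| ≤ δ * Y.defectBound B l ψ x := by
  filter_upwards [Y.ae_abs_recPairing_sub_le hΦ hΨ hd] with x hx
  unfold defect defectBound
  rw [sub_sub_sub_comm, mul_add]
  exact (abs_sub _ _).trans (add_le_add hx (abs_sub_le_of_abs_Tfun_sub_le hd _))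

/-- The defects of the integrands in `S` have small means over the cells `cell M k`, `k ∈ F`, of
`Ω`, and are small in `L¹` on the rest of `Ω`. -/
structure CellwiseSmallDefect (Y : YoungMeasure n V Ω) (B : (Fin n → ℕ) → (U →L[ℝ] V)) (l : ℕ)
    (ψ : Dom n → U) (S : Set (V → ℝ)) (M : ℝ) (F : Finset (Fin n → ℤ)) (τ : ℝ) : Prop where
  cell_subset : ∀ k ∈ F, cell M k ⊆ Ω
  sum_abs_le : ∀ Φ ∈ S, ∑ k ∈ F, |∫ x in cell M k, Y.defect B l ψ Φ x| ≤ τ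
  setIntegral_diff_le : ∫ x in Ω \ ⋃ k ∈ F, cell M k, Y.defectBound B l ψ x ≤ τ

end Defect

section Construction

variable {n : ℕ} {U V W : Type*} [NormedAddCommGroup V] [InnerProductSpace ℝ V]
  [FiniteDimensional ℝ V] [MeasurableSpace V] [BorelSpace V] {Ω : Set (Dom n)}
  [NormedAddCommGroup W] [NormedSpace ℝ W] [NormedAddCommGroup U] [NormedSpace ℝ U]
  {A : (Fin n → ℕ) → (V →L[ℝ] W)} {k : ℕ} {B : (Fin n → ℕ) → (U →L[ℝ] V)} {l : ℕ}
  {Y : YoungMeasure n V Ω} {S : Finset (V → ℝ)} {M : ℝ} {F : Finset (Fin n → ℤ)} {τ : ℝ}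

lemma JensenAE.exists_ccSmooth_abs_setIntegral_cell_sub_le (hJ : Y.JensenAE A k)
    (hex : ExactPotential A k B l) (hn : 0 < n) (hΩ : volume Ω < ⊤)
    (hS : ∀ Φ ∈ S, MemH Φ ∧ TLipUnit Φ) (hM : 0 < M) {j : Fin n → ℤ} (hj : cell M j ⊆ Ω) (a : V)
    {d ε : ℝ} (hd : 0 < d) (hε : 0 < ε) :
    ∃ u : Dom n → U, CcSmooth (unitCube n) u ∧ sobNorm l u < ε ∧ ∀ Φ ∈ S,
      |(∫ x in cell M j, Y.recPairing Φ x) - (M ^ n)⁻¹ * cubeEnergy B l Φ a u| ≤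
        3 * (∫ x in cell M j, ‖Y.baryAC x - a‖) + (M ^ n)⁻¹ * d := by
  have hMn : 0 < M ^ n := by positivity
  have hH : ∀ Φ : S, MemH (Φ : V → ℝ) := fun Φ => (hS Φ Φ.2).1
  have hT : ∀ Φ : S, TLipUnit (Φ : V → ℝ) := fun Φ => (hS Φ Φ.2).2
  obtain ⟨u, hu, husob, hclose⟩ := exists_ccSmooth_abs_sub_cubeEnergy_le hn
    (fun Φ => (hT Φ).lipschitzWith) (by positivity)
    (fun c hc => hJ.potEnv_le_average (a := a) (c := c) hex hΩ hH hT hj hMn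
      (volumeReal_cell hM.le j) hc) hd hε
  refine ⟨u, hu, husob, fun Φ hΦ => ?_⟩
  have hscale := mul_le_mul_of_nonneg_left (hclose ⟨Φ, hΦ⟩) (inv_nonneg.2 hMn.le)
  rw [← abs_of_pos (inv_pos.2 hMn), ← abs_mul, abs_of_pos (inv_pos.2 hMn), mul_sub,
    inv_mul_cancel_left₀ hMn.ne'] at hscale
  exact hscale.trans_eq (by field_simp)

lemma abs_setIntegral_cell_defect_pasteCells_le (hΩ : volume Ω < ⊤) (hM : 0 < M)
    (hF : ∀ j ∈ F, cell M j ⊆ Ω) {u : (Fin n → ℤ) → Dom n → U}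
    (hu : ∀ j ∈ F, CcSmooth (unitCube n) (u j)) {j : Fin n → ℤ} (hj : j ∈ F) {Φ : V → ℝ}
    (hΦ : TLipUnit Φ) {a : V} {r : ℝ}
    (hclose : |(∫ x in cell M j, Y.recPairing Φ x) - (M ^ n)⁻¹ * cubeEnergy B l Φ a (u j)| ≤
      3 * (∫ x in cell M j, ‖Y.baryAC x - a‖) + r) :
    |∫ x in cell M j, Y.defect B l (pasteCells l M F u) Φ x| ≤
      6 * (∫ x in cell M j, ‖Y.baryAC x - a‖) + r := by
  have hψ := ccSmooth_pasteCells l hM.ne' hu hF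
  have hpaste := abs_setIntegral_cell_sub_cubeEnergy_le B l hΦ.lipschitzWith hM hu hj
    ((Y.integrableOn_baryAC hΩ).mono_set (hF j hj)) a
  have hsplit : ∫ x in cell M j, Y.defect B l (pasteCells l M F u) Φ x =
      (∫ x in cell M j, Y.recPairing Φ x) -
        ∫ x in cell M j, Φ (Y.baryAC x + opApply B l (pasteCells l M F u) x) :=
    integral_sub ((Y.integrableOn_recPairing hΩ hΦ).mono_set (hF j hj))
      ((Y.integrableOn_comp_baryAC_add_opApply B l hΩ hψ hΦ).mono_set (hF j hj))
  push_cast at hpaste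
  rw [hsplit]
  rw [abs_le] at *
  constructor <;> linarith [hpaste.1, hpaste.2, hclose.1, hclose.2]

lemma setIntegral_diff_defectBound_pasteCells (hΩ : MeasurableSet Ω) (hM : M ≠ 0)
    {u : (Fin n → ℤ) → Dom n → U} (hu : ∀ j ∈ F, CcSmooth (unitCube n) (u j)) :
    ∫ x in Ω \ ⋃ j ∈ F, cell M j, Y.defectBound B l (pasteCells l M F u) x =
      ∫ x in Ω \ ⋃ j ∈ F, cell M j, (Y.massDensity x + (1 + ‖Y.baryAC x‖)) := by
  refine setIntegral_congr_fun (hΩ.diff (measurableSet_biUnion_cell M F)) fun x hx => ?_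
  have hoff : opApply B l (pasteCells l M F u) x = 0 :=
    opApply_pasteCells_of_notMem_cell B l hM hu fun j hj hxj => hx.2 (Set.mem_biUnion hj hxj)
  simp only [defectBound, hoff, add_zero]

lemma JensenAE.exists_cellwiseSmallDefect (hJ : Y.JensenAE A k) (hex : ExactPotential A k B l)
    (hn : 0 < n) (hΩo : IsOpen Ω) (hΩb : Bornology.IsBounded Ω)
    (hS : ∀ Φ ∈ S, MemH Φ ∧ TLipUnit Φ) {ε s : ℝ} (hε : 0 < ε) (hs : 0 < s) (hτ : 0 < τ) :
    ∃ M F ψ, 0 < M ∧ M⁻¹ < s ∧ CcSmooth Ω ψ ∧ sobNorm l ψ < ε ∧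
      Y.CellwiseSmallDefect B l ψ S M F τ := by
  have hΩ : volume Ω < ⊤ := hΩb.measure_lt_top
  have := isFiniteMeasure_restrict.2 hΩ.ne
  set N := volume.real Ω
  have : 0 ≤ N := measureReal_nonneg
  have hratio : ∀ {c : ℝ}, 0 < c → N * (c / (N + 1)) < c := fun {c} hc => by
    rw [mul_div_assoc', div_lt_iff₀ (by positivity)]
    nlinarith [hc]
  obtain ⟨g, s', hs', hg⟩ := exists_forall_sum_setIntegral_cell_norm_sub_le hΩo.measurableSet hΩ
    (Y.integrableOn_baryAC hΩ) (show 0 < τ / 12 by positivity)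
  have hrest : IntegrableOn (fun x => Y.massDensity x + (1 + ‖Y.baryAC x‖)) Ω :=
    (Y.integrableOn_massDensity hΩ).add ((integrable_const 1).add (Y.integrableOn_baryAC hΩ).norm)
  obtain ⟨M, hM1, hMs, F, hF, hFrest⟩ :=
    exists_cells_setIntegral_diff_lt hΩo hΩb hrest (lt_min hs hs') hτ
  have hM : 0 < M := zero_lt_one.trans_le hM1
  choose! u hu husob hclose using fun j hj =>
    hJ.exists_ccSmooth_abs_setIntegral_cell_sub_le hex hn hΩ hS hM (hF j hj)
      (g (M⁻¹ • latticePoint j)) (d := τ / 2 / (N + 1)) (ε := ε / (N + 1)) (by positivity)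
      (by positivity)
  refine ⟨M, F, pasteCells l M F u, hM, hMs.trans_le (min_le_left _ _),
    ccSmooth_pasteCells l hM.ne' hu hF, ?_, hF, fun Φ hΦ => ?_,
    (setIntegral_diff_defectBound_pasteCells hΩo.measurableSet hM.ne' hu).trans_le hFrest.le⟩
  · exact (sobNorm_pasteCells_le_mul_volumeReal hM1 hu (by positivity)
      (fun j hj => (husob j hj).le) hΩ hF).trans_lt (hratio hε)
  · calc ∑ j ∈ F, |∫ x in cell M j, Y.defect B l (pasteCells l M F u) Φ x|
        ≤ ∑ j ∈ F, (6 * (∫ x in cell M j, ‖Y.baryAC x - g (M⁻¹ • latticePoint j)‖) +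
            (M ^ n)⁻¹ * (τ / 2 / (N + 1))) := Finset.sum_le_sum fun j hj =>
          abs_setIntegral_cell_defect_pasteCells_le hΩ hM hF hu hj (hS Φ hΦ).2 (hclose j hj Φ hΦ)
      _ ≤ 6 * (τ / 12) + N * (τ / 2 / (N + 1)) := by
          rw [Finset.sum_add_distrib, ← Finset.mul_sum, ← Finset.sum_mul]
          gcongr
          · exact hg M F hM (hMs.trans_le (min_le_right _ _)) hF
          · exact sum_inv_pow_le_volumeReal hM.le hF hΩ
      _ ≤ τ := by linarith [hratio (half_pos hτ)]

end Construction

section Estimate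

variable {n : ℕ} {U V : Type*} [NormedAddCommGroup V] [InnerProductSpace ℝ V]
  [FiniteDimensional ℝ V] [MeasurableSpace V] [BorelSpace V] {Ω : Set (Dom n)}
  [NormedAddCommGroup U] [NormedSpace ℝ U] {B : (Fin n → ℕ) → (U →L[ℝ] V)} {l : ℕ}
  {Y : YoungMeasure n V Ω} {ψ : Dom n → U} {S : Set (V → ℝ)} {M : ℝ} {F : Finset (Fin n → ℤ)}
  {τ : ℝ} {Φ : V → ℝ}

lemma CellwiseSmallDefect.abs_setIntegral_defect_le (h : Y.CellwiseSmallDefect B l ψ S M F τ)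
    (hΩ : volume Ω < ⊤) (hψ : CcSmooth Ω ψ) (hΦS : Φ ∈ S) (hΦ : TLipUnit Φ) :
    |∫ x in Ω, Y.defect B l ψ Φ x| ≤ 2 * τ := by
  have hrest : |∫ x in Ω \ ⋃ k ∈ F, cell M k, Y.defect B l ψ Φ x| ≤
      ∫ x in Ω \ ⋃ k ∈ F, cell M k, Y.defectBound B l ψ x := by
    rw [← Real.norm_eq_abs]
    exact norm_integral_le_of_norm_le
      ((Y.integrableOn_defectBound B l hΩ hψ).mono_set Set.sdiff_subset)
      (ae_restrict_of_ae_restrict_of_subset Set.sdiff_subset (Y.ae_abs_defect_le B l ψ hΦ))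
  rw [setIntegral_eq_sum_cell_add h.cell_subset (Y.integrableOn_defect B l hΩ hψ hΦ), two_mul]
  exact (abs_add_le _ _).trans (add_le_add
    ((Finset.abs_sum_le_sum_abs _ _).trans (h.sum_abs_le Φ hΦS))
    (hrest.trans h.setIntegral_diff_le))

lemma CellwiseSmallDefect.setIntegral_defectBound_le
    (h : Y.CellwiseSmallDefect B l ψ S M F τ) (hΩ : volume Ω < ⊤) (hψ : CcSmooth Ω ψ)
    (hS : (fun z => 1 + ‖z‖) ∈ S) :
    ∫ x in Ω, Y.defectBound B l ψ x ≤ 2 * (∫ x in Ω, Y.massDensity x) + 2 * τ := by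
  have hmass := Y.integrableOn_massDensity hΩ
  have hnorm := Y.integrableOn_comp_baryAC_add_opApply B l hΩ hψ tLipUnit_one_add_norm
  have hpair := Y.integrableOn_recPairing hΩ tLipUnit_one_add_norm
  have hpair_le : ∫ x in Ω, Y.recPairing (fun z => 1 + ‖z‖) x ≤ ∫ x in Ω, Y.massDensity x :=
    integral_mono_ae hpair hmass
      ((Y.ae_abs_recPairing_le tLipUnit_one_add_norm).mono fun x hx => (le_abs_self _).trans hx)
  have hdefect := h.abs_setIntegral_defect_le hΩ hψ hS tLipUnit_one_add_norm
  unfold defect at hdefect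
  rw [integral_sub hpair hnorm] at hdefect
  unfold defectBound
  rw [integral_add hmass hnorm]
  linarith [(abs_le.1 hdefect).1]

lemma CellwiseSmallDefect.abs_setIntegral_mul_defect_le
    (h : Y.CellwiseSmallDefect B l ψ S M F τ) (hΩo : IsOpen Ω) (hΩb : Bornology.IsBounded Ω)
    (hM : 0 < M) (hψ : CcSmooth Ω ψ) {η : Dom n → ℝ} (hη : etaLipUnit Ω η) (hΦS : Φ ∈ S)
    (hΦ : TLipUnit Φ) {Ψ : V → ℝ} (hΨ : TLipUnit Ψ) {δ : ℝ}
    (hd : ∀ z, ‖z‖ ≤ 1 → |Tfun Ψ z - Tfun Φ z| ≤ δ) :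
    |∫ x in Ω, η x * Y.defect B l ψ Ψ x| ≤
      2 * τ + (δ + M⁻¹) * ∫ x in Ω, Y.defectBound B l ψ x := by
  have hΩ : volume Ω < ⊤ := hΩb.measure_lt_top
  have hη1 : ∀ x ∈ Ω, |η x| ≤ 1 := fun x hx => hη.abs_le_one hΩb hx
  have hηm : AEStronglyMeasurable η (volume.restrict Ω) :=
    hη.lipschitzOnWith.continuousOn.aestronglyMeasurable hΩo.measurableSet
  have hΦint := Y.integrableOn_defect B l hΩ hψ hΦ
  have hΨint := Y.integrableOn_defect B l hΩ hψ hΨ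
  have hbound := Y.integrableOn_defectBound B l hΩ hψ
  have hnet := abs_setIntegral_mul_le_of_abs_le_one hΩo.measurableSet hη1 (hbound.const_mul δ)
    (Y.ae_abs_defect_sub_le B l ψ hΦ hΨ hd)
  have hcells := abs_setIntegral_mul_le_sum_cell_add hΩo.measurableSet hM h.cell_subset hη1
    hη.lipschitzOnWith hΦint hbound (Y.ae_abs_defect_le B l ψ hΦ)
  simp only [mul_sub] at hnet
  rw [integral_const_mul,
    integral_sub (integrableOn_mul_of_abs_le_one hΩo.measurableSet hη1 hηm hΨint)
      (integrableOn_mul_of_abs_le_one hΩo.measurableSet hη1 hηm hΦint)] at hnet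
  linarith [abs_sub_abs_le_abs_sub (∫ x in Ω, η x * Y.defect B l ψ Ψ x)
    (∫ x in Ω, η x * Y.defect B l ψ Φ x), h.sum_abs_le Φ hΦS, h.setIntegral_diff_le]

end Estimate

section Generation

variable {n : ℕ} {U V W : Type*} [NormedAddCommGroup V] [InnerProductSpace ℝ V]
  [FiniteDimensional ℝ V] [MeasurableSpace V] [BorelSpace V] {Ω : Set (Dom n)}
  [NormedAddCommGroup W] [NormedSpace ℝ W] [NormedAddCommGroup U] [NormedSpace ℝ U]
  {A : (Fin n → ℕ) → (V →L[ℝ] W)} {k : ℕ} {B : (Fin n → ℕ) → (U →L[ℝ] V)} {l : ℕ}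
  {Y : YoungMeasure n V Ω}

theorem JensenAE.exists_ccSmooth_abs_setIntegral_mul_defect_le (hJ : Y.JensenAE A k)
    (hex : ExactPotential A k B l) (hn : 0 < n) (hΩo : IsOpen Ω) (hΩb : Bornology.IsBounded Ω)
    {ε : ℝ} (hε : 0 < ε) :
    ∃ ψ : Dom n → U, CcSmooth Ω ψ ∧ sobNorm l ψ < ε ∧ ∀ (η : Dom n → ℝ) (Ψ : V → ℝ),
      MemH Ψ → etaLipUnit Ω η → TLipUnit Ψ → |∫ x in Ω, η x * Y.defect B l ψ Ψ x| ≤ ε := by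
  classical
  have hΩ : volume Ω < ⊤ := hΩb.measure_lt_top
  have hC : 0 ≤ ∫ x in Ω, Y.massDensity x := integral_nonneg Y.massDensity_nonneg
  set D := 2 * (∫ x in Ω, Y.massDensity x) + 2
  have hD0 : 0 < D := by positivity
  set δ := ε / (4 * D) with hδ
  have hδD : δ * D = ε / 4 := by rw [hδ]; field_simp
  obtain ⟨S, hS, hnet⟩ := exists_finset_forall_tLipUnit_abs_Tfun_sub_le (V := V)
    (show 0 < δ by positivity)
  obtain ⟨M, F, ψ, hM, hMδ, hψ, hsob, hsmall⟩ := hJ.exists_cellwiseSmallDefect hex hn hΩo hΩb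
    (S := insert (fun z => 1 + ‖z‖) S) (Finset.forall_mem_insert _ _ _ |>.2
      ⟨⟨memH_one_add_norm, tLipUnit_one_add_norm⟩, hS⟩) hε (show 0 < δ by positivity)
    (show 0 < min 1 (ε / 4) by positivity)
  refine ⟨ψ, hψ, hsob, fun η Ψ hΨH hη hΨ => ?_⟩
  obtain ⟨Φ, hΦS, hd⟩ := hnet Ψ hΨH hΨ
  have hbound : ∫ x in Ω, Y.defectBound B l ψ x ≤ D := by
    linarith [hsmall.setIntegral_defectBound_le hΩ hψ (by simp), min_le_left 1 (ε / 4)]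
  calc |∫ x in Ω, η x * Y.defect B l ψ Ψ x|
      ≤ 2 * min 1 (ε / 4) + (δ + M⁻¹) * ∫ x in Ω, Y.defectBound B l ψ x :=
        hsmall.abs_setIntegral_mul_defect_le hΩo hΩb hM hψ hη
          (Finset.mem_coe.2 (Finset.mem_insert_of_mem hΦS)) (hS Φ hΦS).2 hΨ hd
    _ ≤ 2 * (ε / 4) + (δ + δ) * D := by
        gcongr
        · exact min_le_right _ _
        · exact integral_nonneg (Y.defectBound_nonneg B l ψ)
    _ = ε := by rw [← two_mul, mul_assoc, hδD]; ring

lemma abs_setIntegral_mul_recPairing_sub_le (hΩo : IsOpen Ω) (hΩb : Bornology.IsBounded Ω)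
    {ψ : Dom n → U} (hψ : CcSmooth Ω ψ) {v : Dom n → V} (hv : IntegrableOn v Ω) {η : Dom n → ℝ}
    (hη : etaLipUnit Ω η) {Φ : V → ℝ} (hΦ : TLipUnit Φ) :
    |(∫ x in Ω, η x * Y.recPairing Φ x) - ∫ x in Ω, η x * Φ (v x + opApply B l ψ x)| ≤
      |∫ x in Ω, η x * Y.defect B l ψ Φ x| + 3 * ∫ x in Ω, ‖v x - Y.baryAC x‖ := by
  have hΩ : volume Ω < ⊤ := hΩb.measure_lt_top
  have := isFiniteMeasure_restrict.2 hΩ.ne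
  have hη1 : ∀ x ∈ Ω, |η x| ≤ 1 := fun x hx => hη.abs_le_one hΩb hx
  have hmul {G : Dom n → ℝ} (hG : IntegrableOn G Ω) : IntegrableOn (fun x => η x * G x) Ω :=
    integrableOn_mul_of_abs_le_one hΩo.measurableSet hη1
      (hη.lipschitzOnWith.continuousOn.aestronglyMeasurable hΩo.measurableSet) hG
  have hpair := hmul (Y.integrableOn_recPairing hΩ hΦ)
  have hcomp : IntegrableOn (fun x => Φ (v x + opApply B l ψ x)) Ω :=
    integrable_comp_of_lipschitzWith hΦ.lipschitzWith
      (hv.add (hψ.integrable_opApply B l).integrableOn)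
  have hcompAC := Y.integrableOn_comp_baryAC_add_opApply B l hΩ hψ hΦ
  have hshift : |∫ x in Ω, η x * (Φ (Y.baryAC x + opApply B l ψ x) - Φ (v x + opApply B l ψ x))| ≤
      3 * ∫ x in Ω, ‖v x - Y.baryAC x‖ := by
    rw [← integral_const_mul]
    refine abs_setIntegral_mul_le_of_abs_le_one hΩo.measurableSet hη1
      ((hv.sub (Y.integrableOn_baryAC hΩ)).norm.const_mul 3) (ae_of_all _ fun x => ?_)
    simpa [norm_sub_rev] using abs_sub_le_of_lipschitzWith hΦ.lipschitzWith
      (Y.baryAC x + opApply B l ψ x) (v x + opApply B l ψ x)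
  have hsplit : (∫ x in Ω, η x * Y.recPairing Φ x) - ∫ x in Ω, η x * Φ (v x + opApply B l ψ x) =
      (∫ x in Ω, η x * Y.defect B l ψ Φ x) +
        ∫ x in Ω, η x * (Φ (Y.baryAC x + opApply B l ψ x) - Φ (v x + opApply B l ψ x)) := by
    simp only [defect, mul_sub]
    rw [integral_sub hpair (hmul hcompAC), integral_sub (hmul hcompAC) (hmul hcomp)]
    ring
  rw [hsplit]
  exact (abs_add_le _ _).trans (by gcongr)

end Generation

end YoungMeasure

theorem stmt6_general {n k l : ℕ} (hn : 0 < n) {V W U : Type*} [NormedAddCommGroup V]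
    [InnerProductSpace ℝ V] [FiniteDimensional ℝ V] [MeasurableSpace V] [BorelSpace V]
    [NormedAddCommGroup W] [NormedSpace ℝ W] [NormedAddCommGroup U] [NormedSpace ℝ U]
    {A : (Fin n → ℕ) → (V →L[ℝ] W)} {B : (Fin n → ℕ) → (U →L[ℝ] V)}
    (hexact : ExactPotential A k B l) {Ω : Set (Dom n)} (hΩo : IsOpen Ω)
    (hΩb : Bornology.IsBounded Ω) {Y : YoungMeasure n V Ω} (hJen : Y.JensenAE A k)
    {ρ : Dom n → ℝ} (hρ0 : ∀ x, 0 ≤ ρ x) (hρsupp : tsupport ρ ⊆ closedUnitCube n)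
    (hρ1 : ∫ x, ρ x = 1) {ε : ℝ} (hε : 0 < ε) :
    ∃ ψ : Dom n → U, CcSmooth Ω ψ ∧ sobNorm l ψ < ε ∧ ∃ tε > 0, ∀ t ∈ Set.Ioc 0 tε,
      ∀ (η : Dom n → ℝ) (Φ : V → ℝ), MemH Φ → etaLipUnit Ω η → TLipUnit Φ →
        |(∫ x in Ω, η x * ((∫ z, Φ z ∂(Y.osc x)) +
            Y.lamA x * ∫ w, rrec Φ (w : V) ∂(Y.ang x))) -
          ∫ x in Ω, η x * Φ (Y.mollACpart ρ t x + opApply B l ψ x)| < ε := by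
  obtain ⟨ψ, hψ, hsob, hdefect⟩ := hJen.exists_ccSmooth_abs_setIntegral_mul_defect_le hexact hn
    hΩo hΩb (half_pos hε)
  obtain ⟨tε, htε, hmoll⟩ := Y.exists_forall_setIntegral_norm_mollACpart_sub_lt
    hΩo.measurableSet hΩb.measure_lt_top hρ0 hρsupp hρ1 (show 0 < ε / 6 by positivity)
  refine ⟨ψ, hψ, hsob.trans (half_lt_self hε), tε, htε, fun t ht η Φ hH hη hΦ => ?_⟩
  obtain ⟨hint, hlt⟩ := hmoll t ht
  have hsplit := Y.abs_setIntegral_mul_recPairing_sub_le (B := B) (l := l) hΩo hΩb hψ hint hη hΦ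
  exact hsplit.trans_lt (by linarith [hdefect η Φ hH hη hΦ])

/-! ## Statement 6: generation of the regular part (Lemma reggen) -/

theorem stmt6 {n k l : ℕ} (hn : 0 < n) (hk : 0 < k) (hl : 0 < l)
    {V W U : Type*} [NormedAddCommGroup V] [InnerProductSpace ℝ V] [FiniteDimensional ℝ V]
    [MeasurableSpace V] [BorelSpace V]
    [NormedAddCommGroup W] [InnerProductSpace ℝ W] [FiniteDimensional ℝ W]
    [NormedAddCommGroup U] [InnerProductSpace ℝ U] [FiniteDimensional ℝ U]
    (A : (Fin n → ℕ) → (V →L[ℝ] W)) (B : (Fin n → ℕ) → (U →L[ℝ] V))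
    (hspan : SpanningCone A k) (hexact : ExactPotential A k B l)
    (Ω : Set (Dom n)) (hΩo : IsOpen Ω) (hΩb : Bornology.IsBounded Ω)
    (hΩfr : volume (frontier Ω) = 0)
    (Y : YoungMeasure n V Ω) (hYfr : Y.conc (frontier Ω) = 0)
    (hAfree : Y.AFree A k) (hJen : Y.JensenAE A k)
    (ρ : Dom n → ℝ) (hρ : IsStdMollifier n ρ)
    (ε : ℝ) (hε : 0 < ε) :
    ∃ tε > (0:ℝ), ∀ t ∈ Set.Ioc (0:ℝ) tε,
      ∃ ψ : Dom n → U, CcSmooth Ω ψ ∧ sobNorm l ψ < ε ∧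
        ∀ (η : Dom n → ℝ) (Φ : V → ℝ), MemH Φ → etaLipUnit Ω η → TLipUnit Φ →
          |(∫ x in Ω, η x * ((∫ z, Φ z ∂(Y.osc x)) +
              Y.lamA x * ∫ w, rrec Φ (w : V) ∂(Y.ang x))) -
            ∫ x in Ω, η x * Φ (Y.mollACpart ρ t x + opApply B l ψ x)| < ε := by
  obtain ⟨-, hρ0, hρsupp, -, hρ1⟩ := hρ
  obtain ⟨ψ, hψ, hsob, tε, htε, h⟩ := stmt6_general hn hexact hΩo hΩb hJen hρ0 hρsupp hρ1 hε
  exact ⟨tε, htε, fun t ht => ⟨ψ, hψ, hsob, h t ht⟩⟩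

end
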